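/- Let R = k[x₁, …, x_d] localized at the maximal ideal (x₁, …, x_d), where k is an infinite field, and let 𝔪 denote the maximal ideal of R. Let I be an R-ideal of height g with minimal number of generators d + 1 ≥ 2, satisfying G_d and depth R/I^j ≥ dim R/I − j + 1 for 1 ≤ j ≤ d − g. Assume I has a presentation matrix whose entries are linear forms in k[x₁, …, x_d]. Then core(I) = 𝔪·I, and if I is integrally closed then so is core(I). -/

import Mathlib

/-!
Over the regular local ring `A`, Auslander–Buchsbaum turns the depth conditions into bounds on
`pd I ^ j`. Let `b₀, b₁, …` be general elements of a reduction `J` of `I`. Together with `G_d` and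
the duality `Ext(-, A)`, those bounds control the projective dimension of `A / K_i` for the
residual intersections `K_i = (b₀, …, b_{i-1}) : I`, and hence the height of the associated primes
of `K_i`. It follows that `J : I` lies in no prime of height `< d`, and that a reduction `J ≠ I`
needs at least `d` generators modulo `𝔪 I`.

Let `a₀, …, a_d` generate `I`. A reduction `J ≠ I` then agrees modulo `𝔪 I` with a hyperplane
ideal `J_l = {w · a | l · w = 0}`, `l ∈ k^{d+1}`, which is itself a reduction. Since `J_l : I` is
contained in the ideal generated by the linear forms `lᵀ φ`, those have to generate `𝔪`, and then
`𝔪 I ⊆ J_l`. Hence `𝔪 I ⊆ core I`. Conversely, the `a_i T` and `x₁` are algebraically dependent,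
and a dependence relation provides a nonzero form `F` with `F(a) ∈ 𝔪 I ^ s`; if `F(l) ≠ 0`, then
`J_l` is a reduction. As `k` is infinite, these `J_l` intersect in `𝔪 I`.

If `𝔪 I` were not integrally closed, some `w · a` with `w(0) = c ≠ 0` would be integral over
`𝔪 I`, and `J_l` would be a reduction for every `l` with `l · c ≠ 0`. Taking `l = a(x₀)` for a
general point `x₀ ≠ 0` of `k^d`, all the linear forms `lᵀ φ` vanish at `x₀`, so they do not
generate `𝔪`.
-/

open IsLocalRing

universe u v

namespace CPU

section Defs

variable {R : Type u} [CommRing R]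

/-- The minimal number of generators of a submodule, as an extended natural number. -/
noncomputable def muE {M : Type v} [AddCommGroup M] [Module R M] (N : Submodule R M) : ℕ∞ :=
  sInf {n : ℕ∞ | ∃ s : Finset M, (s.card : ℕ∞) = n ∧ Submodule.span R (s : Set M) = N}

/-- The Krull dimension of a ring, valued in `WithBot ℕ∞`. -/
noncomputable def rDim (S : Type v) [CommRing S] : WithBot ℕ∞ :=
  ringKrullDim S

/-- `J` is a reduction of `I`. -/
def IsReduction (J I : Ideal R) : Prop :=
  J ≤ I ∧ ∃ r : ℕ, I ^ (r + 1) = J * I ^ r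

/-- `J` is a minimal reduction of `I`. -/
def IsMinimalReduction (J I : Ideal R) : Prop :=
  IsReduction J I ∧ ∀ J' : Ideal R, IsReduction J' I → J' ≤ J → J' = J

/-- The core of an ideal: the intersection of all of its minimal reductions. -/
noncomputable def core (I : Ideal R) : Ideal R :=
  sInf {J : Ideal R | IsMinimalReduction J I}

/-- The reduction number of `I`. -/
noncomputable def reductionNumber (I : Ideal R) : ℕ∞ :=
  sInf {n : ℕ∞ | ∃ r : ℕ, (r : ℕ∞) = n ∧ ∃ J : Ideal R,
    IsMinimalReduction J I ∧ I ^ (r + 1) = J * I ^ r}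

/-- `γ(I)`: the least number of minimal reductions whose intersection is the core. -/
noncomputable def gamma (I : Ideal R) : ℕ∞ :=
  sInf {n : ℕ∞ | ∃ t : ℕ, (t : ℕ∞) = n ∧ ∃ Js : Fin t → Ideal R,
    (∀ i, IsMinimalReduction (Js i) I) ∧ core I = ⨅ i, Js i}

/-- The height of an ideal. -/
noncomputable def ht (I : Ideal R) : WithBot ℕ∞ :=
  ⨅ (p : PrimeSpectrum R) (_ : I ≤ p.asIdeal),
    rDim (Localization.AtPrime p.asIdeal)

/-- The Krull dimension of the special fiber ring of `I`,
i.e. the analytic spread of `I`. -/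
noncomputable def fiberDim [IsLocalRing R] (I : Ideal R) : WithBot ℕ∞ :=
  rDim (↥(reesAlgebra I) ⧸
    (Ideal.map (algebraMap R ↥(reesAlgebra I)) (maximalIdeal R)))

/-- The condition `G_s`. -/
def Gcond (I : Ideal R) (s : ℕ) : Prop :=
  ∀ p : PrimeSpectrum R, I ≤ p.asIdeal →
    rDim (Localization.AtPrime p.asIdeal) < (s : WithBot ℕ∞) →
    (muE (Ideal.map (algebraMap R (Localization.AtPrime p.asIdeal)) I) : WithBot ℕ∞) ≤
      rDim (Localization.AtPrime p.asIdeal)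

/-- Depth of a module over a local ring, via lengths of regular sequences in the
maximal ideal. -/
noncomputable def mDepth (R : Type u) [CommRing R] [IsLocalRing R]
    (M : Type v) [AddCommGroup M] [Module R M] : ℕ∞ :=
  sSup {n : ℕ∞ | ∃ rs : List R, (∀ x ∈ rs, x ∈ maximalIdeal R) ∧
    RingTheory.Sequence.IsRegular M rs ∧ (rs.length : ℕ∞) = n}

/-- Depth of the quotient `R/K` of a local ring `R`. -/
noncomputable def qDepth (R : Type u) [CommRing R] [IsLocalRing R] (K : Ideal R) : ℕ∞ :=
  mDepth R (R ⧸ K)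

/-- The socle of `R/K`, for `R` local. -/
noncomputable def socle (R : Type u) [CommRing R] [IsLocalRing R] (K : Ideal R) :
    Ideal (R ⧸ K) :=
  Submodule.colon (⊥ : Ideal (R ⧸ K)) (Ideal.map (Ideal.Quotient.mk K) (maximalIdeal R))

/-- The Cohen–Macaulay type of the quotient `R/K` of a local ring `R`. -/
noncomputable def qType (R : Type u) [CommRing R] [IsLocalRing R] (K : Ideal R) : ℕ∞ :=
  sInf {n : ℕ∞ | ∃ rs : List R, (∀ x ∈ rs, x ∈ maximalIdeal R) ∧
    RingTheory.Sequence.IsRegular (R ⧸ K) rs ∧ (rs.length : ℕ∞) = qDepth R K ∧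
    muE (socle R (K ⊔ Ideal.ofList rs)) = n}

/-- Cohen–Macaulayness for a quotient `R/K` of a local ring `R`. -/
def IsCMQuot (R : Type u) [CommRing R] [IsLocalRing R] (K : Ideal R) : Prop :=
  rDim (R ⧸ K) = (qDepth R K : WithBot ℕ∞)

/-- A Cohen–Macaulay local ring: depth equals Krull dimension. -/
def IsCMLocalRing (R : Type u) [CommRing R] [IsLocalRing R] : Prop :=
  rDim R = (qDepth R (⊥ : Ideal R) : WithBot ℕ∞)

/-- A Gorenstein local ring: Cohen–Macaulay of type one. -/
def IsGorensteinLocalRing (R : Type u) [CommRing R] [IsLocalRing R] : Prop :=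
  IsCMLocalRing R ∧ qType R (⊥ : Ideal R) = 1

/-- Gorensteinness of the quotient ring `R/K` of a local ring. -/
def IsGorQuot (R : Type u) [CommRing R] [IsLocalRing R] (K : Ideal R) : Prop :=
  IsCMQuot R K ∧ qType R K = 1

/-- A regular local ring: the maximal ideal is generated by `dim R` elements. -/
def IsRegularLocal (R : Type u) [CommRing R] [IsLocalRing R] : Prop :=
  IsNoetherianRing R ∧ (muE (maximalIdeal R) : WithBot ℕ∞) = rDim R

/-- Serre's condition `S₂` for the quotient ring `R/K`. -/
def QuotS2 (K : Ideal R) : Prop :=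
  ∀ (q : Ideal R) (hq : q.IsPrime), K ≤ q →
    letI := hq
    min 2 (rDim ((Localization.AtPrime q) ⧸
        (Ideal.map (algebraMap R (Localization.AtPrime q)) K)))
      ≤ (qDepth (Localization.AtPrime q)
          (Ideal.map (algebraMap R (Localization.AtPrime q)) K) : WithBot ℕ∞)

/-- `K` is an `s`-residual intersection of `I`. -/
def IsResidualIntersection (I K : Ideal R) (s : ℕ) : Prop :=
  K ≠ ⊤ ∧ ht I ≤ (s : WithBot ℕ∞) ∧ (s : WithBot ℕ∞) ≤ ht K ∧
    ∃ a : Ideal R, a ≤ I ∧ (∃ f : Finset R, f.card ≤ s ∧ Ideal.span (f : Set R) = a) ∧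
      K = Submodule.colon a I

/-- `K` is a geometric `s`-residual intersection of `I`. -/
def IsGeometricRI (I K : Ideal R) (s : ℕ) : Prop :=
  IsResidualIntersection I K s ∧ (s : WithBot ℕ∞) + 1 ≤ ht (I ⊔ K)

/-- `I` is weakly `s`-residually `S₂`. -/
def WeaklyResS2 (I : Ideal R) (s : ℕ) : Prop :=
  ∀ i ≤ s, ∀ K : Ideal R, IsGeometricRI I K i → QuotS2 K

/-- The condition `AN_s` for `I`. -/
def ANcond [IsLocalRing R] (I : Ideal R) (s : ℕ) : Prop :=
  ∀ i ≤ s, ∀ K : Ideal R, IsResidualIntersection I K i → IsCMQuot R K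

/-- The condition `AN_s⁻` for `I`. -/
def ANminus [IsLocalRing R] (I : Ideal R) (s : ℕ) : Prop :=
  ∀ i ≤ s, ∀ K : Ideal R, IsGeometricRI I K i → IsCMQuot R K

/-- `I` is universally weakly `s`-residually `S₂`: for every finite set of
variables, the extension of `I` to `R(x₁, …, x_n)` is weakly `s`-residually `S₂`. -/
def UnivWeaklyResS2 [IsLocalRing R] (I : Ideal R) (s : ℕ) : Prop :=
  ∀ (n : ℕ)
    (hP : (Ideal.map (MvPolynomial.C (σ := Fin n)) (maximalIdeal R)).IsPrime),
    letI := hP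
    WeaklyResS2 (Ideal.map
      ((algebraMap (MvPolynomial (Fin n) R)
        (Localization.AtPrime
          (Ideal.map (MvPolynomial.C (σ := Fin n)) (maximalIdeal R)))).comp
        (MvPolynomial.C)) I) s

/-- The `j`-th Fitting ideal of (the module) `I`. -/
noncomputable def fittingIdeal (I : Ideal R) (j : ℕ) : Ideal R :=
  ⨆ (n : ℕ) (π : (Fin n → R) →ₗ[R] R) (_ : LinearMap.range π = I),
    Ideal.span {d : R | ∃ (v : Fin (n - j) → (Fin n → R)) (r : Fin (n - j) → Fin n),
      (∀ k, π (v k) = 0) ∧ d = Matrix.det (Matrix.of fun i k => v k (r i))}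

/-- The set `Q(I)` of primes containing `Fitt_ℓ(I)` at which `R` has dimension `ℓ`
and `I` has analytic spread `ℓ`. -/
def QSet [IsLocalRing R] (I : Ideal R) (l : ℕ) : Set (PrimeSpectrum R) :=
  {p | fittingIdeal I l ≤ p.asIdeal ∧
    rDim (Localization.AtPrime p.asIdeal) = (l : WithBot ℕ∞) ∧
    fiberDim (Ideal.map (algebraMap R (Localization.AtPrime p.asIdeal)) I)
      = (l : WithBot ℕ∞)}

/-- An ideal is integrally closed if it admits no larger ideal of which it is a
reduction. -/
def IsIntClosedIdeal (I : Ideal R) : Prop :=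
  ∀ J : Ideal R, IsReduction I J → J = I

/-- A normal ideal: all powers are integrally closed. -/
def IsNormalIdeal (I : Ideal R) : Prop :=
  ∀ j : ℕ, IsIntClosedIdeal (I ^ j)

/-- `φ` is a presentation matrix of the ideal `I` (with `n = μ(I)` rows). -/
def Presents {n m : ℕ} (φ : Matrix (Fin n) (Fin m) R) (I : Ideal R) : Prop :=
  muE I = (n : ℕ∞) ∧ ∃ π : (Fin n → R) →ₗ[R] R, LinearMap.range π = I ∧
    LinearMap.range (Matrix.toLin' φ) = LinearMap.ker π

/-- The ideal of `t × t` minors of a matrix. -/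
noncomputable def minorsIdeal {n m : ℕ} (t : ℕ) (φ : Matrix (Fin n) (Fin m) R) : Ideal R :=
  Ideal.span {d : R | ∃ (r : Fin t → Fin n) (c : Fin t → Fin m),
    d = (φ.submatrix r c).det}

/-- The grade of an ideal: the supremum of lengths of regular sequences contained
in it. -/
noncomputable def grade (I : Ideal R) : ℕ∞ :=
  sSup {n : ℕ∞ | ∃ rs : List R, (∀ x ∈ rs, x ∈ I) ∧
    RingTheory.Sequence.IsRegular R rs ∧ (rs.length : ℕ∞) = n}

end Defs

/-- `M` has projective dimension at most `n` over `R`. -/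
def ProjDimLE (R : Type u) [CommRing R] :
    (n : ℕ) → (M : Type u) → [AddCommGroup M] → [Module R M] → Prop
  | 0, M, _, _ => Module.Projective R M
  | n + 1, M, _, _ => ∃ (k : ℕ) (f : (Fin k → R) →ₗ[R] M), Function.Surjective f ∧
      ProjDimLE R n ↥(LinearMap.ker f)

section Defs2

variable {R : Type u} [CommRing R]

/-- `M` has projective dimension exactly `n` over `R`. -/
def ProjDimEq (R : Type u) [CommRing R] (M : Type u) [AddCommGroup M] [Module R M]
    (n : ℕ) : Prop :=
  ProjDimLE R n M ∧ ∀ m : ℕ, ProjDimLE R m M → n ≤ m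

/-- A perfect ideal: the projective dimension of `R/I` equals the grade of `I`. -/
def IsPerfectIdeal (I : Ideal R) : Prop :=
  ∃ g : ℕ, grade I = (g : ℕ∞) ∧ ProjDimEq R (R ⧸ I) g

/-- The multiplicative set which is the complement of the union of the associated
primes of `R/H`. -/
def assComplement (H : Ideal R) : Submonoid R where
  carrier := {r : R | ∀ p ∈ associatedPrimes R (R ⧸ H), r ∉ p}
  one_mem' := fun p hp => (Ideal.ne_top_iff_one p).mp hp.1.ne_top
  mul_mem' := fun {a b} ha hb p hp hab =>
    (hp.1.mem_or_mem hab).elim (ha p hp) (hb p hp)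

/-- The `j`-th symbolic power of `H`. -/
noncomputable def symbolicPower (H : Ideal R) (j : ℕ) : Ideal R :=
  Ideal.comap (algebraMap R (Localization (assComplement H)))
    (Ideal.map (algebraMap R (Localization (assComplement H))) (H ^ j))

/-- Serre's condition `S₂` for a module. -/
def ModuleS2 (S : Type u) [CommRing S] (M : Type v) [AddCommGroup M] [Module S M] : Prop :=
  ∀ (q : Ideal S) (hq : q.IsPrime),
    letI := hq
    min 2 (rDim ((Localization.AtPrime q) ⧸
        (Module.annihilator (Localization.AtPrime q) (LocalizedModule q.primeCompl M))))
      ≤ (mDepth (Localization.AtPrime q) (LocalizedModule q.primeCompl M) : WithBot ℕ∞)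

/-- `M` is a maximal Cohen–Macaulay `S`-module. -/
def IsMCM (S : Type u) [CommRing S] (M : Type v) [AddCommGroup M] [Module S M] : Prop :=
  ∀ (q : Ideal S) (hq : q.IsMaximal),
    letI := hq.isPrime
    (mDepth (Localization.AtPrime q) (LocalizedModule q.primeCompl M) : WithBot ℕ∞) =
      rDim (Localization.AtPrime q)

end Defs2

section RegularLocalRing

open scoped Pointwise

theorem exists_span_insert_eq_maximalIdeal {A : Type u} [CommRing A] [IsLocalRing A] {x : A}
    {n : ℕ} (y : Fin (n + 1) → A) (hy : Ideal.span (Set.range y) = maximalIdeal A)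
    (hx : x ∈ maximalIdeal A) (hx2 : x ∉ maximalIdeal A ^ 2) :
    ∃ z : Fin n → A, Ideal.span (insert x (Set.range z)) = maximalIdeal A := by
  have hymem (j) : y j ∈ maximalIdeal A := hy ▸ Ideal.subset_span ⟨j, rfl⟩
  obtain ⟨c, hc⟩ := (Submodule.mem_span_range_iff_exists_fun A).1 (hy ▸ hx)
  obtain ⟨i, hi⟩ : ∃ i, c i ∉ maximalIdeal A := by
    by_contra! h
    exact hx2 (hc ▸ pow_two (maximalIdeal A) ▸
      Ideal.sum_mem _ fun i _ => Ideal.mul_mem_mul (h i) (hymem i))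
  obtain ⟨u, hu⟩ : IsUnit (c i) := by simpa using hi
  refine ⟨fun l => y (i.succAbove l), le_antisymm ?_ ?_⟩
  · rw [Ideal.span_le]
    rintro w (rfl | ⟨l, rfl⟩)
    exacts [hx, hymem _]
  · rw [← hy, Ideal.span_le]
    rintro _ ⟨j, rfl⟩
    rcases Fin.eq_self_or_eq_succAbove i j with rfl | ⟨l, rfl⟩
    · have solve_y : y j = ↑u⁻¹ * (x - ∑ l, c (j.succAbove l) * y (j.succAbove l)) := by
        rw [← hc, Fin.sum_univ_succAbove _ j]
        simp [← hu]
      rw [solve_y]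
      refine Ideal.mul_mem_left _ _ (Ideal.sub_mem _ (Ideal.subset_span (Set.mem_insert _ _)) ?_)
      exact Ideal.sum_mem _ fun l _ => Ideal.mul_mem_left _ _
        (Ideal.subset_span (Set.mem_insert_of_mem _ ⟨l, rfl⟩))
    · exact Ideal.subset_span (Set.mem_insert_of_mem _ ⟨l, rfl⟩)

theorem spanFinrank_maximalIdeal_of_dim {A : Type u} [CommRing A]
    [IsRegularLocalRing A] {n : ℕ} (hn : ringKrullDim A = n) :
    (maximalIdeal A).spanFinrank = n := by
  have h := IsRegularLocalRing.spanFinrank_maximalIdeal (R := A)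
  rw [hn] at h
  exact_mod_cast h

theorem exists_fin_span_range_eq_maximalIdeal {A : Type u} [CommRing A]
    [IsRegularLocalRing A] {n : ℕ} (hn : ringKrullDim A = n) :
    ∃ y : Fin n → A, Ideal.span (Set.range y) = maximalIdeal A := by
  obtain ⟨s, hs, hspan⟩ := Submodule.FG.exists_span_finset_card_eq_spanFinrank
    (IsNoetherian.noetherian (maximalIdeal A))
  rw [spanFinrank_maximalIdeal_of_dim hn] at hs
  let e := (s.equivFinOfCardEq hs).symm
  refine ⟨fun i => e i, ?_⟩
  rw [← Function.comp_def, Set.range_comp, e.surjective.range_eq, Set.image_univ,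
    Subtype.range_coe]
  exact hspan

theorem smul_top_eq_span_singleton {A : Type u} [CommRing A] (x : A) :
    x • (⊤ : Ideal A) = Ideal.span {x} := by
  rw [← Submodule.ideal_span_singleton_smul, smul_eq_mul, Ideal.mul_top]

theorem spanFinrank_maximalIdeal_quotient_le {A : Type u} [CommRing A] [IsLocalRing A] {n : ℕ}
    {x : A} [IsLocalRing (A ⧸ Ideal.span {x})] (z : Fin n → A)
    (hz : Ideal.span (insert x (Set.range z)) = maximalIdeal A) :
    (maximalIdeal (A ⧸ Ideal.span {x})).spanFinrank ≤ n := by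
  have hmax : maximalIdeal (A ⧸ Ideal.span {x}) = Ideal.span
      (Set.range fun i => Ideal.Quotient.mk (Ideal.span {x}) (z i)) := by
    rw [← map_maximalIdeal_of_surjective _ Ideal.Quotient.mk_surjective, ← hz, Ideal.map_span,
      Set.image_insert_eq, Ideal.Quotient.eq_zero_iff_mem.2 (Ideal.mem_span_singleton_self x),
      ← Set.range_comp, Function.comp_def, Ideal.span_insert_zero]
  rw [hmax, ← Set.image_univ]
  refine (Submodule.spanFinrank_span_le_ncard_of_finite (Set.toFinite _)).trans ?_
  exact (Set.ncard_image_le (Set.toFinite _)).trans (by simp)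

theorem isRegularLocalRing_quotient_span_singleton {A : Type u} [CommRing A]
    [IsRegularLocalRing A] {n : ℕ} (hn : ringKrullDim A = (n + 1 : ℕ)) {x : A}
    (hx : x ∈ maximalIdeal A) (hx2 : x ∉ maximalIdeal A ^ 2) :
    IsRegularLocalRing (A ⧸ Ideal.span {x}) ∧ ringKrullDim (A ⧸ Ideal.span {x}) = n := by
  have : Nontrivial (A ⧸ Ideal.span {x}) :=
    Ideal.Quotient.nontrivial_iff.mpr (Ideal.span_singleton_ne_top (by simpa using hx))
  have : IsLocalRing (A ⧸ Ideal.span {x}) :=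
    IsLocalRing.of_surjective' _ Ideal.Quotient.mk_surjective
  obtain ⟨y, hy⟩ := exists_fin_span_range_eq_maximalIdeal hn
  obtain ⟨z, hz⟩ := exists_span_insert_eq_maximalIdeal y hy hx hx2
  have hrank : ((maximalIdeal (A ⧸ Ideal.span {x})).spanFinrank : WithBot ℕ∞) ≤ n := by
    exact_mod_cast spanFinrank_maximalIdeal_quotient_le z hz
  have hdim : (n : WithBot ℕ∞) ≤ ringKrullDim (A ⧸ Ideal.span {x}) := by
    have h := ringKrullDim_le_ringKrullDim_quotSMulTop_succ hx
    rw [smul_top_eq_span_singleton, hn] at h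
    push_cast at h
    exact ENat.WithBot.add_le_add_natCast_right_iff.mp h
  have hreg := IsRegularLocalRing.of_spanFinrank_maximalIdeal_le _ (hrank.trans hdim)
  have hspan := IsRegularLocalRing.spanFinrank_maximalIdeal (R := A ⧸ Ideal.span {x})
  exact ⟨hreg, le_antisymm (hspan.symm.trans_le hrank) hdim⟩

theorem maximalIdeal_eq_bot_of_ringKrullDim_eq_zero {A : Type u} [CommRing A]
    [IsRegularLocalRing A] (h : ringKrullDim A = (0 : ℕ)) : maximalIdeal A = ⊥ :=
  (Submodule.spanFinrank_eq_zero_iff_eq_bot (IsNoetherian.noetherian _)).1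
    (spanFinrank_maximalIdeal_of_dim h)

theorem not_maximalIdeal_le_sq {A : Type u} [CommRing A] [IsRegularLocalRing A] {n : ℕ}
    (hn : ringKrullDim A = (n + 1 : ℕ)) : ¬ maximalIdeal A ≤ maximalIdeal A ^ 2 := by
  intro h
  have h0 : maximalIdeal A = ⊥ :=
    Submodule.eq_bot_of_le_smul_of_le_jacobson_bot (maximalIdeal A) _ (IsNoetherian.noetherian _)
      (by rwa [smul_eq_mul, ← pow_two]) (maximalIdeal_le_jacobson _)
  simpa [h0] using spanFinrank_maximalIdeal_of_dim hn

theorem exists_mem_maximalIdeal_notMem_sq_notMem_minimalPrimes {A : Type u} [CommRing A]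
    [IsRegularLocalRing A] {n : ℕ} (hn : ringKrullDim A = (n + 1 : ℕ)) :
    ∃ x ∈ maximalIdeal A, x ∉ maximalIdeal A ^ 2 ∧ ∀ p ∈ minimalPrimes A, x ∉ p := by
  classical
  have hfin := minimalPrimes.finite_of_isNoetherianRing A
  by_contra! hcon
  have hcover : ((maximalIdeal A : Ideal A) : Set A) ⊆
      ⋃ i ∈ (↑(insert (maximalIdeal A ^ 2) hfin.toFinset) : Set (Ideal A)), (i : Set A) := by
    intro x hx
    simp only [Set.mem_iUnion]
    by_cases h2 : x ∈ maximalIdeal A ^ 2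
    · exact ⟨_, by simp, h2⟩
    · obtain ⟨p, hp, hxp⟩ := hcon x hx h2
      exact ⟨p, by simp [hp], hxp⟩
  obtain ⟨p, hp, hle⟩ := (Ideal.subset_union_prime (f := id) (maximalIdeal A ^ 2)
    (maximalIdeal A ^ 2) fun i hi h1 _ =>
      Ideal.IsMinimalPrime.isPrime (I := ⊥) (by simpa [h1] using hi)).1 hcover
  rcases Finset.mem_insert.1 hp with rfl | hp
  · exact not_maximalIdeal_le_sq hn hle
  · have hpmin : p ∈ minimalPrimes A := by simpa using hp
    have hpp : p.IsPrime := Ideal.IsMinimalPrime.isPrime hpmin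
    have hpm : p = maximalIdeal A := le_antisymm (le_maximalIdeal hpp.ne_top) hle
    have hdim := maximalIdeal_height_eq_ringKrullDim (R := A)
    rw [← hpm, Ideal.height_eq_zero_iff.2 hpmin, hn] at hdim
    have : (0 : ℕ) = n + 1 := by exact_mod_cast hdim
    omega

theorem isDomain_of_isDomain_quotient_span_singleton {A : Type u} [CommRing A] [IsLocalRing A]
    [IsNoetherianRing A] {x : A} (hx : x ∈ maximalIdeal A) (hmin : ∀ p ∈ minimalPrimes A, x ∉ p)
    [IsDomain (A ⧸ Ideal.span {x})] : IsDomain A := by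
  have hprime : (Ideal.span {x}).IsPrime := (Ideal.Quotient.isDomain_iff_prime _).1 inferInstance
  obtain ⟨Q, hQ, hQx⟩ :=
    Ideal.exists_minimalPrimes_le (I := (⊥ : Ideal A)) (J := Ideal.span {x}) bot_le
  have hQp : Q.IsPrime := Ideal.IsMinimalPrime.isPrime hQ
  have hQ0 : Q = ⊥ := by
    apply Submodule.eq_bot_of_le_smul_of_le_jacobson_bot (Ideal.span {x}) _
      (IsNoetherian.noetherian _)
    · intro z hz
      obtain ⟨w, rfl⟩ := Ideal.mem_span_singleton'.1 (hQx hz)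
      have hw : w ∈ Q := (hQp.mem_or_mem hz).resolve_right (hmin Q hQ)
      rw [mul_comm]
      exact Ideal.mul_mem_mul (Ideal.mem_span_singleton_self x) hw
    · refine le_trans ?_ (maximalIdeal_le_jacobson _)
      rwa [Ideal.span_singleton_le_iff_mem]
  rw [hQ0] at hQp
  exact IsDomain.of_bot_isPrime A

theorem isDomain_of_isRegularLocalRing (n : ℕ) :
    ∀ (A : Type u) [CommRing A] [IsRegularLocalRing A], ringKrullDim A = n → IsDomain A := by
  induction n with
  | zero =>
    intro A _ _ h
    exact (isField_iff_maximalIdeal_eq.2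
      (maximalIdeal_eq_bot_of_ringKrullDim_eq_zero h)).isDomain
  | succ n ih =>
    intro A _ _ h
    obtain ⟨x, hx, hx2, hxmin⟩ := exists_mem_maximalIdeal_notMem_sq_notMem_minimalPrimes h
    obtain ⟨_, hdim⟩ := isRegularLocalRing_quotient_span_singleton h hx hx2
    have := ih _ hdim
    exact isDomain_of_isDomain_quotient_span_singleton hx hxmin

theorem isWeaklyRegular_cons_of_quotient {A : Type u} [CommRing A] {x : A} {rs : List A}
    (hx : IsSMulRegular A x) (hrs : RingTheory.Sequence.IsWeaklyRegular (A ⧸ Ideal.span {x})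
      (rs.map (Ideal.Quotient.mk (Ideal.span {x})))) :
    RingTheory.Sequence.IsWeaklyRegular A (x :: rs) := by
  let e : (A ⧸ Ideal.span {x}) ≃ₗ[A] QuotSMulTop x A :=
    (Submodule.quotEquivOfEq _ _ (smul_top_eq_span_singleton x)).symm
  exact .cons' hx ((e.extendScalarsOfSurjective
    (S := A ⧸ Ideal.span {x}) Ideal.Quotient.mk_surjective).isWeaklyRegular_congr _ |>.1 hrs)

theorem exists_isWeaklyRegular_ofList_eq_maximalIdeal (n : ℕ) :
    ∀ (A : Type u) [CommRing A] [IsRegularLocalRing A], ringKrullDim A = n →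
      ∃ rs : List A, RingTheory.Sequence.IsWeaklyRegular A rs ∧
        Ideal.ofList rs = maximalIdeal A ∧ rs.length = n := by
  induction n with
  | zero =>
    intro A _ _ h
    exact ⟨[], by simp, by simp [maximalIdeal_eq_bot_of_ringKrullDim_eq_zero h], rfl⟩
  | succ n ih =>
    intro A _ _ h
    have := isDomain_of_isRegularLocalRing _ A h
    obtain ⟨x, hx, hx2⟩ := SetLike.not_le_iff_exists.1 (not_maximalIdeal_le_sq h)
    obtain ⟨_, hdim⟩ := isRegularLocalRing_quotient_span_singleton h hx hx2
    obtain ⟨rs, hrs, hmax, hlen⟩ := ih _ hdim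
    obtain ⟨rs, rfl⟩ := List.map_surjective_iff.2
      (Ideal.Quotient.mk_surjective (I := Ideal.span {x})) rs
    have hx0 : x ≠ 0 := fun h0 => hx2 (h0 ▸ zero_mem _)
    refine ⟨x :: rs, isWeaklyRegular_cons_of_quotient
      (IsRegular.of_ne_zero hx0).left.isSMulRegular hrs, ?_, by simpa using hlen⟩
    have hcomap : (maximalIdeal (A ⧸ Ideal.span {x})).comap (Ideal.Quotient.mk (Ideal.span {x})) =
        maximalIdeal A :=
      eq_maximalIdeal (Ideal.comap_isMaximal_of_surjective _ Ideal.Quotient.mk_surjective)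
    rw [← hcomap, ← hmax, ← Ideal.map_ofList,
      Ideal.comap_map_of_surjective' _ Ideal.Quotient.mk_surjective, Ideal.mk_ker, sup_comm,
      Ideal.ofList_cons]

end RegularLocalRing

section ProjDimLT

open CategoryTheory

/-- `M` has projective dimension `< n`; this stays meaningful for `M = 0`, the case `n = 0`. -/
def ProjDimLT (A : Type u) [CommRing A] (M : Type u) [AddCommGroup M] [Module A M] (n : ℕ) :
    Prop :=
  HasProjectiveDimensionLT (ModuleCat.of A M) n

variable {A : Type u} [CommRing A] {M N P : Type u} [AddCommGroup M] [Module A M]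
  [AddCommGroup N] [Module A N] [AddCommGroup P] [Module A P]

theorem ProjDimLT.of_linearEquiv (e : M ≃ₗ[A] N) {n : ℕ} (h : ProjDimLT A M n) :
    ProjDimLT A N n :=
  have : HasProjectiveDimensionLT (ModuleCat.of A M) n := h
  hasProjectiveDimensionLT_of_iso e.toModuleIso n

theorem ProjDimLT.mono {n m : ℕ} (hnm : n ≤ m) (h : ProjDimLT A M n) : ProjDimLT A M m :=
  have : HasProjectiveDimensionLT (ModuleCat.of A M) n := h
  hasProjectiveDimensionLT_of_ge _ n m hnm

theorem projDimLT_one_iff_projective : ProjDimLT A M 1 ↔ Module.Projective A M := by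
  rw [ProjDimLT, ← projective_iff_hasProjectiveDimensionLT_one, ← IsProjective.iff_projective]

theorem ProjDimLT.of_projective (M : Type u) [AddCommGroup M] [Module A M]
    [Module.Projective A M] : ProjDimLT A M 1 :=
  projDimLT_one_iff_projective.2 inferInstance

theorem projDimLT_zero_iff_subsingleton : ProjDimLT A M 0 ↔ Subsingleton M := by
  rw [ProjDimLT, hasProjectiveDimensionLT_zero_iff_isZero, ModuleCat.isZero_iff_subsingleton]

theorem ProjDimLT.of_subsingleton (M : Type u) [AddCommGroup M] [Module A M] [Subsingleton M]
    (n : ℕ) : ProjDimLT A M n :=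
  (projDimLT_zero_iff_subsingleton.2 inferInstance).mono (Nat.zero_le _)

/-- The short complex of modules given by two linear maps that are exact at the middle term. -/
abbrev shortComplexOfExact (f : M →ₗ[A] N) (g : N →ₗ[A] P) (h : Function.Exact f g) :
    ShortComplex (ModuleCat.{u} A) where
  f := ModuleCat.ofHom f
  g := ModuleCat.ofHom g
  zero := by ext x; exact h.apply_apply_eq_zero x

theorem shortExact_shortComplexOfExact {f : M →ₗ[A] N} {g : N →ₗ[A] P}
    (hf : Function.Injective f) (hg : Function.Surjective g) (h : Function.Exact f g) :
    (shortComplexOfExact f g h).ShortExact where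
  exact := (ShortComplex.ShortExact.moduleCat_exact_iff_function_exact _).mpr h
  mono_f := (ModuleCat.mono_iff_injective _).mpr hf
  epi_g := (ModuleCat.epi_iff_surjective _).mpr hg

variable {f : M →ₗ[A] N} {g : N →ₗ[A] P}

theorem ProjDimLT.left_of_exact (hf : Function.Injective f) (hg : Function.Surjective g)
    (h : Function.Exact f g) {n : ℕ} (hN : ProjDimLT A N n) (hP : ProjDimLT A P (n + 1)) :
    ProjDimLT A M n :=
  (shortExact_shortComplexOfExact hf hg h).hasProjectiveDimensionLT_X₁ n hN hP

theorem ProjDimLT.middle_of_exact (hf : Function.Injective f) (hg : Function.Surjective g)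
    (h : Function.Exact f g) {n : ℕ} (hM : ProjDimLT A M n) (hP : ProjDimLT A P n) :
    ProjDimLT A N n :=
  (shortExact_shortComplexOfExact hf hg h).hasProjectiveDimensionLT_X₂ n hM hP

theorem ProjDimLT.right_of_exact (hf : Function.Injective f) (hg : Function.Surjective g)
    (h : Function.Exact f g) {n : ℕ} (hM : ProjDimLT A M n) (hN : ProjDimLT A N (n + 1)) :
    ProjDimLT A P (n + 1) :=
  (shortExact_shortComplexOfExact hf hg h).hasProjectiveDimensionLT_X₃ n hM hN

end ProjDimLT

section SyzygyRegular

open RingTheory.Sequence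
open scoped Pointwise

variable {A : Type u} [CommRing A]

theorem quotSMulTop_map_injective_of_exact {N F M : Type*} [AddCommGroup M] [Module A M]
    [AddCommGroup N] [Module A N] [AddCommGroup F] [Module A F] {r : A} {f : N →ₗ[A] F}
    {g : F →ₗ[A] M} (hf : Function.Injective f) (hfg : Function.Exact f g)
    (hr : IsSMulRegular M r) : Function.Injective (QuotSMulTop.map r f) := by
  have hzero : Function.Exact (0 : PUnit.{1} →ₗ[A] N) f :=
    (LinearMap.exact_zero_iff_injective _ f).2 hf
  have hexact := QuotSMulTop.map_first_exact_on_four_term_exact_of_isSMulRegular_last hzero hfg hr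
  rw [injective_iff_map_eq_zero]
  intro a ha
  obtain ⟨b, rfl⟩ := (hexact a).1 ha
  obtain ⟨b, rfl⟩ := Submodule.Quotient.mk_surjective _ b
  rw [QuotSMulTop.map_apply_mk, LinearMap.zero_apply, Submodule.Quotient.mk_zero]

theorem isWeaklyRegular_append_singleton_of_exact (x : A) (rs : List A) :
    ∀ {N F M : Type u} [AddCommGroup M] [Module A M] [AddCommGroup N] [Module A N]
      [AddCommGroup F] [Module A F] (f : N →ₗ[A] F) (g : F →ₗ[A] M), Function.Injective f →
      Function.Surjective g → Function.Exact f g → IsWeaklyRegular F (rs ++ [x]) →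
      IsWeaklyRegular M rs → IsWeaklyRegular N (rs ++ [x]) := by
  induction rs with
  | nil =>
    intro N F M _ _ _ _ _ _ f g hf _ _ hF _
    simp only [List.nil_append, isWeaklyRegular_cons_iff] at hF ⊢
    exact ⟨hF.1.of_injective f hf, IsWeaklyRegular.nil _ _⟩
  | cons r rs ih =>
    intro N F M _ _ _ _ _ _ f g hf hg hfg hF hM
    simp only [List.cons_append, isWeaklyRegular_cons_iff] at hF hM ⊢
    exact ⟨hF.1.of_injective f hf, ih (QuotSMulTop.map r f) (QuotSMulTop.map r g)
      (quotSMulTop_map_injective_of_exact hf hfg hM.1) (QuotSMulTop.map_surjective r hg)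
      (QuotSMulTop.map_exact r hfg hg) hF.2 hM.2⟩

theorem isWeaklyRegular_pi {n : ℕ} {rs : List A} (hrs : IsWeaklyRegular A rs) :
    IsWeaklyRegular (Fin n → A) rs := by
  have h := IsWeaklyRegular.of_flat (S := Fin n → A) hrs
  rwa [isWeaklyRegular_map_algebraMap_iff] at h

theorem isWeaklyRegular_take {M : Type*} [AddCommGroup M] [Module A M] {rs : List A}
    (hrs : IsWeaklyRegular M rs) (i : ℕ) : IsWeaklyRegular M (rs.take i) := by
  rw [← List.take_append_drop i rs, isWeaklyRegular_append_iff] at hrs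
  exact hrs.1

end SyzygyRegular

section GlobalDimension

open CategoryTheory RingTheory.Sequence

variable {A : Type u} [CommRing A] [IsLocalRing A] [IsNoetherianRing A]
  {M : Type u} [AddCommGroup M] [Module A M] [Module.Finite A M]

theorem projDimLT_of_quotient (rs : List A) (hrs : IsWeaklyRegular M rs)
    (hmem : ∀ r ∈ rs, r ∈ maximalIdeal A) (n : ℕ)
    (h : ProjDimLT A (M ⧸ Ideal.ofList rs • (⊤ : Submodule A M)) (rs.length + n)) :
    ProjDimLT A M n := by
  rcases subsingleton_or_nontrivial M with hM | hM
  · exact ProjDimLT.of_subsingleton M n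
  have hpd := ModuleCat.projectiveDimension_quotient_eq_add_length_of_isWeaklyRegular
    (ModuleCat.of A M) rs hrs hmem
  unfold ProjDimLT at *
  rw [← projectiveDimension_lt_iff] at *
  by_contra! hc
  refine absurd (hpd.symm.trans_lt h) (not_lt.2 ?_)
  rw [Nat.cast_add, add_comm]
  gcongr

theorem ProjDimLT.quotient (rs : List A) (hrs : IsWeaklyRegular M rs)
    (hmem : ∀ r ∈ rs, r ∈ maximalIdeal A) {n : ℕ} (h : ProjDimLT A M (n + 1)) :
    ProjDimLT A (M ⧸ Ideal.ofList rs • (⊤ : Submodule A M)) (rs.length + n + 1) := by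
  rcases subsingleton_or_nontrivial M with hM | hM
  · exact ProjDimLT.of_subsingleton _ _
  have hpd := ModuleCat.projectiveDimension_quotient_eq_add_length_of_isWeaklyRegular
    (ModuleCat.of A M) rs hrs hmem
  have hle : HasProjectiveDimensionLE (ModuleCat.of A M) n := h
  change HasProjectiveDimensionLE _ _
  rw [← projectiveDimension_le_iff] at *
  rw [hpd, Nat.cast_add, add_comm (rs.length : WithBot ℕ∞)]
  gcongr

/-- The canonical identification of `A ⧸ I • ⊤`, the shape in which quotients by regular
sequences are produced, with `A ⧸ I`. -/
def quotientSMulTopEquiv {A : Type*} [CommRing A] (I : Ideal A) :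
    (A ⧸ I • (⊤ : Submodule A A)) ≃ₗ[A] (A ⧸ I) :=
  Submodule.quotEquivOfEq _ _ (by rw [smul_eq_mul, Ideal.mul_top])

variable {X : List A}

theorem projDimLT_quotient_ofList (hreg : IsWeaklyRegular A X)
    (hmem : ∀ x ∈ X, x ∈ maximalIdeal A) : ProjDimLT A (A ⧸ Ideal.ofList X) (X.length + 1) :=
  ((ProjDimLT.of_projective A).quotient X hreg hmem).of_linearEquiv (quotientSMulTopEquiv _)

theorem not_projDimLT_quotient_ofList (hreg : IsWeaklyRegular A X)
    (hmem : ∀ x ∈ X, x ∈ maximalIdeal A) : ¬ ProjDimLT A (A ⧸ Ideal.ofList X) X.length :=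
  fun h => not_subsingleton A (projDimLT_zero_iff_subsingleton.1
    (projDimLT_of_quotient X hreg hmem 0 (h.of_linearEquiv (quotientSMulTopEquiv _).symm)))

theorem mem_maximalIdeal_of_ofList_eq {A : Type*} [CommRing A] [IsLocalRing A] {X : List A}
    (hX : Ideal.ofList X = maximalIdeal A) (r : A) (hr : r ∈ X) : r ∈ maximalIdeal A :=
  hX ▸ Ideal.subset_span hr

theorem projDimLT_of_smul_eq_zero (hreg : IsWeaklyRegular A X)
    (hX : Ideal.ofList X = maximalIdeal A) (hkill : ∀ x ∈ maximalIdeal A, ∀ m : M, x • m = 0) :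
    ProjDimLT A M (X.length + 1) := by
  revert hkill
  induction ‹Module.Finite A M› using
    IsNoetherianRing.induction_on_isQuotientEquivQuotientPrime A with
  | subsingleton N => exact fun _ => ProjDimLT.of_subsingleton _ _
  | quotient N p e =>
    intro hkill
    have hp : p.1 = maximalIdeal A := by
      refine le_antisymm (le_maximalIdeal p.2.ne_top) fun x hx => ?_
      have hx1 := congrArg e (hkill x hx (e.symm 1))
      rw [map_smul, e.apply_symm_apply, map_zero, Algebra.smul_def, mul_one] at hx1
      exact Ideal.Quotient.eq_zero_iff_mem.1 hx1
    exact (projDimLT_quotient_ofList hreg (mem_maximalIdeal_of_ofList_eq hX)).of_linearEquiv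
      ((Submodule.quotEquivOfEq _ _ (hX.trans hp.symm)).trans e.symm)
  | exact N₁ N₂ N₃ f g hf hg hfg h1 h3 =>
    intro hkill
    refine ProjDimLT.middle_of_exact hf hg hfg (h1 fun x hx m => hf ?_) (h3 fun x hx m => ?_)
    · rw [map_smul, hkill x hx, map_zero]
    · obtain ⟨m, rfl⟩ := hg m
      rw [← map_smul, hkill x hx, map_zero]

theorem projDimLT_of_isWeaklyRegular_take (hreg : IsWeaklyRegular A X)
    (hX : Ideal.ofList X = maximalIdeal A) (c : ℕ) (hc : c ≤ X.length) :
    ∀ (M : Type u) [AddCommGroup M] [Module A M] [Module.Finite A M],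
      IsWeaklyRegular M (X.take (X.length - c)) → ProjDimLT A M (c + 1) := by
  induction c with
  | zero =>
    intro M _ _ _ h
    rw [Nat.sub_zero, List.take_length] at h
    refine projDimLT_of_quotient X h (mem_maximalIdeal_of_ofList_eq hX) 1
      (projDimLT_of_smul_eq_zero hreg hX fun x hx m => ?_)
    obtain ⟨m, rfl⟩ := Submodule.Quotient.mk_surjective _ m
    rw [← Submodule.Quotient.mk_smul, Submodule.Quotient.mk_eq_zero, hX]
    exact Submodule.smul_mem_smul hx trivial
  | succ c ih =>
    intro M _ _ _ h
    obtain ⟨n, f, hf⟩ := Module.Finite.exists_fin' A M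
    have hex : Function.Exact (LinearMap.ker f).subtype f := LinearMap.exact_subtype_ker_map f
    have htake : X.take (X.length - c) =
        X.take (X.length - (c + 1)) ++ [X[X.length - (c + 1)]'(by omega)] := by
      rw [List.take_append_getElem]
      congr 1
      omega
    have hsyz : IsWeaklyRegular (LinearMap.ker f) (X.take (X.length - c)) := by
      rw [htake]
      refine isWeaklyRegular_append_singleton_of_exact _ _ _ f (Submodule.injective_subtype _)
        hf hex ?_ h
      rw [← htake]
      exact isWeaklyRegular_take (isWeaklyRegular_pi hreg) _
    exact ProjDimLT.right_of_exact (Submodule.injective_subtype _) hf hex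
      (ih (by omega) _ hsyz) ((ProjDimLT.of_projective _).mono (by omega))

/-- The Auslander–Buchsbaum inequality `pd M ≤ dim A - depth M`, in additive form. -/
theorem projDimLT_of_isWeaklyRegular (hreg : IsWeaklyRegular A X)
    (hX : Ideal.ofList X = maximalIdeal A) {rs : List A} (hrs : IsWeaklyRegular M rs)
    (hmem : ∀ r ∈ rs, r ∈ maximalIdeal A) {n : ℕ} (hn : X.length + 1 ≤ rs.length + n) :
    ProjDimLT A M n :=
  projDimLT_of_quotient rs hrs hmem n
    ((projDimLT_of_isWeaklyRegular_take hreg hX X.length le_rfl _ (by simp)).mono hn)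

end GlobalDimension

section AssociatedHeight

open CategoryTheory RingTheory.Sequence

theorem eq_zero_of_projDimLT_of_maximalIdeal_smul_eq_zero {A : Type u} [CommRing A]
    [IsRegularLocalRing A] {s : ℕ} (hs : ringKrullDim A = s) {M : Type u} [AddCommGroup M]
    [Module A M] [Module.Finite A M] (h : ProjDimLT A M s) (y : M)
    (hy : ∀ x ∈ maximalIdeal A, x • y = 0) : y = 0 := by
  by_contra hne
  obtain ⟨X, hreg, hX, rfl⟩ := exists_isWeaklyRegular_ofList_eq_maximalIdeal s A hs
  have hquot : ProjDimLT A (M ⧸ (A ∙ y)) (X.length + 1) :=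
    projDimLT_of_isWeaklyRegular (rs := []) hreg hX (by simp) (by simp) (by simp)
  have hspan : ProjDimLT A (A ∙ y) X.length :=
    ProjDimLT.left_of_exact (Submodule.injective_subtype _) (Submodule.mkQ_surjective _)
      (LinearMap.exact_subtype_mkQ _) h hquot
  have hker : LinearMap.ker (LinearMap.toSpanSingleton A M y) = Ideal.ofList X := by
    rw [hX]
    refine ((maximalIdeal.isMaximal A).eq_of_le ?_ fun x hx => ?_).symm
    · rw [Ideal.ne_top_iff_one]; simpa using hne
    · simpa using hy x hx
  have e : (A ⧸ Ideal.ofList X) ≃ₗ[A] (A ∙ y) :=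
    (Submodule.quotEquivOfEq _ _ hker.symm).trans <|
      (LinearMap.toSpanSingleton A M y).quotKerEquivRange.trans <|
        LinearEquiv.ofEq _ _ (LinearMap.span_singleton_eq_range A M y).symm
  exact not_projDimLT_quotient_ofList hreg (mem_maximalIdeal_of_ofList_eq hX)
    (hspan.of_linearEquiv e.symm)

theorem ProjDimLT.localizedModule {A : Type u} [CommRing A] {M : Type u} [AddCommGroup M]
    [Module A M] (S : Submonoid A) {n : ℕ} (h : ProjDimLT A M (n + 1)) :
    ProjDimLT (Localization S) (LocalizedModule S M) (n + 1) := by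
  have hle : HasProjectiveDimensionLE (ModuleCat.of A M) n := h
  have hloc : ProjDimLT (Localization S) (Shrink.{u} (LocalizedModule S M)) (n + 1) :=
    ModuleCat.localizedModule_hasProjectiveDimensionLE n S (ModuleCat.of A M)
  exact hloc.of_linearEquiv (Shrink.linearEquiv _ _)

/-- Localizing at `p` reduces the claim to the fact that over a regular local ring of dimension `s`
only modules of projective dimension `s` have nonzero socle. -/
theorem height_lt_of_projDimLT {A : Type u} [CommRing A] [IsRegularRing A] {n : ℕ}
    {M : Type u} [AddCommGroup M] [Module A M] [Module.Finite A M] (h : ProjDimLT A M n) {y : M}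
    {p : Ideal A} [hp : p.IsPrime] (hy : ∀ x : A, x • y = 0 ↔ x ∈ p) : p.height < n := by
  by_contra! hc
  rcases n with _ | n
  · have := projDimLT_zero_iff_subsingleton.1 h
    exact hp.ne_top ((Ideal.eq_top_iff_one _).2 ((hy 1).1 (Subsingleton.elim _ _)))
  obtain ⟨s, hs⟩ := ENat.ne_top_iff_exists.1 (Ideal.height_ne_top hp.ne_top)
  have hns : n + 1 ≤ s := by
    rw [← hs] at hc
    exact_mod_cast hc
  have hdim : ringKrullDim (Localization.AtPrime p) = s := by
    rw [IsLocalization.AtPrime.ringKrullDim_eq_height p, ← hs]; rfl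
  have hfin : Module.Finite (Localization.AtPrime p) (LocalizedModule p.primeCompl M) :=
    Module.Finite.of_isLocalizedModule p.primeCompl (LocalizedModule.mkLinearMap p.primeCompl M)
  have hzero : LocalizedModule.mkLinearMap p.primeCompl M y = 0 := by
    refine eq_zero_of_projDimLT_of_maximalIdeal_smul_eq_zero hdim
      ((h.localizedModule p.primeCompl).mono hns) _ fun x hx => ?_
    obtain ⟨r, t, rfl⟩ := IsLocalization.exists_mk'_eq p.primeCompl x
    have hr : r ∈ p := (IsLocalization.AtPrime.mk'_mem_maximal_iff _ p r t).1 hx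
    rw [LocalizedModule.mkLinearMap_apply, ← Localization.mk_eq_mk', LocalizedModule.mk_smul_mk,
      (hy r).2 hr, LocalizedModule.zero_mk]
  obtain ⟨c, hc⟩ := (IsLocalizedModule.eq_zero_iff p.primeCompl _).1 hzero
  exact c.2 ((hy c).1 hc)

end AssociatedHeight

section Grade

open CategoryTheory RingTheory.Sequence

variable {A : Type u} [CommRing A]

theorem isWeaklyRegular_append_singleton_iff {rs : List A} {x : A} :
    IsWeaklyRegular A (rs ++ [x]) ↔
      IsWeaklyRegular A rs ∧ IsSMulRegular (A ⧸ Ideal.ofList rs) x := by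
  rw [isWeaklyRegular_append_iff, isWeaklyRegular_cons_iff,
    (quotientSMulTopEquiv (Ideal.ofList rs)).isSMulRegular_congr x]
  simp [IsWeaklyRegular.nil]

theorem exists_isAssociatedPrime_le_of_forall_not_isSMulRegular [IsNoetherianRing A] {M : Type*}
    [AddCommGroup M] [Module A M] [Module.Finite A M] (L : Ideal A)
    (h : ∀ x ∈ L, ¬ IsSMulRegular M x) : ∃ p ∈ associatedPrimes A M, L ≤ p := by
  have hcover : (L : Set A) ⊆ ⋃ p ∈ associatedPrimes A M, (p : Set A) := by
    rw [biUnion_associatedPrimes_eq_compl_regular]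
    exact h
  exact (Ideal.subset_union_prime_finite (associatedPrimes.finite A M) (f := id) ⊥ ⊥
    fun p hp _ _ => (hp : IsAssociatedPrime _ _).1).1 hcover

variable [IsLocalRing A] [IsRegularRing A]

theorem exists_isSMulRegular_of_length_lt_height {L : Ideal A} (hL : L ≠ ⊤) {i : ℕ}
    (h : ∀ p : Ideal A, p.IsPrime → L ≤ p → (i : ℕ∞) ≤ p.height) {c : List A}
    (hcL : ∀ x ∈ c, x ∈ L) (hreg : IsWeaklyRegular A c) (hlen : c.length < i) :
    ∃ x ∈ L, IsSMulRegular (A ⧸ Ideal.ofList c) x := by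
  by_contra! hno
  obtain ⟨p, hp, hLp⟩ := exists_isAssociatedPrime_le_of_forall_not_isSMulRegular L hno
  obtain ⟨hpp, y, hy⟩ := isAssociatedPrime_iff.1 (hp : IsAssociatedPrime _ _)
  have hpd := projDimLT_quotient_ofList hreg fun x hx => le_maximalIdeal hL (hcL x hx)
  have hlt := (h p hpp hLp).trans_lt (height_lt_of_projDimLT hpd (y := y) fun x => by simp [hy])
  have : i < c.length + 1 := by exact_mod_cast hlt
  omega

theorem exists_isWeaklyRegular_append_of_le_height {L : Ideal A} (hL : L ≠ ⊤) {i : ℕ}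
    (h : ∀ p : Ideal A, p.IsPrime → L ≤ p → (i : ℕ∞) ≤ p.height) {c : List A}
    (hcL : ∀ x ∈ c, x ∈ L) (hreg : IsWeaklyRegular A c) (m : ℕ) (hm : c.length + m ≤ i) :
    ∃ c' : List A, (∀ x ∈ c', x ∈ L) ∧ IsWeaklyRegular A (c ++ c') ∧ c'.length = m := by
  induction m with
  | zero => exact ⟨[], by simp, by rwa [List.append_nil], rfl⟩
  | succ m ih =>
    obtain ⟨c', hcL', hreg', rfl⟩ := ih (by omega)
    have hmem : ∀ x ∈ c ++ c', x ∈ L := fun x hx => (List.mem_append.1 hx).elim (hcL x) (hcL' x)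
    obtain ⟨x, hx, hxr⟩ :=
      exists_isSMulRegular_of_length_lt_height hL h hmem hreg' (by rw [List.length_append]; omega)
    refine ⟨c' ++ [x], fun z hz => ?_, ?_, by simp⟩
    · exact (List.mem_append.1 hz).elim (hcL' z) fun hz => by rwa [List.mem_singleton.1 hz]
    · rw [← List.append_assoc]
      exact isWeaklyRegular_append_singleton_iff.2 ⟨hreg', hxr⟩

theorem exists_isWeaklyRegular_of_le_height {L : Ideal A} (hL : L ≠ ⊤) {i : ℕ}
    (h : ∀ p : Ideal A, p.IsPrime → L ≤ p → (i : ℕ∞) ≤ p.height) :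
    ∃ c : List A, (∀ x ∈ c, x ∈ L) ∧ IsWeaklyRegular A c ∧ c.length = i :=
  exists_isWeaklyRegular_append_of_le_height hL h (c := []) (by simp) (.nil _ _) i (by simp)

theorem subsingleton_ext_of_smul_eq_zero (L : Ideal A) {i : ℕ}
    (h : ∀ p : Ideal A, p.IsPrime → L ≤ p → (i : ℕ∞) ≤ p.height) (N : Type u) [AddCommGroup N]
    [Module A N] [Module.Finite A N] (hN : ∀ x ∈ L, ∀ y : N, x • y = 0) {p : ℕ} (hp : p < i) :
    Subsingleton (Abelian.Ext (ModuleCat.of A N) (ModuleCat.of A A) p) := by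
  by_cases hL : L = ⊤
  · have hsub : Subsingleton N :=
      subsingleton_of_forall_eq 0 fun y => by simpa using hN 1 (hL ▸ Submodule.mem_top) y
    exact HasProjectiveDimensionLT.subsingleton (hX := ProjDimLT.of_subsingleton N 0) _ 0 _
      (Nat.zero_le _) _
  obtain ⟨c, hcL, hreg, hlen⟩ := exists_isWeaklyRegular_of_le_height hL h
  refine ModuleCat.subsingleton_ext_of_exists_isRegular L (ModuleCat.of A N) ?_ (ModuleCat.of A A)
    ?_ c hcL ?_ p (by omega)
  · change Module.support A N ⊆ _
    rw [Module.support_eq_zeroLocus]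
    exact PrimeSpectrum.zeroLocus_anti_mono fun x hx => Module.mem_annihilator.2 (hN x hx)
  · change L • (⊤ : Submodule A A) < ⊤
    rwa [smul_eq_mul, Ideal.mul_top, lt_top_iff_ne_top]
  · exact .of_isWeaklyRegular_of_mem_maximalIdeal _ (fun x hx => le_maximalIdeal hL (hcL x hx))
      hreg

end Grade

section ColonPrimes

variable {A : Type u} [CommRing A]

/-- `p = X : y` for some `y ∈ Y`; for prime `p` this says that `p` is an associated prime of
`(X + Y) / X`. -/
def IsColonOfMem (X Y p : Ideal A) : Prop :=
  ∃ y ∈ Y, ∀ r, r * y ∈ X ↔ r ∈ p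

theorem IsColonOfMem.mono {X Y Y' p : Ideal A} (h : Y ≤ Y') (hp : IsColonOfMem X Y p) :
    IsColonOfMem X Y' p :=
  let ⟨y, hy, hyp⟩ := hp
  ⟨y, h hy, hyp⟩

variable [IsNoetherianRing A]

theorem exists_prime_le_eq_colon_mul (X : Ideal A) (w : A) (p : Ideal A) [p.IsPrime]
    (hle : ∀ r, r * w ∈ X → r ∈ p) :
    ∃ q : Ideal A, q.IsPrime ∧ q ≤ p ∧ ∃ t : A, ∀ r, r * (t * w) ∈ X ↔ r ∈ q := by
  obtain ⟨q, hq, hqp⟩ := Ideal.exists_minimalPrimes_le (I := Submodule.colon X {w}) (J := p)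
    fun r hr => hle r (by simpa using hr)
  have hone : Submodule.colon (Submodule.colon X {w}) {(1 : A)} = Submodule.colon X {w} := by
    ext; simp
  obtain ⟨t, ht⟩ := Submodule.exists_eq_colon_of_mem_minimalPrimes (N := Submodule.colon X {w})
    (x := (1 : A)) (I := q) (by rwa [hone])
  exact ⟨q, hq.1.1, hqp, t, fun r => by simp [ht, mul_assoc]⟩

theorem isColonOfMem_of_mem_minimalPrimes {X p : Ideal A}
    (h : p ∈ X.minimalPrimes) : IsColonOfMem X ⊤ p := by
  have := h.1.1
  obtain ⟨q, hq, hle, t, ht⟩ := exists_prime_le_eq_colon_mul X 1 p fun r hr =>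
    h.1.2 (by simpa using hr)
  obtain rfl : q = p :=
    le_antisymm hle (h.2 ⟨hq, fun r hr => (ht r).1 (Ideal.mul_mem_right _ _ hr)⟩ hle)
  exact ⟨_, trivial, ht⟩

theorem exists_prime_eq_colon_mul (X : Ideal A) (w : A) (hw : w ∉ X) :
    ∃ q : Ideal A, q.IsPrime ∧ ∃ t : A, ∀ r, r * (t * w) ∈ X ↔ r ∈ q := by
  have hne : Submodule.colon X {w} ≠ ⊤ := by
    rw [Ne, Ideal.eq_top_iff_one]; simpa using hw
  obtain ⟨m, hm, hle⟩ := Ideal.exists_le_maximal _ hne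
  have := hm.isPrime
  obtain ⟨q, hq, -, ht⟩ := exists_prime_le_eq_colon_mul X w m fun r hr => hle (by simpa using hr)
  exact ⟨q, hq, ht⟩

end ColonPrimes

section ExtDuality

open CategoryTheory Abelian

/-- The module `Extⁱ(M, A)`. -/
abbrev ExtSelf (A : Type u) [CommRing A] (M : Type u) [AddCommGroup M] [Module A M] (i : ℕ) :
    Type u :=
  Ext (ModuleCat.of A M) (ModuleCat.of A A) i

variable {A : Type u} [CommRing A] {M N P : Type u} [AddCommGroup M] [Module A M]
  [AddCommGroup N] [Module A N] [AddCommGroup P] [Module A P]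

theorem ProjDimLT.subsingleton_extSelf {n : ℕ} (h : ProjDimLT A M n) {i : ℕ} (hi : n ≤ i) :
    Subsingleton (ExtSelf A M i) :=
  HasProjectiveDimensionLT.subsingleton (hX := h) _ n _ hi _

/-- The canonical identification of `Ext⁰(M, A)` with the dual of `M`. -/
noncomputable def dualEquivExtSelf (A : Type u) [CommRing A] (M : Type u) [AddCommGroup M]
    [Module A M] : Module.Dual A M ≃ₗ[A] ExtSelf A M 0 :=
  (ModuleCat.homLinearEquiv (S := A) (M := ModuleCat.of A M) (N := ModuleCat.of A A)).symm.trans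
    (Ext.linearEquiv₀ (R := A)).symm

theorem projective_extSelf_zero [Module.Projective A M] [Module.Finite A M] :
    Module.Projective A (ExtSelf A M 0) :=
  Module.Projective.of_equiv (dualEquivExtSelf A M)

/-- The map `Extⁱ(N, A) → Extⁱ(M, A)` induced by `f : M → N`. -/
noncomputable def extSelfMap (f : M →ₗ[A] N) (i : ℕ) : ExtSelf A N i →ₗ[A] ExtSelf A M i :=
  (Ext.mk₀ (ModuleCat.ofHom f)).precompOfLinear A _ (zero_add i)

theorem extSelfMap_smul (f : M →ₗ[A] N) (c : A) (i : ℕ) (y : ExtSelf A N i) :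
    extSelfMap (c • f) i y = c • extSelfMap f i y := by
  simp only [extSelfMap, Ext.precompOfLinear, Ext.bilinearCompOfLinear_apply_apply]
  rw [show ModuleCat.ofHom (c • f) = c • ModuleCat.ofHom f from rfl, Ext.mk₀_smul, Ext.smul_comp]

theorem extSelfMap_id (i : ℕ) (y : ExtSelf A M i) :
    extSelfMap (LinearMap.id : M →ₗ[A] M) i y = y := by
  simp only [extSelfMap, Ext.precompOfLinear, Ext.bilinearCompOfLinear_apply_apply]
  rw [show ModuleCat.ofHom (LinearMap.id : M →ₗ[A] M) = 𝟙 _ from rfl, Ext.mk₀_id_comp]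

theorem smul_extSelf_eq_zero {c : A} (hc : ∀ m : M, c • m = 0) {i : ℕ} (y : ExtSelf A M i) :
    c • y = 0 := by
  have hmul : c • (LinearMap.id : M →ₗ[A] M) = (0 : A) • LinearMap.id := by ext m; simp [hc]
  calc c • y = extSelfMap (c • (LinearMap.id : M →ₗ[A] M)) i y := by
        rw [extSelfMap_smul, extSelfMap_id]
    _ = 0 := by rw [hmul, extSelfMap_smul, zero_smul]

variable {f : M →ₗ[A] N} {g : N →ₗ[A] P}

theorem extSelfMap_zero_injective (hg : Function.Surjective g) :
    Function.Injective (extSelfMap g 0) :=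
  have : Epi (ModuleCat.ofHom g) := (ModuleCat.epi_iff_surjective _).2 hg
  Ext.precomp_mk₀_injective_of_epi (ModuleCat.of A A) (ModuleCat.ofHom g)

variable (hf : Function.Injective f) (hg : Function.Surjective g) (h : Function.Exact f g)

/-- The connecting map `Extⁱ(M, A) → Extⁱ⁺¹(P, A)` of `0 → M → N → P → 0`. -/
noncomputable def extSelfConnecting (i : ℕ) : ExtSelf A M i →ₗ[A] ExtSelf A P (i + 1) :=
  (shortExact_shortComplexOfExact hf hg h).extClass.precompOfLinear A _ (add_comm 1 i)

theorem exact_extSelfMap_extSelfConnecting (i : ℕ) :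
    Function.Exact (extSelfMap f i) (extSelfConnecting hf hg h i) :=
  (ShortComplex.ab_exact_iff_function_exact _).1 <|
    Ext.contravariant_sequence_exact₁' (shortExact_shortComplexOfExact hf hg h) (ModuleCat.of A A)
      i (i + 1) (add_comm 1 i)

include hf hg h in
theorem exact_extSelfMap_extSelfMap (i : ℕ) :
    Function.Exact (extSelfMap g i) (extSelfMap f i) :=
  (ShortComplex.ab_exact_iff_function_exact _).1 <|
    Ext.contravariant_sequence_exact₂' (shortExact_shortComplexOfExact hf hg h) (ModuleCat.of A A) i

theorem exact_extSelfConnecting_extSelfMap (i : ℕ) :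
    Function.Exact (extSelfConnecting hf hg h i) (extSelfMap g (i + 1)) :=
  (ShortComplex.ab_exact_iff_function_exact _).1 <|
    Ext.contravariant_sequence_exact₃' (shortExact_shortComplexOfExact hf hg h) (ModuleCat.of A A)
      i (i + 1) (add_comm 1 i)

theorem extSelfConnecting_surjective (i : ℕ) [Subsingleton (ExtSelf A N (i + 1))] :
    Function.Surjective (extSelfConnecting hf hg h i) := fun y =>
  (exact_extSelfConnecting_extSelfMap hf hg h i y).1 (Subsingleton.elim _ _)

theorem extSelfConnecting_injective (i : ℕ) [Subsingleton (ExtSelf A N i)] :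
    Function.Injective (extSelfConnecting hf hg h i) := by
  rw [injective_iff_map_eq_zero]
  intro y hy
  obtain ⟨z, rfl⟩ := (exact_extSelfMap_extSelfConnecting hf hg h i y).1 hy
  rw [Subsingleton.elim z 0, map_zero]

/-- Read off from `0 → M* → N* → (ker f)* → Ext¹(M, A) → 0` for a free cover `f : N → M`, whose
kernel is projective. -/
theorem ProjDimLT.extSelf_one [IsNoetherianRing A] [Module.Finite A M] (hM : ProjDimLT A M 2)
    {r : ℕ} (hr : ProjDimLT A (ExtSelf A M 0) r) : ProjDimLT A (ExtSelf A M 1) (r + 2) := by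
  obtain ⟨n, f, hf⟩ := Module.Finite.exists_fin' A M
  have hi := Submodule.injective_subtype (LinearMap.ker f)
  have hex : Function.Exact (LinearMap.ker f).subtype f := LinearMap.exact_subtype_ker_map f
  have hsyz : Module.Projective A (LinearMap.ker f) := projDimLT_one_iff_projective.1
    (ProjDimLT.left_of_exact hi hf hex (ProjDimLT.of_projective _) hM)
  have hfree : Module.Projective A (ExtSelf A (Fin n → A) 0) := projective_extSelf_zero
  have hdual : Module.Projective A (ExtSelf A (LinearMap.ker f) 0) := projective_extSelf_zero
  have hsub : Subsingleton (ExtSelf A (Fin n → A) (0 + 1)) :=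
    (ProjDimLT.of_projective _).subsingleton_extSelf le_rfl
  let B := LinearMap.range (extSelfMap (LinearMap.ker f).subtype 0)
  have hB : ProjDimLT A B (r + 1) := by
    refine ProjDimLT.right_of_exact (f := extSelfMap f 0)
      (g := (extSelfMap (LinearMap.ker f).subtype 0).rangeRestrict)
      (extSelfMap_zero_injective hf) (LinearMap.surjective_rangeRestrict _) (fun y => ?_) hr
      ((ProjDimLT.of_projective _).mono (by omega))
    rw [← exact_extSelfMap_extSelfMap hi hf hex 0 y, ← Subtype.coe_inj]; rfl
  refine ProjDimLT.right_of_exact (f := B.subtype) (g := extSelfConnecting hi hf hex 0)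
    (Submodule.injective_subtype _) (extSelfConnecting_surjective hi hf hex 0) (fun y => ?_) hB
    ((ProjDimLT.of_projective _).mono (by omega))
  rw [exact_extSelfMap_extSelfConnecting hi hf hex 0 y]
  simp [B]

/-- Induction on `i` by passing to a syzygy `Ω` of `M`: `Extⁱ⁺²(M, A) = Extⁱ⁺¹(Ω, A)`, and
`Ω*` is a cokernel of `M*` in a free module. -/
theorem ProjDimLT.extSelf_succ [IsNoetherianRing A] (i : ℕ) :
    ∀ (r : ℕ) (M : Type u) [AddCommGroup M] [Module A M] [Module.Finite A M],
      ProjDimLT A M (i + 2) → (∀ p, 1 ≤ p → p < i + 1 → Subsingleton (ExtSelf A M p)) →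
      ProjDimLT A (ExtSelf A M 0) r → ProjDimLT A (ExtSelf A M (i + 1)) (r + i + 2) := by
  induction i with
  | zero => exact fun r M _ _ _ hM _ hr => hM.extSelf_one hr
  | succ i ih =>
    intro r M _ _ _ hM hvanish hr
    obtain ⟨n, f, hf⟩ := Module.Finite.exists_fin' A M
    have hi := Submodule.injective_subtype (LinearMap.ker f)
    have hex : Function.Exact (LinearMap.ker f).subtype f := LinearMap.exact_subtype_ker_map f
    have hsyz : ProjDimLT A (LinearMap.ker f) (i + 2) :=
      ProjDimLT.left_of_exact hi hf hex ((ProjDimLT.of_projective _).mono (by omega)) hM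
    have hfree : Module.Projective A (ExtSelf A (Fin n → A) 0) := projective_extSelf_zero
    have hsub (p : ℕ) : Subsingleton (ExtSelf A (Fin n → A) (p + 1)) :=
      (ProjDimLT.of_projective _).subsingleton_extSelf (by omega)
    have hinj (p : ℕ) := extSelfConnecting_injective hi hf hex (p + 1)
    have hdual : ProjDimLT A (ExtSelf A (LinearMap.ker f) 0) (r + 1) := by
      refine ProjDimLT.right_of_exact (extSelfMap_zero_injective hf) (fun y => ?_)
        (exact_extSelfMap_extSelfMap hi hf hex 0) hr ((ProjDimLT.of_projective _).mono (by omega))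
      have : Subsingleton (ExtSelf A M (0 + 1)) := hvanish 1 le_rfl (by omega)
      exact (exact_extSelfMap_extSelfConnecting hi hf hex 0 y).1 (Subsingleton.elim _ _)
    have hext := ih (r + 1) (LinearMap.ker f) hsyz (fun p hp hpi => by
      obtain ⟨p, rfl⟩ := Nat.exists_eq_add_of_le' hp
      have : Subsingleton (ExtSelf A M (p + 1 + 1)) := hvanish _ (by omega) (by omega)
      exact (hinj p).subsingleton) hdual
    exact (hext.of_linearEquiv (.ofBijective (extSelfConnecting hi hf hex (i + 1))
      ⟨hinj i, extSelfConnecting_surjective hi hf hex (i + 1)⟩)).mono (by omega)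

end ExtDuality

section Subquotients

variable {A : Type u} [CommRing A]

/-- The module `Y / (X ∩ Y) ≅ (X + Y) / X`. -/
abbrev Subquotient (X Y : Ideal A) : Type u := Y ⧸ Submodule.comap Y.subtype X

namespace Subquotient

variable {X Y X' Y' X₃ : Ideal A}

/-- The class of `y ∈ Y` in `Y / (X ∩ Y)`. -/
def mk (X : Ideal A) (y : A) (hy : y ∈ Y) : Subquotient X Y :=
  Submodule.Quotient.mk ⟨y, hy⟩

theorem mk_eq_mk {y z : A} (hy : y ∈ Y) (hz : z ∈ Y) : mk X y hy = mk X z hz ↔ y - z ∈ X :=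
  Submodule.Quotient.eq (Submodule.comap Y.subtype X)

theorem mk_eq_zero {y : A} (hy : y ∈ Y) : mk X y hy = 0 ↔ y ∈ X :=
  Submodule.Quotient.mk_eq_zero (Submodule.comap Y.subtype X)

theorem smul_mk (r : A) {y : A} (hy : y ∈ Y) :
    r • mk X y hy = mk X (r * y) (Y.mul_mem_left r hy) := rfl

theorem exists_mk (z : Subquotient X Y) : ∃ y, ∃ hy : y ∈ Y, z = mk X y hy := by
  obtain ⟨⟨y, hy⟩, rfl⟩ := Submodule.Quotient.mk_surjective _ z
  exact ⟨y, hy, rfl⟩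

/-- Multiplication by `b`, as a map `Y / (X ∩ Y) → Y' / (X' ∩ Y')`. -/
def mulMap (b : A) (hY : ∀ y ∈ Y, b * y ∈ Y') (hX : ∀ x ∈ X, b * x ∈ X') :
    Subquotient X Y →ₗ[A] Subquotient X' Y' :=
  Submodule.mapQ _ _ ((LinearMap.lsmul A A b).restrict (p := Y) (q := Y') hY) fun y hy =>
    hX y.1 hy

theorem mulMap_mk (b : A) (hY : ∀ y ∈ Y, b * y ∈ Y') (hX : ∀ x ∈ X, b * x ∈ X') {y : A}
    (hy : y ∈ Y) : mulMap b hY hX (mk X y hy) = mk X' (b * y) (hY y hy) := rfl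

/-- The projection `Y / (X ∩ Y) → Y / (X' ∩ Y)` for `X ≤ X'`. -/
def factor (hX : X ≤ X') : Subquotient X Y →ₗ[A] Subquotient X' Y :=
  Submodule.mapQ _ _ LinearMap.id fun _ hy => hX hy

theorem factor_mk (hX : X ≤ X') {y : A} (hy : y ∈ Y) :
    factor hX (mk X y hy) = mk X' y hy := rfl

theorem factor_surjective (hX : X ≤ X') : Function.Surjective (factor (Y := Y) hX) := by
  intro z
  obtain ⟨y, hy, rfl⟩ := exists_mk z
  exact ⟨mk X y hy, rfl⟩

theorem mulMap_injective {b : A} (hY : ∀ y ∈ Y, b * y ∈ Y') (hX : ∀ x ∈ X, b * x ∈ X')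
    (h : ∀ y ∈ Y, b * y ∈ X' → y ∈ X) : Function.Injective (mulMap b hY hX) := by
  rw [injective_iff_map_eq_zero]
  intro z hz
  obtain ⟨y, hy, rfl⟩ := exists_mk z
  rw [mulMap_mk, mk_eq_zero] at hz
  exact (mk_eq_zero hy).2 (h y hy hz)

theorem exact_mulMap_factor {b : A} (hY : ∀ y ∈ Y, b * y ∈ Y') (hX : ∀ x ∈ X, b * x ∈ X')
    (h₃ : X' ≤ X₃) (h : ∀ z ∈ Y', z ∈ X₃ ↔ ∃ y ∈ Y, z - b * y ∈ X') :
    Function.Exact (mulMap b hY hX) (factor (Y := Y') h₃) := by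
  intro z
  obtain ⟨y, hy, rfl⟩ := exists_mk z
  rw [factor_mk, mk_eq_zero, h y hy]
  constructor
  · rintro ⟨w, hw, hyw⟩
    exact ⟨mk X w hw, ((mk_eq_mk hy (hY w hw)).2 hyw).symm⟩
  · rintro ⟨w, hw⟩
    obtain ⟨v, hv, rfl⟩ := exists_mk w
    exact ⟨v, hv, (mk_eq_mk hy (hY v hv)).1 hw.symm⟩

end Subquotient

theorem height_lt_of_projDimLT_subquotient [IsRegularRing A] {X Y : Ideal A} {n : ℕ}
    (h : ProjDimLT A (Subquotient X Y) n) {p : Ideal A} [p.IsPrime]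
    (hp : IsColonOfMem X Y p) : p.height < n := by
  obtain ⟨y, hy, hyp⟩ := hp
  refine height_lt_of_projDimLT h (y := Subquotient.mk X y hy) fun x => ?_
  rw [Subquotient.smul_mk, Subquotient.mk_eq_zero, hyp]

theorem height_le_of_projDimLT_quotient [IsRegularRing A] {X : Ideal A} {n : ℕ}
    (h : ProjDimLT A (A ⧸ X) (n + 1)) {p : Ideal A} [p.IsPrime]
    (hp : IsColonOfMem X ⊤ p) : p.height ≤ n := by
  obtain ⟨y, -, hyp⟩ := hp
  have hlt : p.height < (n + 1 : ℕ) :=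
    height_lt_of_projDimLT h (y := Ideal.Quotient.mk X y) fun x => by
      rw [← hyp, ← Ideal.Quotient.eq_zero_iff_mem, map_mul]; rfl
  exact ENat.lt_natCast_add_one_iff.1 (by exact_mod_cast hlt)

theorem ProjDimLT.quotient_sup_span_singleton {J K : Ideal A} {c : A} {n : ℕ}
    (hK : ProjDimLT A (A ⧸ K) n) (hcolon : ∀ x, c * x ∈ J ↔ x ∈ K)
    (hJ : ProjDimLT A (A ⧸ J) (n + 1)) : ProjDimLT A (A ⧸ J ⊔ Ideal.span {c}) (n + 1) := by
  let f : (A ⧸ K) →ₗ[A] (A ⧸ J) :=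
    Submodule.mapQ K J (LinearMap.lsmul A A c) fun x hx => (hcolon x).2 hx
  refine ProjDimLT.right_of_exact (f := f) (g := Submodule.factor le_sup_left)
    ((injective_iff_map_eq_zero f).2 fun z hz => ?_) (Submodule.factor_surjective _)
    (fun z => ?_) hK hJ
  · obtain ⟨x, rfl⟩ := Submodule.Quotient.mk_surjective _ z
    exact (Submodule.Quotient.mk_eq_zero _).2 <| (hcolon x).1 <|
      (Submodule.Quotient.mk_eq_zero J).1 hz
  · obtain ⟨x, rfl⟩ := Submodule.Quotient.mk_surjective _ z
    rw [← Submodule.mkQ_apply, Submodule.factor_mk, Submodule.mkQ_apply,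
      Submodule.Quotient.mk_eq_zero, Submodule.mem_sup]
    constructor
    · rintro ⟨y, hy, w, hw, rfl⟩
      obtain ⟨a, rfl⟩ := Ideal.mem_span_singleton.1 hw
      refine ⟨Submodule.Quotient.mk a, (Submodule.Quotient.eq J).2 ?_⟩
      simpa using neg_mem hy
    · rintro ⟨w, hw⟩
      obtain ⟨a, rfl⟩ := Submodule.Quotient.mk_surjective _ w
      have hmem : c * a - x ∈ J := (Submodule.Quotient.eq J).1 hw
      exact ⟨x - c * a, by simpa using neg_mem hmem, c * a,
        Ideal.mul_mem_right _ _ (Ideal.mem_span_singleton_self c), by ring⟩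

end Subquotients

section InitIdeal

variable {A : Type u} [CommRing A] {b : ℕ → A} {I : Ideal A} {i : ℕ}

/-- The ideal `(b₀, …, b_{i-1})`. -/
def initIdeal (b : ℕ → A) (i : ℕ) : Ideal A := Ideal.span (b '' Set.Iio i)

theorem initIdeal_zero (b : ℕ → A) : initIdeal b 0 = ⊥ := by simp [initIdeal]

theorem initIdeal_succ (b : ℕ → A) (i : ℕ) :
    initIdeal b (i + 1) = initIdeal b i ⊔ Ideal.span {b i} := by
  rw [initIdeal, initIdeal, ← Ideal.span_union, ← Order.succ_eq_add_one, Order.Iio_succ_eq_insert,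
    Set.image_insert_eq, Set.insert_eq, Set.union_comm]

theorem initIdeal_mono (b : ℕ → A) : Monotone (initIdeal b) := fun _ _ h =>
  Ideal.span_mono (Set.image_mono (Set.Iio_subset_Iio h))

theorem initIdeal_le_succ (b : ℕ → A) (i : ℕ) : initIdeal b i ≤ initIdeal b (i + 1) :=
  initIdeal_mono b i.le_succ

theorem mem_initIdeal {j : ℕ} (h : j < i) : b j ∈ initIdeal b i :=
  Ideal.subset_span ⟨j, h, rfl⟩

theorem mem_initIdeal_succ_mul {F : Ideal A} {x : A} :
    x ∈ initIdeal b (i + 1) * F ↔ ∃ y ∈ F, x - b i * y ∈ initIdeal b i * F := by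
  rw [initIdeal_succ, Ideal.sup_mul, Submodule.mem_sup]
  constructor
  · rintro ⟨z, hz, w, hw, rfl⟩
    obtain ⟨y, hy, rfl⟩ := Ideal.mem_span_singleton_mul.1 hw
    exact ⟨y, hy, by simpa using hz⟩
  · rintro ⟨y, hy, h⟩
    exact ⟨_, h, b i * y, Ideal.mem_span_singleton_mul.2 ⟨y, hy, rfl⟩, by ring⟩

theorem mem_initIdeal_succ {x : A} :
    x ∈ initIdeal b (i + 1) ↔ ∃ y, x - b i * y ∈ initIdeal b i := by
  simpa using mem_initIdeal_succ_mul (b := b) (F := ⊤) (i := i) (x := x)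

theorem mem_colon_coe {J : Ideal A} {x : A} :
    x ∈ J.colon (I : Set A) ↔ ∀ u ∈ I, x * u ∈ J :=
  Submodule.mem_colon

theorem mul_mem_mul_pow_of_mem_colon {J : Ideal A} {c y : A} (hc : c ∈ J.colon (I : Set A))
    (e : ℕ) (hy : y ∈ I ^ (e + 1)) : c * y ∈ J * I ^ e := by
  rw [pow_succ'] at hy
  refine Submodule.mul_induction_on hy (fun u hu v hv => ?_) fun x z hx hz => ?_
  · rw [← mul_assoc]
    exact Ideal.mul_mem_mul (mem_colon_coe.1 hc u hu) hv
  · rw [mul_add]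
    exact add_mem hx hz

theorem isColonOfMem_of_mul_pow {J p : Ideal A} {e : ℕ} [hp : p.IsPrime] {w : A}
    (h : ∀ r, r * w ∈ J * I ^ e ↔ r ∈ p) (hI : ¬ I ≤ p) : IsColonOfMem J ⊤ p := by
  obtain ⟨u, hu, hup⟩ := SetLike.not_le_iff_exists.1 hI
  refine ⟨w, Submodule.mem_top, fun r => ⟨fun hr => ?_, fun hr => Ideal.mul_le_left ((h r).2 hr)⟩⟩
  have hmul : u ^ e * r ∈ p := (h _).1 <| by
    rw [mul_assoc, mul_comm (u ^ e)]; exact Ideal.mul_mem_mul hr (Ideal.pow_mem_pow hu e)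
  exact (hp.mem_or_mem hmul).resolve_left fun hue => hup (hp.mem_of_pow_mem _ hue)

theorem exists_notMem_forall_mul_mem [IsNoetherianRing A] {p : Ideal A} [hp : p.IsPrime]
    (T Z : Ideal A) (h : ∀ z ∈ T, ∃ c ∉ p, c * z ∈ Z) : ∃ c ∉ p, ∀ z ∈ T, c * z ∈ Z := by
  induction T, IsNoetherian.noetherian T using Submodule.fg_induction with
  | singleton x =>
    obtain ⟨c, hcp, hcx⟩ := h x (Submodule.mem_span_singleton_self x)
    refine ⟨c, hcp, fun z hz => ?_⟩
    obtain ⟨a, rfl⟩ := Ideal.mem_span_singleton'.1 hz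
    rw [mul_left_comm]
    exact Ideal.mul_mem_left _ _ hcx
  | sup T₁ T₂ _ _ ih₁ ih₂ =>
    obtain ⟨c₁, hc₁, h₁⟩ := ih₁ fun z hz => h z (Submodule.mem_sup_left hz)
    obtain ⟨c₂, hc₂, h₂⟩ := ih₂ fun z hz => h z (Submodule.mem_sup_right hz)
    refine ⟨c₁ * c₂, fun hmem => (hp.mem_or_mem hmem).elim hc₁ hc₂, fun z hz => ?_⟩
    obtain ⟨x, hx, y, hy, rfl⟩ := Submodule.mem_sup.1 hz
    rw [show c₁ * c₂ * (x + y) = c₂ * (c₁ * x) + c₁ * (c₂ * y) by ring]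
    exact add_mem (Ideal.mul_mem_left _ _ (h₁ x hx)) (Ideal.mul_mem_left _ _ (h₂ y hy))

end InitIdeal

section ResidualSequence

variable {A : Type u} [CommRing A] {I : Ideal A} {g : ℕ} {b : ℕ → A} {N : ℕ}

/-- `b₀, …, b_{N-1}` are general enough elements of the ideal `I` of height at least `g ≥ 1`: for
`i ≤ N` the ideals `(b₀, …, b_{i-1}) : I` are `i`-residual intersections as far as primes containing
`I` are concerned, and `bᵢ` avoids the associated primes of `(b₀, …, b_{i-1})` not containing `I`.
The condition `projDimLT_pow` is the homological form of the depth condition on the powers of `I`,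
the exponent being `0` for `j < g`. -/
structure IsResidualSequence (I : Ideal A) (g : ℕ) (b : ℕ → A) (N : ℕ) : Prop where
  one_le : 1 ≤ g
  le_height : ∀ p : Ideal A, p.IsPrime → I ≤ p → (g : ℕ∞) ≤ p.height
  mem : ∀ i, b i ∈ I
  projDimLT_pow : ∀ j ≤ N, ProjDimLT A ↥(I ^ (j + 1 - g)) (max j 1)
  not_colon_le : ∀ i ≤ N, ∀ p : Ideal A, p.IsPrime → I ≤ p → p.height ≤ i →
    ¬ (initIdeal b i).colon (I : Set A) ≤ p
  le_of_mem : ∀ i < N, ∀ p : Ideal A, p.IsPrime → IsColonOfMem (initIdeal b i) ⊤ p →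
    b i ∈ p → I ≤ p

/-- For `i ≤ n`, the associated primes of `A / (b₀, …, b_{i-1})` have height at most `i`. -/
def AssHeightLE (b : ℕ → A) (n : ℕ) : Prop :=
  ∀ i ≤ n, ∀ p : Ideal A, p.IsPrime → IsColonOfMem (initIdeal b i) ⊤ p → p.height ≤ i

namespace IsResidualSequence

variable {n i : ℕ}

theorem not_isColonOfMem_of_height_le (S : IsResidualSequence I g b N) (hi : i ≤ N) {p : Ideal A}
    [hp : p.IsPrime] (hIp : I ≤ p) (hpi : p.height ≤ i) (e : ℕ) :
    ¬ IsColonOfMem (initIdeal b i * I ^ e) (I ^ (e + 1)) p := fun ⟨_, hy, h⟩ =>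
  S.not_colon_le i hi p hp hIp hpi fun _ hc => (h _).1 (mul_mem_mul_pow_of_mem_colon hc e hy)

theorem le_of_mul_mem (S : IsResidualSequence I g b N) (hi : i < N) {e : ℕ} {p : Ideal A}
    [hp : p.IsPrime] {w t : A} (h : ∀ r, r * (t * w) ∈ initIdeal b i * I ^ e ↔ r ∈ p)
    (hw : b i * w ∈ initIdeal b i * I ^ e) : I ≤ p := by
  by_contra hI
  refine hI (S.le_of_mem i hi p hp (isColonOfMem_of_mul_pow h hI) ((h _).1 ?_))
  rw [mul_left_comm]
  exact Ideal.mul_mem_left _ _ hw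

variable [IsNoetherianRing A]

theorem mem_initIdeal_of_mem_colon (S : IsResidualSequence I g b N) (H : AssHeightLE b n)
    (hi : i ≤ n) (hig : i < g) {x : A} (hx : x ∈ (initIdeal b i).colon (I : Set A)) :
    x ∈ initIdeal b i := by
  by_contra hmem
  obtain ⟨p, hp, t, ht⟩ := exists_prime_eq_colon_mul _ _ hmem
  have hpi := H i hi p hp ⟨_, trivial, ht⟩
  have hgp := S.le_height p hp fun u hu => (ht u).1 <| by
    rw [mul_left_comm, mul_comm u]
    exact Ideal.mul_mem_left _ _ (mem_colon_coe.1 hx u hu)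
  exact hig.not_ge (by exact_mod_cast hgp.trans hpi)

theorem mem_initIdeal_of_forall_isPrime_le (S : IsResidualSequence I g b N) (H : AssHeightLE b n)
    (hi : i ≤ n) (hN : i ≤ N) {x : A} (hxI : x ∈ I)
    (h : ∀ p : Ideal A, p.IsPrime → ∀ t, (∀ r, r * (t * x) ∈ initIdeal b i ↔ r ∈ p) → I ≤ p) :
    x ∈ initIdeal b i := by
  by_contra hmem
  obtain ⟨p, hp, t, ht⟩ := exists_prime_eq_colon_mul _ _ hmem
  refine S.not_isColonOfMem_of_height_le hN (h p hp t ht) (H i hi p hp ⟨_, trivial, ht⟩) 0 ?_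
  exact ⟨t * x, by simpa using I.mul_mem_left t hxI, by simpa using ht⟩

theorem mem_initIdeal_of_mem_colon_of_mem (S : IsResidualSequence I g b N) (H : AssHeightLE b n)
    (hi : i ≤ n) (hN : i ≤ N) {x : A} (hx : x ∈ (initIdeal b i).colon (I : Set A))
    (hxI : x ∈ I) : x ∈ initIdeal b i := by
  refine S.mem_initIdeal_of_forall_isPrime_le H hi hN hxI fun p _ t ht u hu => (ht u).1 ?_
  rw [mul_left_comm, mul_comm u]
  exact Ideal.mul_mem_left _ _ (mem_colon_coe.1 hx u hu)

theorem mem_colon_of_mul_mem (S : IsResidualSequence I g b N) (H : AssHeightLE b n)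
    (hi : i ≤ n) (hN : i < N) {x : A} (hx : b i * x ∈ initIdeal b i) :
    x ∈ (initIdeal b i).colon (I : Set A) := by
  refine mem_colon_coe.2 fun u hu =>
    S.mem_initIdeal_of_forall_isPrime_le H hi hN.le (I.mul_mem_left _ hu) fun p hp t ht => ?_
  refine S.le_of_mul_mem hN (e := 0) (by simpa using ht) ?_
  rw [pow_zero, mul_one, ← mul_assoc]
  exact Ideal.mul_mem_right _ _ hx

theorem exists_notMem_mul_mem_of_mul_mem (S : IsResidualSequence I g b N) (hi : i < N) {e : ℕ}
    {p : Ideal A} [p.IsPrime]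
    (h : ∀ q ≤ p, q.IsPrime → I ≤ q → ¬ IsColonOfMem (initIdeal b i * I ^ e) (I ^ (e + 1)) q)
    {w : A} (hw : w ∈ I ^ (e + 1)) (hbw : b i * w ∈ initIdeal b i * I ^ e) :
    ∃ c ∉ p, c * w ∈ initIdeal b i * I ^ e := by
  by_contra! hc
  obtain ⟨q, hq, hqp, t, ht⟩ := exists_prime_le_eq_colon_mul (initIdeal b i * I ^ e) w p
    fun r hr => by_contra fun hrp => hc r hrp hr
  exact h q hqp hq (S.le_of_mul_mem hi ht hbw) ⟨t * w, Ideal.mul_mem_left _ _ hw, ht⟩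

theorem not_isColonOfMem_of_succ (S : IsResidualSequence I g b N) (hi : i < N) {e : ℕ}
    {p : Ideal A} [hp : p.IsPrime]
    (h : ∀ q ≤ p, q.IsPrime → I ≤ q → ¬ IsColonOfMem (initIdeal b i * I ^ e) (I ^ (e + 1)) q)
    (hIp : I ≤ p)
    (hsucc : ¬ IsColonOfMem (initIdeal b (i + 1) * I ^ (e + 1)) (I ^ (e + 2)) p) :
    ¬ IsColonOfMem (initIdeal b i * I ^ (e + 1)) (I ^ (e + 2)) p := by
  rintro ⟨x, hx, hxp⟩
  obtain ⟨c, hcp, hc⟩ : ∃ c ∉ p, c * x ∈ initIdeal b (i + 1) * I ^ (e + 1) := by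
    by_contra! hno
    refine hsucc ⟨x, hx, fun r => ⟨fun hr => by_contra fun hrp => hno r hrp hr, fun hr => ?_⟩⟩
    exact Ideal.mul_mono_left (initIdeal_le_succ b i) ((hxp r).2 hr)
  obtain ⟨y, hy, hxy⟩ := mem_initIdeal_succ_mul.1 hc
  have hyp : ∀ r, b i * (r * y) ∈ initIdeal b i * I ^ (e + 1) ↔ r ∈ p := by
    intro r
    rw [← show r * c * x - r * (c * x - b i * y) = b i * (r * y) by ring,
      Submodule.sub_mem_iff_left _ (Ideal.mul_mem_left _ _ hxy), hxp]
    exact ⟨fun hr => (hp.mem_or_mem hr).resolve_right hcp, Ideal.mul_mem_right _ _⟩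
  have hpow : initIdeal b i * I ^ (e + 1) ≤ initIdeal b i * I ^ e :=
    Ideal.mul_mono_right (Ideal.pow_le_pow_right e.le_succ)
  obtain ⟨a, hap, ha⟩ : ∃ a ∉ p, ∀ z ∈ p * Ideal.span {y}, a * z ∈ initIdeal b i * I ^ e := by
    refine exists_notMem_forall_mul_mem _ _ fun z hz => ?_
    obtain ⟨r, hr, rfl⟩ := Ideal.mem_mul_span_singleton.1 hz
    exact S.exists_notMem_mul_mem_of_mul_mem hi h (Ideal.mul_mem_left _ _ hy)
      (hpow ((hyp r).2 hr))
  refine h p le_rfl hp hIp ⟨a * y, Ideal.mul_mem_left _ _ hy, fun r => ⟨fun hr => ?_, fun hr => ?_⟩⟩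
  · refine (hp.mem_or_mem ((hyp (r * a)).1 ?_)).resolve_right hap
    rw [show b i * (r * a * y) = r * (a * y) * b i by ring, pow_succ, ← mul_assoc]
    exact Ideal.mul_mem_mul hr (S.mem i)
  · rw [mul_left_comm]
    exact ha _ (Ideal.mem_mul_span_singleton.2 ⟨r, hr, rfl⟩)

theorem not_isColonOfMem (S : IsResidualSequence I g b N) (H : AssHeightLE b n) (hnN : n ≤ N)
    (e : ℕ) : ∀ i ≤ n, ∀ p : Ideal A, p.IsPrime → I ≤ p → p.height ≤ n →
      ¬ IsColonOfMem (initIdeal b i * I ^ e) (I ^ (e + 1)) p := by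
  induction e with
  | zero =>
    intro i hi p hp hIp _ h
    have ⟨y, _, hyp⟩ := h
    have hpi := H i hi p hp ⟨y, trivial, by simpa using hyp⟩
    exact S.not_isColonOfMem_of_height_le (hi.trans hnN) hIp hpi 0 h
  | succ e ih =>
    intro i hi p hp hIp hpn
    induction hi using Nat.decreasingInduction with
    | self => exact S.not_isColonOfMem_of_height_le hnN hIp hpn _
    | of_succ i hi ihi =>
      exact S.not_isColonOfMem_of_succ (hi.trans_le hnN)
        (fun q hqp hq hIq => ih i hi.le q hq hIq ((Ideal.height_mono hqp).trans hpn)) hIp ihi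

end IsResidualSequence

end ResidualSequence

section ResidualModules

variable {A : Type u} [CommRing A] {I : Ideal A} {g : ℕ} {b : ℕ → A} {N : ℕ}

/-- The module `I^{j+1-g} / (b₀, …, b_{i-1}) I^{j-g}` for `i ≤ j`, where powers with negative
exponent are the unit ideal. -/
abbrev ResidualModule (I : Ideal A) (g : ℕ) (b : ℕ → A) (i j : ℕ) : Type u :=
  Subquotient (initIdeal b i * I ^ (j - g)) (I ^ (j + 1 - g))

namespace ResidualModule

theorem mul_mem_mul_pow_sub {J : Ideal A} {u : A} (hu : u ∈ I) (g j : ℕ) {y : A}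
    (hy : y ∈ J * I ^ (j - g)) : u * y ∈ J * I ^ (j + 1 - g) := by
  rcases lt_or_ge j g with h | h
  · rw [show j - g = 0 by omega] at hy
    rw [show j + 1 - g = 0 by omega]
    exact Ideal.mul_mem_left _ _ hy
  · rw [show j + 1 - g = j - g + 1 by omega, pow_succ, ← mul_assoc, mul_comm u]
    exact Ideal.mul_mem_mul hy hu

/-- Multiplication by `u ∈ I`, as a map `M_{i,j} → M_{i,j+1}`. -/
def mulMap {u : A} (hu : u ∈ I) (g : ℕ) (b : ℕ → A) (i j : ℕ) :
    ResidualModule I g b i j →ₗ[A] ResidualModule I g b i (j + 1) :=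
  Subquotient.mulMap u
    (fun y hy => by simpa using mul_mem_mul_pow_sub (J := ⊤) hu g (j + 1) (y := y) (by simpa))
    fun _ hy => mul_mem_mul_pow_sub hu g j hy

/-- The projection `M_{i,j} → M_{i+1,j}`. -/
def proj (I : Ideal A) (g : ℕ) (b : ℕ → A) (i j : ℕ) :
    ResidualModule I g b i j →ₗ[A] ResidualModule I g b (i + 1) j :=
  Subquotient.factor (Ideal.mul_mono_left (initIdeal_le_succ b i))

theorem smul_mulMap_comm {u v : A} (hu : u ∈ I) (hv : v ∈ I) (g : ℕ) (b : ℕ → A) (i j : ℕ) :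
    u • mulMap hv g b i j = v • mulMap hu g b i j := by
  refine LinearMap.ext fun z => ?_
  obtain ⟨y, hy, rfl⟩ := Subquotient.exists_mk z
  simp only [LinearMap.smul_apply, mulMap, Subquotient.mulMap_mk, Subquotient.smul_mk,
    mul_left_comm]

theorem proj_surjective (I : Ideal A) (g : ℕ) (b : ℕ → A) (i j : ℕ) :
    Function.Surjective (proj I g b i j) :=
  Subquotient.factor_surjective _

theorem exact_mulMap_proj {i : ℕ} (hb : b i ∈ I) (g j : ℕ) :
    Function.Exact (mulMap hb g b i j) (proj I g b i (j + 1)) :=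
  Subquotient.exact_mulMap_factor _ _ _ fun _ _ => mem_initIdeal_succ_mul

/-- The module `M_{0,j}` is the power `I^{j+1-g}`. -/
def zeroEquiv (I : Ideal A) (g : ℕ) (b : ℕ → A) (j : ℕ) :
    ResidualModule I g b 0 j ≃ₗ[A] ↥(I ^ (j + 1 - g)) :=
  Submodule.quotEquivOfEqBot _ <| by
    rw [initIdeal_zero, Submodule.bot_mul, ← LinearMap.ker, Submodule.ker_subtype]

end ResidualModule

namespace IsResidualSequence

open ResidualModule

variable {n i j : ℕ}

theorem smul_residualModule_eq_zero [IsNoetherianRing A] (S : IsResidualSequence I g b N)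
    (H : AssHeightLE b n) (hi : i ≤ n) {c : A} (hc : c ∈ (initIdeal b i).colon (I : Set A))
    (m : ResidualModule I g b i i) : c • m = 0 := by
  obtain ⟨y, hy, rfl⟩ := Subquotient.exists_mk m
  rw [Subquotient.smul_mk, Subquotient.mk_eq_zero]
  rcases lt_or_ge i g with h | h
  · rw [show i - g = 0 by omega, pow_zero, mul_one]
    exact Ideal.mul_mem_right _ _ (S.mem_initIdeal_of_mem_colon H hi h hc)
  · rw [show i + 1 - g = i - g + 1 by omega] at hy
    exact mul_mem_mul_pow_of_mem_colon hc _ hy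

variable [IsRegularRing A]

theorem mulMap_injective (S : IsResidualSequence I g b N) (H : AssHeightLE b n) (hnN : n ≤ N)
    (hij : i ≤ j) (hj : j + 1 ≤ n)
    (hpd : ProjDimLT A (ResidualModule I g b i j) (max j (i + 1))) :
    Function.Injective (mulMap (S.mem i) g b i j) := by
  refine Subquotient.mulMap_injective _ _ fun x hx hbx => ?_
  by_contra hxX
  obtain ⟨p, hp, t, ht⟩ := exists_prime_eq_colon_mul _ _ hxX
  have hbx' : b i * x ∈ initIdeal b i * I ^ (j - g) :=
    Ideal.mul_mono_right (Ideal.pow_le_pow_right (by omega)) hbx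
  have hIp : I ≤ p := S.le_of_mul_mem (by omega) ht hbx'
  have hp_lt : p.height < (max j (i + 1) : ℕ) :=
    height_lt_of_projDimLT_subquotient hpd ⟨t * x, Ideal.mul_mem_left _ _ hx, ht⟩
  have hgj : g ≤ j := by
    have : g < max j (i + 1) := by exact_mod_cast (S.le_height p hp hIp).trans_lt hp_lt
    omega
  rw [show j + 1 - g = j - g + 1 by omega] at hx
  exact S.not_isColonOfMem H hnN (j - g) i (by omega) p hp hIp
    (hp_lt.le.trans (by exact_mod_cast max_le (by omega) (by omega)))
    ⟨t * x, Ideal.mul_mem_left _ _ hx, ht⟩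

theorem projDimLT_residualModule (S : IsResidualSequence I g b N) (H : AssHeightLE b n)
    (hnN : n ≤ N) (i : ℕ) : ∀ j, i ≤ j → j ≤ n →
      ProjDimLT A (ResidualModule I g b i j) (max j (i + 1)) := by
  induction i with
  | zero =>
    exact fun j _ hj => (S.projDimLT_pow j (hj.trans hnN)).of_linearEquiv (zeroEquiv I g b j).symm
  | succ i ih =>
    intro j hij hj
    obtain ⟨j, rfl⟩ : ∃ j', j = j' + 1 := ⟨j - 1, by omega⟩
    have hpd := ih j (by omega) (by omega)
    exact (ProjDimLT.right_of_exact (S.mulMap_injective H hnN (by omega) hj hpd)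
      (proj_surjective I g b i (j + 1)) (exact_mulMap_proj (S.mem i) g j) hpd
      ((ih (j + 1) (by omega) hj).mono (by omega))).mono (by omega)

end IsResidualSequence

end ResidualModules

section ResidualDuality

variable {A : Type u} [CommRing A] {I : Ideal A} {g : ℕ} {b : ℕ → A} {N : ℕ}

namespace IsResidualSequence

open ResidualModule

variable {n i : ℕ}

theorem mem_colon_succ_of_extSelfMap_eq [IsNoetherianRing A] (S : IsResidualSequence I g b N)
    (H : AssHeightLE b n) (hi : i ≤ n) (hN : i ≤ N)
    {f : A →ₗ[A] ExtSelf A (ResidualModule I g b i i) i} (hf : Function.Surjective f)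
    (hker : LinearMap.ker f = (initIdeal b i).colon (I : Set A)) {c : A}
    {y : ExtSelf A (ResidualModule I g b i (i + 1)) i}
    (hy : extSelfMap (mulMap (S.mem i) g b i i) i y = f c) :
    c ∈ (initIdeal b (i + 1)).colon (I : Set A) := by
  refine mem_colon_coe.2 fun u hu => ?_
  obtain ⟨v, hv⟩ := hf (extSelfMap (mulMap hu g b i i) i y)
  have hcolon : c * u - b i * v ∈ (initIdeal b i).colon (I : Set A) := by
    have hmul (r a : A) : f (r * a) = r • f a := f.map_smul r a
    rw [← hker, LinearMap.mem_ker, mul_comm c, map_sub, hmul, hmul, hv, ← hy, ← extSelfMap_smul,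
      ← extSelfMap_smul, smul_mulMap_comm hu (S.mem i), sub_self]
  exact mem_initIdeal_succ.2 ⟨v, S.mem_initIdeal_of_mem_colon_of_mem H hi hN hcolon
    (sub_mem (I.mul_mem_left _ hu) (I.mul_mem_right _ (S.mem i)))⟩

variable [IsRegularRing A]

/-- Thus `Extⁱ(M_{i,i}, A) ≅ A / ((b₀, …, b_{i-1}) : I)`. -/
theorem exists_surjective_extSelf (S : IsResidualSequence I g b N) (H : AssHeightLE b n)
    (hnN : n ≤ N) (i : ℕ) : i ≤ n → ∃ f : A →ₗ[A] ExtSelf A (ResidualModule I g b i i) i,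
      Function.Surjective f ∧ LinearMap.ker f = (initIdeal b i).colon (I : Set A) := by
  induction i with
  | zero =>
    intro _
    have hpow : I ^ (0 + 1 - g) = ⊤ := by
      rw [Nat.sub_eq_zero_of_le S.one_le, pow_zero, Ideal.one_eq_top]
    let e : A ≃ₗ[A] ExtSelf A (ResidualModule I g b 0 0) 0 :=
      (LinearMap.ringLmapEquivSelf A A A).symm.trans
        (((zeroEquiv I g b 0).trans ((LinearEquiv.ofEq _ _ hpow).trans
          Submodule.topEquiv)).dualMap.trans (dualEquivExtSelf A _))
    refine ⟨e, e.surjective, e.ker.trans (Eq.symm (eq_bot_iff.2 fun c hc => ?_))⟩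
    rw [← initIdeal_zero b]
    exact S.mem_initIdeal_of_mem_colon H (Nat.zero_le _) S.one_le hc
  | succ i ih =>
    intro hi
    obtain ⟨f, hf, hker⟩ := ih (by omega)
    have hinj := S.mulMap_injective H hnN le_rfl hi
      ((S.projDimLT_residualModule H hnN i i le_rfl (by omega)))
    have hsurj := proj_surjective I g b i (i + 1)
    have hex := exact_mulMap_proj (S.mem i) g i
    have : Subsingleton (ExtSelf A (ResidualModule I g b i (i + 1)) (i + 1)) :=
      (S.projDimLT_residualModule H hnN i (i + 1) (by omega) hi).subsingleton_extSelf (by omega)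
    refine ⟨extSelfConnecting hinj hsurj hex i ∘ₗ f,
      (extSelfConnecting_surjective hinj hsurj hex i).comp hf, le_antisymm (fun c hc => ?_)
      fun c hc => ?_⟩
    · obtain ⟨y, hy⟩ := (exact_extSelfMap_extSelfConnecting hinj hsurj hex i _).1 hc
      exact S.mem_colon_succ_of_extSelfMap_eq H (by omega) (by omega) hf hker hy
    · have hsmul := map_smul (extSelfConnecting hinj hsurj hex i ∘ₗ f) c 1
      rw [smul_eq_mul, mul_one] at hsmul
      exact hsmul.trans (smul_extSelf_eq_zero (S.smul_residualModule_eq_zero H hi hc) _)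

omit [IsRegularRing A] in
theorem le_height_of_initIdeal_le [IsNoetherianRing A] (S : IsResidualSequence I g b N) (i : ℕ) :
    i ≤ N → ∀ p : Ideal A, p.IsPrime → initIdeal b i ≤ p → ¬ I ≤ p → (i : ℕ∞) ≤ p.height := by
  induction i with
  | zero => intros; simp
  | succ i ih =>
    intro hi p hp hle hI
    obtain ⟨q, hq, hqp⟩ :=
      Ideal.exists_minimalPrimes_le (J := p) ((initIdeal_le_succ b i).trans hle)
    have := hq.1.1
    have hIq : ¬ I ≤ q := fun h => hI (h.trans hqp)
    have hbq : b i ∉ q := fun h =>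
      hIq (S.le_of_mem i (by omega) q hq.1.1 (isColonOfMem_of_mem_minimalPrimes hq) h)
    have hlt : q < p := lt_of_le_of_ne hqp fun h => hbq (h ▸ hle (mem_initIdeal i.lt_succ_self))
    push_cast
    exact (add_le_add_left (ih (by omega) q hq.1.1 hq.1.2 hIq) 1).trans
      (Ideal.height_add_one_le_of_lt_of_isPrime hlt)

omit [IsRegularRing A] in
theorem le_height_of_colon_le [IsNoetherianRing A] (S : IsResidualSequence I g b N) (hi : i ≤ N)
    {p : Ideal A} (hp : p.IsPrime) (hle : (initIdeal b i).colon (I : Set A) ≤ p) :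
    (i : ℕ∞) ≤ p.height := by
  by_cases hI : I ≤ p
  · by_contra! hlt
    exact S.not_colon_le i hi p hp hI hlt.le hle
  · exact S.le_height_of_initIdeal_le i hi p hp
      (le_trans (fun x hx => mem_colon_coe.2 fun u _ => Ideal.mul_mem_right _ _ hx) hle) hI

variable [IsLocalRing A]

/-- The module `M_{n,n}` has projective dimension at most `n + 1` and its `Extᵖ(-, A)` vanishes for
`p < n` because it is killed by an ideal of height `n`; hence its dual `Extⁿ(M_{n,n}, A)` has
projective dimension at most `n`. -/
theorem projDimLT_quotient_colon (S : IsResidualSequence I g b N) (H : AssHeightLE b n)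
    (hnN : n ≤ N) : ProjDimLT A (A ⧸ (initIdeal b n).colon (I : Set A)) (n + 1) := by
  obtain ⟨f, hf, hker⟩ := S.exists_surjective_extSelf H hnN n le_rfl
  refine ProjDimLT.of_linearEquiv
    ((Submodule.quotEquivOfEq _ _ hker).symm.trans (f.quotKerEquivOfSurjective hf)).symm ?_
  have hvanish (p : ℕ) (hp : p < n) : Subsingleton (ExtSelf A (ResidualModule I g b n n) p) :=
    subsingleton_ext_of_smul_eq_zero _ (fun q hq hle => S.le_height_of_colon_le hnN hq hle) _
      (fun c hc => S.smul_residualModule_eq_zero H le_rfl hc) hp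
  have hpd : ProjDimLT A (ResidualModule I g b n n) (n + 1) :=
    (S.projDimLT_residualModule H hnN n n le_rfl le_rfl).mono (by omega)
  rcases n with _ | n
  · have : Module.Projective A (ResidualModule I g b 0 0) := projDimLT_one_iff_projective.1 hpd
    have : Module.Projective A (ExtSelf A (ResidualModule I g b 0 0) 0) := projective_extSelf_zero
    exact ProjDimLT.of_projective _
  · have := hvanish 0 n.succ_pos
    exact (hpd.extSelf_succ n 0 _ (fun p _ hp => hvanish p hp) (.of_subsingleton _ 0)).mono
      (by omega)

theorem projDimLT_quotient_initIdeal (S : IsResidualSequence I g b N) (i : ℕ) :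
    i ≤ N → ProjDimLT A (A ⧸ initIdeal b i) (i + 1) := by
  induction i using Nat.strong_induction_on with
  | h i ih =>
    intro hi
    rcases i with _ | n
    · exact (ProjDimLT.of_projective A).of_linearEquiv
        (Submodule.quotEquivOfEqBot _ (initIdeal_zero b)).symm
    · have H : AssHeightLE b n := fun i hi p hp h =>
        height_le_of_projDimLT_quotient (ih i (by omega) (by omega)) h
      rw [initIdeal_succ]
      refine (S.projDimLT_quotient_colon H (by omega)).quotient_sup_span_singleton (fun x => ?_)
        ((ih n n.lt_succ_self (by omega)).mono (by omega))
      exact ⟨S.mem_colon_of_mul_mem H le_rfl hi, fun hx =>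
        mul_comm x (b n) ▸ mem_colon_coe.1 hx _ (S.mem n)⟩

theorem height_le_of_isColonOfMem_colon (S : IsResidualSequence I g b N) {p : Ideal A} [p.IsPrime]
    (hp : IsColonOfMem ((initIdeal b N).colon (I : Set A)) ⊤ p) : p.height ≤ N :=
  height_le_of_projDimLT_quotient (S.projDimLT_quotient_colon (fun i hi _ _ h =>
    height_le_of_projDimLT_quotient (S.projDimLT_quotient_initIdeal i hi) h) le_rfl) hp

end IsResidualSequence

end ResidualDuality

section LocalContraction

variable {A : Type u} [CommRing A] {q X Y Z T I : Ideal A} [q.IsPrime]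

/-- The ideal `Z A_q ∩ A`. Relations `T ≤ localContraction q Z` express that `T A_q ⊆ Z A_q`. -/
def localContraction (q : Ideal A) [q.IsPrime] (Z : Ideal A) : Ideal A :=
  (Z.map (algebraMap A (Localization.AtPrime q))).comap (algebraMap A (Localization.AtPrime q))

theorem mem_localContraction {z : A} : z ∈ localContraction q Z ↔ ∃ h ∉ q, h * z ∈ Z :=
  IsLocalization.algebraMap_mem_map_algebraMap_iff q.primeCompl _ Z z

theorem localContraction_mono (h : Y ≤ Z) : localContraction q Y ≤ localContraction q Z :=
  Ideal.comap_mono (Ideal.map_mono h)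

theorem le_localContraction : Z ≤ localContraction q Z := Ideal.le_comap_map

theorem localContraction_le_of_le (h : Y ≤ localContraction q Z) :
    localContraction q Y ≤ localContraction q Z :=
  Ideal.comap_mono (Ideal.map_le_iff_le_comap.2 h)

variable [IsNoetherianRing A]

theorem exists_notMem_forall_mul_mem_of_le (h : T ≤ localContraction q Z) :
    ∃ c ∉ q, ∀ z ∈ T, c * z ∈ Z :=
  exists_notMem_forall_mul_mem T Z fun _ hz => mem_localContraction.1 (h hz)

theorem le_localContraction_of_le_sup_mul (h : Y ≤ localContraction q (X ⊔ q * Y)) :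
    Y ≤ localContraction q X := by
  rw [localContraction, ← Ideal.map_le_iff_le_comap, Ideal.map_sup, Ideal.map_mul] at h
  refine Ideal.map_le_iff_le_comap.1 (Submodule.le_of_le_smul_of_le_jacobson_bot
    (IsNoetherian.noetherian _) ?_ h)
  rw [IsLocalRing.jacobson_eq_maximalIdeal _ bot_ne_top, Localization.AtPrime.map_eq_maximalIdeal]

end LocalContraction

section PrimeAvoidance

variable {A : Type u} [CommRing A]

/-- Over an infinite field a vector space is not a finite union of proper subspaces, so prime
avoidance holds for arbitrary ideals. -/
theorem exists_mem_forall_notMem (k : Type v) [Field k] [Infinite k] [Algebra k A] (J : Ideal A)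
    {F : Set (Ideal A)} (hF : F.Finite) (h : ∀ P ∈ F, ¬ J ≤ P) : ∃ x ∈ J, ∀ P ∈ F, x ∉ P := by
  classical
  let trace (P : Ideal A) : Subspace k J := (Submodule.comap J.subtype P).restrictScalars k
  have htop : ⊤ ∉ hF.toFinset.image trace := fun ht => by
    obtain ⟨P, hP, he⟩ := Finset.mem_image.1 ht
    refine h P (hF.mem_toFinset.1 hP) fun x hx => ?_
    have hmem : (⟨x, hx⟩ : J) ∈ trace P := he ▸ Submodule.mem_top
    exact hmem
  obtain ⟨x, hx⟩ := (Set.ne_univ_iff_exists_notMem _).1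
    (Subspace.biUnion_ne_univ_of_top_notMem htop)
  exact ⟨x, x.2, fun P hP hxP => hx <| Set.mem_iUnion₂.2
    ⟨trace P, Finset.mem_image_of_mem _ (hF.mem_toFinset.2 hP), hxP⟩⟩

theorem finite_setOf_isColonOfMem_top [IsNoetherianRing A] (X : Ideal A) :
    {p : Ideal A | p.IsPrime ∧ IsColonOfMem X ⊤ p}.Finite := by
  refine (associatedPrimes.finite A (A ⧸ X)).subset ?_
  rintro p ⟨hp, y, -, hy⟩
  refine isAssociatedPrime_iff.2 ⟨hp, Ideal.Quotient.mk X y, Ideal.ext fun r => ?_⟩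
  rw [← hy, Submodule.mem_colon_singleton, Submodule.mem_bot, ← Ideal.Quotient.eq_zero_iff_mem,
    map_mul, Algebra.smul_def, Ideal.Quotient.algebraMap_eq]

end PrimeAvoidance

section GeneratedAt

variable {A : Type u} [CommRing A] {q X Y T I : Ideal A} [q.IsPrime] {c : ℕ}

/-- Locally at `q`, the ideal `T` is generated modulo `Y` by at most `c` of its elements. -/
def GeneratedAt (q : Ideal A) [q.IsPrime] (T Y : Ideal A) (c : ℕ) : Prop :=
  ∃ s : Finset A, s.card ≤ c ∧ (s : Set A) ⊆ T ∧ T ≤ localContraction q (Y ⊔ Ideal.span s)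

theorem GeneratedAt.mono {c' : ℕ} (h : GeneratedAt q T X c) (hX : X ≤ Y) (hc : c ≤ c') :
    GeneratedAt q T Y c' := by
  obtain ⟨s, hs, hsT, hT⟩ := h
  exact ⟨s, hs.trans hc, hsT, hT.trans (localContraction_mono (sup_le_sup_right hX _))⟩

theorem generatedAt_zero_iff : GeneratedAt q T Y 0 ↔ T ≤ localContraction q Y := by
  simp [GeneratedAt]

theorem exists_mem_localContraction_erase [DecidableEq A] {s : Finset A} (hsI : (s : Set A) ⊆ I)
    {b : A} (hb : b ∈ localContraction q (Y ⊔ Ideal.span s))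
    (hb' : b ∉ localContraction q (Y ⊔ q * I)) :
    ∃ a ∈ s, a ∈ localContraction q (Y ⊔ Ideal.span {b} ⊔ Ideal.span (s.erase a : Set A)) := by
  obtain ⟨h, hh, hbs⟩ := mem_localContraction.1 hb
  obtain ⟨x, hx, v, hv, he⟩ := Submodule.mem_sup.1 hbs
  obtain ⟨f, -, rfl⟩ := Submodule.mem_span_finset.1 hv
  obtain ⟨a, ha, hfa⟩ : ∃ a ∈ s, f a ∉ q := by
    by_contra! hf
    refine hb' (mem_localContraction.2 ⟨h, hh, he ▸ Submodule.add_mem_sup hx ?_⟩)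
    exact Submodule.sum_mem _ fun a ha => Ideal.mul_mem_mul (hf a ha) (hsI ha)
  refine ⟨a, ha, mem_localContraction.2 ⟨f a, hfa, ?_⟩⟩
  rw [← Finset.add_sum_erase s _ ha, smul_eq_mul] at he
  rw [show f a * a = h * b - x - ∑ y ∈ s.erase a, f y • y by rw [← he]; ring]
  refine sub_mem (Submodule.mem_sup_left (sub_mem (Submodule.mem_sup_right ?_)
    (Submodule.mem_sup_left hx))) (Submodule.mem_sup_right ?_)
  · exact Ideal.mul_mem_left _ _ (Ideal.mem_span_singleton_self b)
  · exact Submodule.sum_mem _ fun y hy => Ideal.mul_mem_left _ _ (Ideal.subset_span hy)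

theorem GeneratedAt.sup_span_singleton (h : GeneratedAt q T Y c) (hTI : T ≤ I) {b : A}
    (hb : b ∈ T) (hb' : b ∉ localContraction q (Y ⊔ q * I)) :
    GeneratedAt q T (Y ⊔ Ideal.span {b}) (c - 1) := by
  classical
  obtain ⟨s, hs, hsT, hT⟩ := h
  obtain ⟨a, ha, haZ⟩ := exists_mem_localContraction_erase (hsT.trans hTI) (hT hb) hb'
  refine ⟨s.erase a, by rw [Finset.card_erase_of_mem ha]; omega,
    (Finset.coe_subset.2 (s.erase_subset a)).trans hsT, hT.trans (localContraction_le_of_le ?_)⟩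
  refine sup_le ((le_sup_left.trans le_sup_left).trans le_localContraction)
    (Ideal.span_le.2 fun y hy => ?_)
  by_cases hya : y = a
  · exact hya ▸ haZ
  · exact le_localContraction (Submodule.mem_sup_right
      (Ideal.subset_span (Finset.mem_erase.2 ⟨hya, hy⟩)))

end GeneratedAt

section GeneralElements

variable {A : Type u} [CommRing A] {I J a p q : Ideal A} {N i c : ℕ}

theorem IsReduction.le_of_le_isPrime (h : IsReduction J I) [hp : p.IsPrime] (hJ : J ≤ p) :
    I ≤ p := by
  obtain ⟨-, r, hr⟩ := h
  exact hp.le_of_pow_le (hr.trans_le (Ideal.mul_le_left.trans hJ))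

/-- At the primes `p ⊇ I` of height at most `N`, the ideal `I` is generated modulo `a` by
`ht p - i` elements. For `a = 0` and `i = 0` this is the condition `G_{N+1}`; it is preserved when
a general element is added to `a` and `i` is increased by one. -/
def GeneratedByHeight (I a : Ideal A) (N i : ℕ) : Prop :=
  ∀ (p : Ideal A) [p.IsPrime], I ≤ p → ∀ t : ℕ, p.height = t → t ≤ N → GeneratedAt p I a (t - i)

/-- The ideal of `I` and `a` cutting out the primes at which `I` is not generated modulo `a` by
`c` elements; it plays the role of a Fitting ideal. -/
def generationIdeal (I a : Ideal A) (c : ℕ) : Ideal A :=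
  Ideal.span {h | ∃ s : Finset A, s.card ≤ c ∧ (s : Set A) ⊆ I ∧
    ∀ z ∈ I, h * z ∈ a ⊔ Ideal.span (s : Set A)}

/-- The generic points of the loci in `V(I)` where `I` is not generated modulo `a` by `c`
elements, for `c < N`. -/
def criticalPrimes (I a : Ideal A) (N : ℕ) : Set (Ideal A) :=
  ⋃ c < N, (generationIdeal I a c ⊔ I).minimalPrimes

theorem isPrime_of_mem_criticalPrimes (h : p ∈ criticalPrimes I a N) : p.IsPrime := by
  obtain ⟨c, -, hp⟩ := Set.mem_iUnion₂.1 h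
  exact hp.1.1

variable [IsNoetherianRing A]

theorem finite_criticalPrimes (I a : Ideal A) (N : ℕ) : (criticalPrimes I a N).Finite :=
  (Set.finite_lt_nat N).biUnion fun _ _ => Ideal.finite_minimalPrimes_of_isNoetherianRing A _

theorem generatedAt_iff_not_generationIdeal_le [q.IsPrime] :
    GeneratedAt q I a c ↔ ¬ generationIdeal I a c ≤ q := by
  rw [generationIdeal, Ideal.span_le, Set.not_subset]
  constructor
  · rintro ⟨s, hs, hsI, hI⟩
    obtain ⟨h, hh, hz⟩ := exists_notMem_forall_mul_mem_of_le hI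
    exact ⟨h, ⟨s, hs, hsI, hz⟩, hh⟩
  · rintro ⟨h, ⟨s, hs, hsI, hz⟩, hh⟩
    exact ⟨s, hs, hsI, fun z hzI => mem_localContraction.2 ⟨h, hh, hz z hzI⟩⟩

theorem GeneratedByHeight.mem_criticalPrimes (h : GeneratedByHeight I a N i) [hp : p.IsPrime]
    (hIp : I ≤ p) {t : ℕ} (ht : p.height = t) (htN : t ≤ N) (hit : i < t)
    (hgen : ¬ GeneratedAt p I a (t - (i + 1))) : p ∈ criticalPrimes I a N := by
  refine Set.mem_iUnion₂.2 ⟨t - (i + 1), by omega, ⟨hp, sup_le ?_ hIp⟩, ?_⟩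
  · by_contra hle
    exact hgen (generatedAt_iff_not_generationIdeal_le.2 hle)
  rintro p' ⟨hp', hle⟩ hp'p
  by_contra hne
  have hlt := Ideal.height_add_one_le_of_lt_of_isPrime (lt_of_le_not_ge hp'p hne)
  obtain ⟨t', ht'⟩ := ENat.ne_top_iff_exists.1
    (ne_top_of_le_ne_top (ENat.natCast_ne_top t) (le_self_add.trans (hlt.trans_eq ht)))
  rw [ht, ← ht'] at hlt
  norm_cast at hlt
  have hgen' := (h p' (le_sup_right.trans hle) t' ht'.symm (by omega)).mono le_rfl
    (show t' - i ≤ t - (i + 1) by omega)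
  exact generatedAt_iff_not_generationIdeal_le.1 hgen' (le_sup_left.trans hle)

theorem not_le_localContraction_of_not_colon_le [hp : p.IsPrime]
    (hJ : ¬ J.colon (I : Set A) ≤ p) (hI : ¬ I ≤ localContraction p a) :
    ¬ J ≤ localContraction p (a ⊔ p * I) := by
  intro hle
  obtain ⟨c, hc, hcp⟩ := SetLike.not_le_iff_exists.1 hJ
  refine hI (le_localContraction_of_le_sup_mul fun z hz => mem_localContraction.2 ?_)
  obtain ⟨h, hh, hmem⟩ := mem_localContraction.1 (hle (mem_colon_coe.1 hc z hz))
  exact ⟨h * c, fun hm => (hp.mem_or_mem hm).elim hh hcp, by rwa [mul_assoc]⟩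

/-- An element `x` of the reduction `J` of `I` which is general relative to the ideal `a`: it avoids
the associated primes of `a` not containing `I`, and at the critical primes and at `q` it is part of
a minimal system of generators of `I` modulo `a` whenever some element of `J` is. -/
structure IsGeneralElement (I J a : Ideal A) (N : ℕ) (q : Ideal A) (x : A) : Prop where
  mem : x ∈ J
  le_of_mem : ∀ p : Ideal A, p.IsPrime → IsColonOfMem a ⊤ p → x ∈ p → I ≤ p
  notMem : ∀ (p : Ideal A) [p.IsPrime], p ∈ insert q (criticalPrimes I a N) →
    ¬ J ≤ localContraction p (a ⊔ p * I) → x ∉ localContraction p (a ⊔ p * I)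

theorem exists_isGeneralElement (k : Type v) [Field k] [Infinite k] [Algebra k A]
    (hJ : IsReduction J I) (a : Ideal A) (N : ℕ) [hq : q.IsPrime] :
    ∃ x, IsGeneralElement I J a N q x := by
  have := ((finite_criticalPrimes I a N).insert q).to_subtype
  have (p : ↥(insert q (criticalPrimes I a N))) : p.1.IsPrime :=
    p.2.elim (fun h => by rwa [h]) isPrime_of_mem_criticalPrimes
  let D (p : ↥(insert q (criticalPrimes I a N))) : Ideal A := localContraction p.1 (a ⊔ p.1 * I)
  obtain ⟨x, hxJ, hx⟩ := exists_mem_forall_notMem k J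
    (((finite_setOf_isColonOfMem_top a).union (Set.finite_range D)).subset
      (Set.sep_subset _ fun P => ¬ J ≤ P)) fun P hP => hP.2
  refine ⟨x, hxJ, fun p hp hass hxp => ?_, fun p hp hmem hle => hx _ ⟨Or.inr ⟨⟨p, hmem⟩, rfl⟩, hle⟩⟩
  by_contra hI
  exact hx p ⟨Or.inl ⟨hp, hass⟩, fun h => hI (hJ.le_of_le_isPrime h)⟩ hxp

theorem GeneratedByHeight.sup_span_singleton (h : GeneratedByHeight I a N i) (hJ : J ≤ I)
    (hcolon : ∀ p : Ideal A, p.IsPrime → I ≤ p → p.height ≤ N → ¬ J.colon (I : Set A) ≤ p)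
    {x : A} (hx : IsGeneralElement I J a N q x) :
    GeneratedByHeight I (a ⊔ Ideal.span {x}) N (i + 1) := by
  intro p hp hIp t ht htN
  by_cases hgen : GeneratedAt p I a (t - (i + 1))
  · exact hgen.mono le_sup_left le_rfl
  have hit : i < t := by
    by_contra! hit
    exact hgen ((h p hIp t ht htN).mono le_rfl (by omega))
  have hnle : ¬ J ≤ localContraction p (a ⊔ p * I) :=
    not_le_localContraction_of_not_colon_le (hcolon p hp hIp (ht ▸ by exact_mod_cast htN))
      fun hle => hgen ((generatedAt_zero_iff.2 hle).mono le_rfl (Nat.zero_le _))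
  exact (h p hIp t ht htN).sup_span_singleton le_rfl (hJ hx.mem)
    (hx.notMem p (Or.inr (h.mem_criticalPrimes hIp ht htN hit hgen)) hnle)

end GeneralElements

section GeneralSequences

variable {A : Type u} [CommRing A] {I J q : Ideal A} {N : ℕ}

theorem exists_forall_initIdeal {P : Ideal A → A → Prop} (h : ∀ a, ∃ x, P a x) :
    ∃ b : ℕ → A, ∀ i, P (initIdeal b i) (b i) := by
  choose x hx using h
  let a (i : ℕ) : Ideal A := Nat.rec ⊥ (fun _ a => a ⊔ Ideal.span {x a}) i
  have ha (i : ℕ) : initIdeal (fun i => x (a i)) i = a i := by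
    induction i with
    | zero => exact initIdeal_zero _
    | succ i ih => rw [initIdeal_succ, ih]
  exact ⟨fun i => x (a i), fun i => by rw [ha]; exact hx _⟩

theorem initIdeal_le {b : ℕ → A} (hb : ∀ i, b i ∈ J) (i : ℕ) : initIdeal b i ≤ J :=
  Ideal.span_le.2 (Set.image_subset_iff.2 fun j _ => hb j)

variable {b : ℕ → A}

theorem generatedByHeight_initIdeal [IsNoetherianRing A] (hJ : J ≤ I)
    (hG : GeneratedByHeight I ⊥ N 0)
    (hcolon : ∀ p : Ideal A, p.IsPrime → I ≤ p → p.height ≤ N → ¬ J.colon (I : Set A) ≤ p)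
    (hb : ∀ i, IsGeneralElement I J (initIdeal b i) N q (b i)) (i : ℕ) :
    GeneratedByHeight I (initIdeal b i) N i := by
  induction i with
  | zero => rwa [initIdeal_zero]
  | succ i ih => rw [initIdeal_succ]; exact ih.sup_span_singleton hJ hcolon (hb i)

theorem le_localContraction_initIdeal [q.IsPrime] {T Y : Ideal A} {c : ℕ} (hJT : J ≤ T)
    (hTI : T ≤ I) (hY : Y ≤ q * I) (hgen : GeneratedAt q T Y c)
    (hb : ∀ i, IsGeneralElement I J (initIdeal b i) N q (b i)) (i : ℕ) :
    J ≤ localContraction q (initIdeal b i ⊔ q * I) ∨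
      GeneratedAt q T (initIdeal b i ⊔ Y) (c - i) := by
  induction i with
  | zero => right; rwa [initIdeal_zero, bot_sup_eq]
  | succ i ih =>
    by_cases hle : J ≤ localContraction q (initIdeal b i ⊔ q * I)
    · exact Or.inl (hle.trans (localContraction_mono (sup_le_sup_right (initIdeal_le_succ b i) _)))
    right
    have hnot := (hb i).notMem q (Set.mem_insert _ _) hle
    have hdrop := (ih.resolve_left hle).sup_span_singleton hTI (hJT (hb i).mem) (b := b i)
      (by rwa [sup_assoc, sup_eq_right.2 hY])
    rwa [sup_right_comm, ← initIdeal_succ, Nat.sub_sub] at hdrop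

end GeneralSequences

section ColonHeight

variable {A : Type u} [CommRing A] {I J q : Ideal A} {N g : ℕ}

theorem exists_notMem_forall_mul_mem_pow_of_le_localContraction [IsNoetherianRing A] [q.IsPrime]
    (hJ : IsReduction J I) {a : Ideal A} (h : J ≤ localContraction q (a ⊔ q * I)) :
    ∃ r, ∃ c ∉ q, ∀ y ∈ I ^ (r + 1), c * y ∈ a * I ^ r := by
  obtain ⟨-, r, hr⟩ := hJ
  obtain ⟨c, hc, hcJ⟩ := exists_notMem_forall_mul_mem_of_le h
  refine ⟨r, exists_notMem_forall_mul_mem_of_le (le_localContraction_of_le_sup_mul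
    fun y hy => mem_localContraction.2 ⟨c, hc, ?_⟩)⟩
  have hsup : a * I ^ r ⊔ q * I ^ (r + 1) = (a ⊔ q * I) * I ^ r := by
    rw [Ideal.sup_mul, mul_assoc, pow_succ']
  rw [hr] at hy
  rw [hsup]
  refine Submodule.mul_induction_on hy (fun m hm n hn => ?_) fun x y hx hy => ?_
  · rw [← mul_assoc]
    exact Ideal.mul_mem_mul (hcJ m hm) hn
  · rw [mul_add]
    exact add_mem hx hy

theorem le_of_colon_le_of_le_localContraction [IsNoetherianRing A] [q.IsPrime]
    (hJ : IsReduction J I) {a : Ideal A} (h : J ≤ localContraction q (a ⊔ q * I)) {p : Ideal A}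
    [hp : p.IsPrime] (hap : a.colon (I : Set A) ≤ p) (hpq : p ≤ q) : I ≤ p := by
  obtain ⟨r, c, hc, hcI⟩ := exists_notMem_forall_mul_mem_pow_of_le_localContraction hJ h
  refine hp.le_of_pow_le (n := r + 1) fun y hy => ?_
  have hmem : c * y ∈ p := hap <| mem_colon_coe.2 fun u _ =>
    Ideal.mul_mem_right _ _ (Ideal.mul_le_left (hcI y hy))
  exact (hp.mem_or_mem hmem).resolve_left fun h => hc (hpq h)

theorem isResidualSequence_of_isGeneralElement [IsNoetherianRing A] (hJ : J ≤ I) (hg : 1 ≤ g)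
    (hI : ∀ p : Ideal A, p.IsPrime → I ≤ p → (g : ℕ∞) ≤ p.height)
    (hpow : ∀ j ≤ N, ProjDimLT A ↥(I ^ (j + 1 - g)) (max j 1))
    (hG : GeneratedByHeight I ⊥ N 0)
    (hcolon : ∀ p : Ideal A, p.IsPrime → I ≤ p → p.height ≤ N → ¬ J.colon (I : Set A) ≤ p)
    {b : ℕ → A} (hb : ∀ i, IsGeneralElement I J (initIdeal b i) N q (b i)) :
    IsResidualSequence I g b N where
  one_le := hg
  le_height := hI
  mem i := hJ (hb i).mem
  projDimLT_pow := hpow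
  not_colon_le i hi p hp hIp hpi hle := by
    obtain ⟨t, ht⟩ := ENat.ne_top_iff_exists.1
      (ne_top_of_le_ne_top (ENat.natCast_ne_top i) hpi)
    have hti : t ≤ i := by exact_mod_cast ht.trans_le hpi
    have hgen := generatedByHeight_initIdeal hJ hG hcolon hb i p hIp t ht.symm (hti.trans hi)
    rw [Nat.sub_eq_zero_of_le hti, generatedAt_zero_iff] at hgen
    obtain ⟨c, hc, hcI⟩ := exists_notMem_forall_mul_mem_of_le hgen
    exact hc (hle (mem_colon_coe.2 hcI))
  le_of_mem i _ := (hb i).le_of_mem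

theorem le_localContraction_of_generatedAt [IsNoetherianRing A] [q.IsPrime] (hJ : J ≤ I)
    (hq : J.colon (I : Set A) ≤ q)
    (hgen : GeneratedAt q J (q * I) N ∨ GeneratedAt q I ⊥ (N + 1)) {b : ℕ → A}
    (hb : ∀ i, IsGeneralElement I J (initIdeal b i) N q (b i)) :
    J ≤ localContraction q (initIdeal b N ⊔ q * I) := by
  rcases hgen with hgen | hgen
  · refine (le_localContraction_initIdeal le_rfl hJ le_rfl hgen hb N).elim id fun h => ?_
    exact generatedAt_zero_iff.1 (by rwa [Nat.sub_self] at h)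
  · by_contra hle
    have hlast := ((le_localContraction_initIdeal hJ le_rfl bot_le hgen hb N).resolve_left
      hle).sup_span_singleton le_rfl (hJ (hb N).mem)
        (by rw [sup_bot_eq]; exact (hb N).notMem q (Set.mem_insert _ _) hle)
    rw [Nat.add_sub_cancel_left, Nat.sub_self, generatedAt_zero_iff, sup_bot_eq,
      ← initIdeal_succ] at hlast
    obtain ⟨c, hc, hcI⟩ := exists_notMem_forall_mul_mem_of_le hlast
    exact hc (hq (mem_colon_coe.2 fun u hu => initIdeal_le (fun i => (hb i).mem) _ (hcI u hu)))

/-- Suppose `J : I ⊆ q`, and let `K = (b₀, …, b_{N-1}) : I` for a general sequence in `J`. The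
reduction property forces every prime between `K` and `q` to contain `I`. A minimal one is an
associated prime of the residual intersection `K`, hence has height at most `N`; but no prime of
height at most `N` contains `I + K`. -/
theorem not_colon_le_of_generatedAt [IsRegularRing A] [IsLocalRing A] (k : Type v) [Field k]
    [Infinite k] [Algebra k A] (hJ : IsReduction J I) (hg : 1 ≤ g)
    (hI : ∀ p : Ideal A, p.IsPrime → I ≤ p → (g : ℕ∞) ≤ p.height)
    (hpow : ∀ j ≤ N, ProjDimLT A ↥(I ^ (j + 1 - g)) (max j 1))
    (hG : GeneratedByHeight I ⊥ N 0)
    (hcolon : ∀ p : Ideal A, p.IsPrime → I ≤ p → p.height ≤ N → ¬ J.colon (I : Set A) ≤ p)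
    [q.IsPrime]
    (hgen : GeneratedAt q J (q * I) N ∨ GeneratedAt q I ⊥ (N + 1)) :
    ¬ J.colon (I : Set A) ≤ q := by
  intro hq
  obtain ⟨b, hb⟩ := exists_forall_initIdeal fun a =>
    exists_isGeneralElement k hJ a N (q := q)
  have S := isResidualSequence_of_isGeneralElement hJ.1 hg hI hpow hG hcolon hb
  have hKq : (initIdeal b N).colon (I : Set A) ≤ q := fun x hx => hq <| mem_colon_coe.2
    fun u hu => initIdeal_le (fun i => (hb i).mem) N (mem_colon_coe.1 hx u hu)
  obtain ⟨p, hpmin, hpq⟩ := Ideal.exists_minimalPrimes_le hKq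
  have hp : p.IsPrime := hpmin.1.1
  have hIp : I ≤ p := le_of_colon_le_of_le_localContraction hJ
    (le_localContraction_of_generatedAt hJ.1 hq hgen hb) hpmin.1.2 hpq
  have hpN : p.height ≤ N :=
    S.height_le_of_isColonOfMem_colon (isColonOfMem_of_mem_minimalPrimes hpmin)
  exact S.not_colon_le N le_rfl p hp hIp hpN hpmin.1.2

end ColonHeight

section PrimeQuotientDimension

open RingTheory.Sequence Pointwise

variable {A : Type u} [CommRing A] [IsNoetherianRing A]

theorem length_le_height_of_isWeaklyRegular {c : List A} (hc : IsWeaklyRegular A c) {p : Ideal A}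
    [p.IsPrime] (hcp : ∀ x ∈ c, x ∈ p) : (c.length : ℕ∞) ≤ p.height := by
  have hreg := hc.isRegular_of_isLocalization_of_mem (Localization.AtPrime p) p hcp
  have hdim := ringKrullDim_add_length_eq_ringKrullDim_of_isRegular _ hreg
  rw [IsLocalization.AtPrime.ringKrullDim_eq_height p (Localization.AtPrime p),
    List.length_map] at hdim
  have : Nontrivial (Localization.AtPrime p ⧸ Ideal.ofList (c.map (algebraMap A _))) :=
    Ideal.Quotient.nontrivial_iff.2 fun h => hreg.top_ne_smul (by simp [h])
  refine WithBot.coe_le_coe.1 (hdim ▸ ?_)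
  exact le_add_of_nonneg_left ringKrullDim_nonneg_of_nontrivial

variable [IsLocalRing A]

/-- Take a nonzero `w` killed by `p` and outside `xM`; it exists by Nakayama, because the elements
killed by `p` that lie in `xM` are `x` times elements killed by `p`. -/
theorem exists_mem_associatedPrimes_quotSMulTop {M : Type v} [AddCommGroup M] [Module A M]
    [Module.Finite A M] {x : A} (hx : x ∈ maximalIdeal A) (hreg : IsSMulRegular M x) {p : Ideal A}
    (hp : p ∈ associatedPrimes A M) :
    ∃ p' ∈ associatedPrimes A (QuotSMulTop x M), p ≤ p' ∧ x ∈ p' := by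
  obtain ⟨hprime, m, hm⟩ := isAssociatedPrime_iff.1 (hp : IsAssociatedPrime p M)
  let H : Submodule A M := Submodule.torsionBySet A M p
  have hHne : H ≠ ⊥ := fun hH => hprime.ne_top <| (Ideal.eq_top_iff_one p).2 <| by
    have hmH : m ∈ H := (Submodule.mem_torsionBySet_iff _ _).2 fun r => by
      simpa [hm] using r.2
    rw [hH, Submodule.mem_bot] at hmH
    simp [hm, hmH]
  have hHx : ¬ H ≤ x • (⊤ : Submodule A M) := fun hle => hHne <|
    Submodule.eq_bot_of_le_smul_of_le_jacobson_bot (maximalIdeal A) H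
      (IsNoetherian.noetherian H) (fun z hz => by
        obtain ⟨n, -, rfl⟩ := hle hz
        refine Submodule.smul_mem_smul hx ((Submodule.mem_torsionBySet_iff _ _).2 fun r =>
          hreg.right_eq_zero_of_smul ?_)
        rw [smul_comm]
        exact (Submodule.mem_torsionBySet_iff _ _).1 hz r)
      (by rw [IsLocalRing.jacobson_eq_maximalIdeal _ bot_ne_top])
  obtain ⟨w, hwH, hw⟩ := SetLike.not_le_iff_exists.1 hHx
  obtain ⟨p', hp', hle⟩ := exists_le_isAssociatedPrime_of_isNoetherianRing A
    (Submodule.Quotient.mk w : QuotSMulTop x M) (by rwa [Ne, Submodule.Quotient.mk_eq_zero])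
  refine ⟨p', hp', fun r hr => hle ?_, hle ?_⟩
  · rw [Submodule.mem_colon_singleton, ← Submodule.Quotient.mk_smul,
      (Submodule.mem_torsionBySet_iff _ _).1 hwH ⟨r, hr⟩, Submodule.Quotient.mk_zero]
    exact zero_mem _
  · rw [Submodule.mem_colon_singleton, ← Submodule.Quotient.mk_smul, Submodule.mem_bot,
      Submodule.Quotient.mk_eq_zero]
    exact Submodule.smul_mem_pointwise_smul _ _ _ trivial

theorem length_le_ringKrullDim_quotient_of_mem_associatedPrimes {rs : List A}
    (hrs : ∀ x ∈ rs, x ∈ maximalIdeal A) {M : Type v} [AddCommGroup M] [Module A M]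
    [Module.Finite A M] (hreg : IsWeaklyRegular M rs) {p : Ideal A}
    (hp : p ∈ associatedPrimes A M) : (rs.length : WithBot ℕ∞) ≤ ringKrullDim (A ⧸ p) := by
  induction rs generalizing M p with
  | nil =>
    have := Ideal.Quotient.nontrivial_iff.2 (hp : IsAssociatedPrime p M).isPrime.ne_top
    exact ringKrullDim_nonneg_of_nontrivial
  | cons x rs ih =>
    obtain ⟨hx, hreg⟩ := (isWeaklyRegular_cons_iff M x rs).1 hreg
    have := (hp : IsAssociatedPrime p M).isPrime
    obtain ⟨p', hp', hle, hxp'⟩ :=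
      exists_mem_associatedPrimes_quotSMulTop (hrs x List.mem_cons_self) hx hp
    have hxp : x ∉ p := by
      obtain ⟨hprime, m, hm⟩ := isAssociatedPrime_iff.1 (hp : IsAssociatedPrime p M)
      rintro hxp
      have hm0 : m = 0 := hx.right_eq_zero_of_smul (by simpa [hm] using hxp)
      exact hprime.ne_top ((Ideal.eq_top_iff_one p).2 (by simp [hm, hm0]))
    have hdrop := ringKrullDim_succ_le_of_surjective (Ideal.Quotient.factor hle)
      (Ideal.Quotient.factor_surjective hle) (r := Ideal.Quotient.mk p x)
      (by rwa [mem_nonZeroDivisors_iff_ne_zero, Ne, Ideal.Quotient.eq_zero_iff_mem])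
      (by rwa [Ideal.Quotient.factor_mk, Ideal.Quotient.eq_zero_iff_mem])
    rw [List.length_cons, Nat.cast_succ]
    exact le_trans (add_le_add_left (ih (fun y hy => hrs y (List.mem_cons_of_mem x hy)) hreg hp') 1)
      hdrop

end PrimeQuotientDimension

theorem le_height_add_ringKrullDim_quotient {A : Type u} [CommRing A] [IsRegularRing A]
    [IsLocalRing A] {d g : ℕ}
    (hd : (maximalIdeal A).height = d) {p : Ideal A} [hp : p.IsPrime] (hg : p.height = g) :
    (d : WithBot ℕ∞) ≤ g + ringKrullDim (A ⧸ p) := by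
  obtain ⟨c, hcp, hreg, hlen⟩ := exists_isWeaklyRegular_of_le_height hp.ne_top
    fun q _ hle => hg ▸ Ideal.height_mono hle
  have hpmin : p ∈ (Ideal.ofList c).minimalPrimes := by
    obtain ⟨p', hp', hle⟩ := Ideal.exists_minimalPrimes_le (Ideal.span_le.2 hcp)
    have := hp'.1.1
    have hheight := length_le_height_of_isWeaklyRegular hreg
      fun x hx => hp'.1.2 (Ideal.subset_span hx)
    rw [hlen, ← hg] at hheight
    rwa [← Ideal.eq_of_le_of_height_le (I := p') (J := p) hle hheight]
  have hass : p ∈ associatedPrimes A (A ⧸ Ideal.ofList c) :=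
    Module.associatedPrimes.minimalPrimes_annihilator_subset_associatedPrimes A _
      (by rwa [Ideal.annihilator_quotient])
  have hgd : g ≤ d := by
    exact_mod_cast hg ▸ hd ▸ Ideal.height_mono (le_maximalIdeal hp.ne_top)
  obtain ⟨c', hc', hreg', hlen'⟩ := exists_isWeaklyRegular_append_of_le_height
    (L := maximalIdeal A) Ideal.IsPrime.ne_top'
    (fun q hq hle => (maximalIdeal.isMaximal A).eq_of_le hq.ne_top hle ▸ hd.ge)
    (fun x hx => le_maximalIdeal hp.ne_top (hcp x hx)) hreg (d - g) (by omega)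
  have hquot := ((quotientSMulTopEquiv (Ideal.ofList c)).isWeaklyRegular_congr c').1
    ((RingTheory.Sequence.isWeaklyRegular_append_iff A c c').1 hreg').2
  have := length_le_ringKrullDim_quotient_of_mem_associatedPrimes hc' hquot hass
  calc (d : WithBot ℕ∞) = g + (d - g : ℕ) := by exact_mod_cast (Nat.add_sub_cancel' hgd).symm
    _ ≤ g + ringKrullDim (A ⧸ p) := by rw [← hlen']; gcongr

section Invariants

open RingTheory.Sequence

variable {A : Type u} [CommRing A] {I : Ideal A} {d g : ℕ}

theorem rDim_localizationAtPrime (p : PrimeSpectrum A) :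
    rDim (Localization.AtPrime p.asIdeal) = (p.asIdeal.height : WithBot ℕ∞) :=
  IsLocalization.AtPrime.ringKrullDim_eq_height _ _

theorem muE_le_iff {M : Type v} [AddCommGroup M] [Module A M] {N : Submodule A M} {t : ℕ} :
    muE N ≤ t ↔ ∃ s : Finset M, s.card ≤ t ∧ Submodule.span A (s : Set M) = N := by
  refine ⟨fun h => ?_, fun ⟨s, hs, h⟩ =>
    le_trans (b := (s.card : ℕ∞)) (sInf_le ⟨s, rfl, h⟩) (Nat.cast_le.2 hs)⟩
  by_contra! hno
  have hlt : ((t + 1 : ℕ) : ℕ∞) ≤ muE N := le_sInf fun n ⟨s, hn, hs⟩ =>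
    hn ▸ Nat.cast_le.2 (Nat.succ_le_of_lt (by by_contra! hst; exact hno s hst hs))
  exact Nat.not_succ_le_self t (by exact_mod_cast hlt.trans h)

theorem ne_bot_of_muE_ne_zero {M : Type v} [AddCommGroup M] [Module A M]
    {N : Submodule A M} (h : muE N ≠ 0) : N ≠ ⊥ := by
  rintro rfl
  exact h (nonpos_iff_eq_zero.1 (muE_le_iff.2 ⟨∅, by simp, by simp⟩))

theorem generatedAt_of_muE_map_le {p : Ideal A} [p.IsPrime] {t : ℕ}
    (h : muE (I.map (algebraMap A (Localization.AtPrime p))) ≤ t) : GeneratedAt p I ⊥ t := by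
  classical
  let φ := algebraMap A (Localization.AtPrime p)
  obtain ⟨s, hs, hspan⟩ := muE_le_iff.1 h
  have hclear : ∀ y ∈ s, ∃ a ∈ I, ∃ v : p.primeCompl, y * φ v = φ a := fun y hy => by
    have hyI : y ∈ I.map φ := hspan ▸ Submodule.subset_span hy
    obtain ⟨⟨a, v⟩, hav⟩ := (IsLocalization.mem_map_algebraMap_iff p.primeCompl _).1 hyI
    exact ⟨a, a.2, v, hav⟩
  choose! a haI v hav using hclear
  refine ⟨s.image a, Finset.card_image_le.trans hs, ?_, fun z hz => ?_⟩
  · simpa [Set.subset_def] using haI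
  have hle : I.map φ ≤ (Ideal.span ((s.image a : Finset A) : Set A)).map φ := by
    rw [← hspan, Submodule.span_le]
    intro y hy
    have hmem : φ (a y) ∈ (Ideal.span ((s.image a : Finset A) : Set A)).map φ :=
      Ideal.mem_map_of_mem _ (Ideal.subset_span (Finset.mem_coe.2 (Finset.mem_image_of_mem a hy)))
    rw [← hav y hy] at hmem
    exact (Ideal.mul_unit_mem_iff_mem _ (IsLocalization.map_units _ (v y))).1 hmem
  obtain ⟨c, hc, hcz⟩ := (IsLocalization.algebraMap_mem_map_algebraMap_iff p.primeCompl _ _ _).1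
    (hle (Ideal.mem_map_of_mem φ hz))
  exact mem_localContraction.2 ⟨c, hc, by rwa [bot_sup_eq]⟩

theorem Gcond.generatedAt (hG : Gcond I d) {p : Ideal A} [hp : p.IsPrime]
    (hIp : I ≤ p) {t : ℕ} (ht : p.height = t) (htd : t < d) : GeneratedAt p I ⊥ t := by
  have h := hG ⟨p, hp⟩ hIp
  rw [rDim_localizationAtPrime] at h
  simp only [ht] at h
  exact generatedAt_of_muE_map_le (WithBot.coe_le_coe.1 (h (by exact_mod_cast htd)))

theorem le_height_of_ht_eq (h : ht I = g) (p : Ideal A) (hp : p.IsPrime) (hIp : I ≤ p) :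
    (g : ℕ∞) ≤ p.height := by
  have hle : ht I ≤ rDim (Localization.AtPrime p) := iInf₂_le (⟨p, hp⟩ : PrimeSpectrum A) hIp
  rw [h, rDim_localizationAtPrime ⟨p, hp⟩] at hle
  exact WithBot.coe_le_coe.1 hle

theorem exists_height_eq_of_ht_eq (h : ht I = g) :
    ∃ p : Ideal A, p.IsPrime ∧ I ≤ p ∧ p.height = g := by
  by_contra! hne
  have hlt : (((g + 1 : ℕ) : ℕ∞) : WithBot ℕ∞) ≤ ht I := le_iInf₂ fun p hIp => by
    rw [rDim_localizationAtPrime]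
    exact WithBot.coe_le_coe.2 (Order.add_one_le_of_lt
      (lt_of_le_of_ne (le_height_of_ht_eq h _ p.2 hIp) (hne _ p.2 hIp).symm))
  rw [h] at hlt
  exact Nat.not_succ_le_self g (by exact_mod_cast hlt)

theorem exists_isWeaklyRegular_of_le_qDepth [IsLocalRing A] {n : ℕ} (hn : n ≤ qDepth A I) :
    ∃ rs : List A, (∀ x ∈ rs, x ∈ maximalIdeal A) ∧ IsWeaklyRegular (A ⧸ I) rs ∧
      n ≤ rs.length := by
  by_contra! hno
  obtain _ | n := n
  · exact absurd (hno [] (by simp) (.nil _ _)) (by simp)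
  have hle : qDepth A I ≤ n := sSup_le fun m ⟨rs, hmem, hreg, hm⟩ =>
    hm ▸ Nat.cast_le.2 (Nat.le_of_lt_succ (hno rs hmem hreg.toIsWeaklyRegular))
  exact Nat.not_succ_le_self n (by exact_mod_cast hn.trans hle)

variable [IsRegularRing A] [IsLocalRing A]

theorem projDimLT_quotient_of_le_qDepth (hd : (maximalIdeal A).height = d) {n c : ℕ}
    (hn : n ≤ qDepth A I) (hc : d + 1 ≤ n + c) : ProjDimLT A (A ⧸ I) c := by
  have : IsRegularLocalRing A := .of_isRegularRing_of_isLocalRing A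
  have hdim : ringKrullDim A = d := by
    rw [← IsLocalRing.maximalIdeal_height_eq_ringKrullDim, hd]
    rfl
  obtain ⟨X, hX, hspan, hlen⟩ := exists_isWeaklyRegular_ofList_eq_maximalIdeal d A hdim
  obtain ⟨rs, hmem, hreg, hrs⟩ := exists_isWeaklyRegular_of_le_qDepth hn
  exact projDimLT_of_isWeaklyRegular hX hspan hreg hmem (by omega)

/-- By the Auslander–Buchsbaum formula, depth `R / I ^ t ≥ dim R / I - t + 1` gives
`pd I ^ t ≤ g + t - 2`. -/
theorem projDimLT_pow_of_le_qDepth (hd : (maximalIdeal A).height = d) (hht : ht I = g)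
    (hdepth : ∀ j : ℕ, 1 ≤ j → j ≤ d - g →
      rDim (A ⧸ I) + 1 ≤ (qDepth A (I ^ j) : WithBot ℕ∞) + (j : WithBot ℕ∞)) {j : ℕ}
    (hj : j + 1 ≤ d) : ProjDimLT A ↥(I ^ (j + 1 - g)) (max j 1) := by
  rcases le_or_gt (j + 1) g with hjg | hjg
  · rw [Nat.sub_eq_zero_of_le hjg, pow_zero, Ideal.one_eq_top]
    exact ((ProjDimLT.of_projective A).mono (le_max_right _ _)).of_linearEquiv
      Submodule.topEquiv.symm
  obtain ⟨t, rfl⟩ : ∃ t, j = g + t := ⟨j - g, by omega⟩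
  rw [show g + t + 1 - g = t + 1 by omega]
  obtain ⟨p, hp, hIp, hpg⟩ := exists_height_eq_of_ht_eq hht
  have hdim : (d : WithBot ℕ∞) + 1 ≤ (g + (t + 1) : ℕ) + (qDepth A (I ^ (t + 1)) : WithBot ℕ∞) := by
    have hle : ringKrullDim (A ⧸ p) ≤ rDim (A ⧸ I) :=
      ringKrullDim_le_of_surjective (Ideal.Quotient.factor hIp)
        (Ideal.Quotient.factor_surjective hIp)
    calc (d : WithBot ℕ∞) + 1
      _ ≤ g + ringKrullDim (A ⧸ p) + 1 := by
        gcongr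
        exact le_height_add_ringKrullDim_quotient hd hpg
      _ ≤ g + (rDim (A ⧸ I) + 1) := by
        rw [add_assoc]
        gcongr
      _ ≤ g + ((qDepth A (I ^ (t + 1)) : WithBot ℕ∞) + (t + 1 : ℕ)) := by
        exact add_le_add_right (hdepth (t + 1) (by omega) (by omega)) _
      _ = _ := by
        push_cast
        ring
  have hdepth' : ((d + 1 - (g + (t + 1)) : ℕ) : ℕ∞) ≤ qDepth A (I ^ (t + 1)) := by
    have h : ((d + 1 : ℕ) : ℕ∞) ≤ (g + (t + 1) : ℕ) + qDepth A (I ^ (t + 1)) := by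
      exact_mod_cast hdim
    rw [ENat.natCast_sub]
    exact tsub_le_iff_left.2 h
  exact ProjDimLT.left_of_exact (f := (I ^ (t + 1)).subtype) (g := (I ^ (t + 1)).mkQ)
    (Submodule.injective_subtype _) (Submodule.mkQ_surjective _) (LinearMap.exact_subtype_mkQ _)
    ((ProjDimLT.of_projective A).mono (le_max_right _ _))
    ((projDimLT_quotient_of_le_qDepth hd hdepth' (c := g + t + 1) (by omega)).mono (by omega))

end Invariants

section Reductions

variable {A : Type u} [CommRing A] [IsRegularRing A] [IsLocalRing A] {I J : Ideal A} {N g : ℕ}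

theorem not_colon_le_of_height_le (k : Type v) [Field k] [Infinite k] [Algebra k A] (hg : 1 ≤ g)
    (hI : ∀ p : Ideal A, p.IsPrime → I ≤ p → (g : ℕ∞) ≤ p.height)
    (hpow : ∀ j ≤ N, ProjDimLT A ↥(I ^ (j + 1 - g)) (max j 1)) (hG : Gcond I (N + 1))
    (hJ : IsReduction J I) (q : Ideal A) (hq : q.IsPrime) (hqN : q.height ≤ N) :
    ¬ J.colon (I : Set A) ≤ q := by
  obtain ⟨n, hn⟩ := ENat.ne_top_iff_exists.1 (ne_top_of_le_ne_top (ENat.natCast_ne_top N) hqN)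
  have hnN : n ≤ N := by exact_mod_cast hn.trans_le hqN
  induction n using Nat.strong_induction_on generalizing q with
  | _ n ih =>
    intro hle
    have hIq : I ≤ q := hJ.le_of_le_isPrime fun x hx =>
      hle (mem_colon_coe.2 fun u _ => Ideal.mul_mem_right _ _ hx)
    have hgn : g ≤ n := by exact_mod_cast (hI q hq hIq).trans_eq hn.symm
    obtain ⟨m, rfl⟩ : ∃ m, n = m + 1 := ⟨n - 1, by omega⟩
    refine not_colon_le_of_generatedAt k (N := m) hJ hg hI (fun j hj => hpow j (by omega))
      (fun p hp hIp t ht htm => hG.generatedAt hIp ht (by omega)) (fun p hp _ hpm => ?_)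
      (.inr (hG.generatedAt hIq hn.symm (by omega))) hle
    obtain ⟨s, hs⟩ := ENat.ne_top_iff_exists.1 (ne_top_of_le_ne_top (ENat.natCast_ne_top m) hpm)
    have hsm : s ≤ m := by exact_mod_cast hs.trans_le hpm
    exact ih s (by omega) p hp (hs.symm.trans_le (Nat.cast_le.2 (by omega))) hs (by omega)

theorem not_generatedAt_maximalIdeal (k : Type v) [Field k] [Infinite k] [Algebra k A] (hg : 1 ≤ g)
    (hI : ∀ p : Ideal A, p.IsPrime → I ≤ p → (g : ℕ∞) ≤ p.height)
    (hpow : ∀ j ≤ N, ProjDimLT A ↥(I ^ (j + 1 - g)) (max j 1)) (hG : Gcond I (N + 1))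
    (hJ : IsReduction J I) (hne : J ≠ I) :
    ¬ GeneratedAt (maximalIdeal A) J (maximalIdeal A * I) N := fun hgen =>
  not_colon_le_of_generatedAt k hJ hg hI hpow
    (fun _ _ hIp _ ht htN => hG.generatedAt hIp ht (by omega))
    (fun p hp _ hpN => not_colon_le_of_height_le k hg hI hpow hG hJ p hp hpN) (.inl hgen)
    (le_maximalIdeal fun htop => hne (le_antisymm hJ.1 fun u hu => by
      simpa using mem_colon_coe.1 (htop ▸ trivial : (1 : A) ∈ J.colon (I : Set A)) u hu))

end Reductions

section HyperplaneIdeal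

theorem map_mem_map_ker_iff {A M N P : Type*} [Ring A] [AddCommGroup M] [AddCommGroup N]
    [AddCommGroup P] [Module A M] [Module A N] [Module A P] {f : M →ₗ[A] N} {g : M →ₗ[A] P}
    {w : M} : f w ∈ (LinearMap.ker g).map f ↔ g w ∈ (LinearMap.ker f).map g := by
  constructor <;> rintro ⟨z, hz, h⟩ <;> exact ⟨w - z, by simp [h], by simp_all⟩

theorem mem_smul_top_pi_iff {A ι : Type*} [CommRing A] [Finite ι] {K : Ideal A} {w : ι → A} :
    w ∈ K • (⊤ : Submodule A (ι → A)) ↔ ∀ i, w i ∈ K := by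
  classical
  cases nonempty_fintype ι
  refine ⟨fun hw i => ?_, fun hw => ?_⟩
  · have h := Submodule.mem_map_of_mem (f := LinearMap.proj (R := A) (φ := fun _ => A) i) hw
    rw [Submodule.map_smul''] at h
    exact Ideal.mul_le_left h
  · rw [pi_eq_sum_univ' w]
    exact Submodule.sum_mem _ fun i _ => Submodule.smul_mem_smul (hw i) trivial

theorem map_smul_top_le {A M : Type*} [CommRing A] [AddCommGroup M] [Module A M] (K : Ideal A)
    (f : M →ₗ[A] A) : (K • (⊤ : Submodule A M)).map f ≤ K := by
  rw [Submodule.map_smul'']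
  exact Ideal.mul_le_left

theorem mem_span_range_iff_exists_linearCombination {A ι : Type*} [CommRing A] [Fintype ι]
    {a : ι → A} {y : A} :
    y ∈ Ideal.span (Set.range a) ↔ ∃ w, Fintype.linearCombination A a w = y :=
  Submodule.mem_span_range_iff_exists_fun A

theorem map_linearCombination_smul_top {A ι : Type*} [CommRing A] [Fintype ι] (K : Ideal A)
    (a : ι → A) : (K • (⊤ : Submodule A (ι → A))).map (Fintype.linearCombination A a) =
      K * Ideal.span (Set.range a) := by
  rw [Submodule.map_smul'', Submodule.map_top, Fintype.range_linearCombination]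
  rfl

variable {k A ι : Type*} [Field k] [CommRing A] [Algebra k A] [Fintype ι] {a : ι → A} {l : ι → k}

variable (A l) in
/-- The linear form on `A ^ ι` with constant coefficients `l`. -/
noncomputable def constForm : (ι → A) →ₗ[A] A :=
  Fintype.linearCombination A (algebraMap k A ∘ l)

variable (a l) in
/-- The ideal of all combinations `∑ i, w i * a i` of the generators `a` whose coefficient vector
`w` lies in the hyperplane `∑ i, l i * w i = 0`. -/
noncomputable def hyperplaneIdeal : Ideal A :=
  (LinearMap.ker (constForm A l)).map (Fintype.linearCombination A a)

variable (a l) in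
/-- The ideal of all values `∑ i, l i * z i` on syzygies `z` of `a`, that is, the ideal generated by
the entries of `lᵀ φ` when `φ` is a presentation matrix. -/
noncomputable def syzygyValueIdeal : Ideal A :=
  (LinearMap.ker (Fintype.linearCombination A a)).map (constForm A l)

theorem constForm_apply (w : ι → A) : constForm A l w = ∑ i, l i • w i := by
  simp only [constForm, Fintype.linearCombination_apply, Function.comp_apply, smul_eq_mul,
    Algebra.smul_def, mul_comm]

theorem constForm_algebraMap_comp (c : ι → k) :
    constForm A l (algebraMap k A ∘ c) = algebraMap k A (l ⬝ᵥ c) := by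
  simp only [constForm_apply, Function.comp_apply, Algebra.smul_def, dotProduct, map_sum, map_mul]

theorem linearCombination_algebraMap_comp (c : ι → k) :
    Fintype.linearCombination A a (algebraMap k A ∘ c) = Fintype.linearCombination k a c := by
  simp only [Fintype.linearCombination_apply, Function.comp_apply, algebraMap_smul]

theorem exists_constForm_eq_one (hl : l ≠ 0) : ∃ e, constForm A l e = 1 := by
  classical
  obtain ⟨i, hi⟩ := Function.ne_iff.1 hl
  refine ⟨algebraMap k A ∘ Pi.single i (l i)⁻¹, ?_⟩
  rw [constForm_algebraMap_comp, dotProduct_single, mul_inv_cancel₀ hi, map_one]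

theorem hyperplaneIdeal_le_span : hyperplaneIdeal a l ≤ Ideal.span (Set.range a) := by
  rintro _ ⟨w, -, rfl⟩
  exact mem_span_range_iff_exists_linearCombination.2 ⟨w, rfl⟩

theorem linearCombination_mem_hyperplaneIdeal {w : ι → A} :
    Fintype.linearCombination A a w ∈ hyperplaneIdeal a l ↔
      constForm A l w ∈ syzygyValueIdeal a l :=
  map_mem_map_ker_iff

theorem colon_hyperplaneIdeal_le (hl : l ≠ 0) :
    (hyperplaneIdeal a l).colon (Ideal.span (Set.range a) : Set A) ≤ syzygyValueIdeal a l := by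
  intro y hy
  obtain ⟨e, he⟩ := exists_constForm_eq_one (A := A) hl
  have hye := mem_colon_coe.1 hy (Fintype.linearCombination A a e)
    (mem_span_range_iff_exists_linearCombination.2 ⟨e, rfl⟩)
  rwa [← smul_eq_mul, ← map_smul, linearCombination_mem_hyperplaneIdeal, map_smul, he,
    smul_eq_mul, mul_one] at hye

theorem sub_mul_mem_hyperplaneIdeal {e : ι → A} (he : constForm A l e = 1) (w : ι → A) :
    Fintype.linearCombination A a w - constForm A l w * Fintype.linearCombination A a e ∈
      hyperplaneIdeal a l :=
  ⟨w - constForm A l w • e, by simp [he], by simp⟩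

theorem span_eq_hyperplaneIdeal_sup {e : ι → A} (he : constForm A l e = 1) :
    Ideal.span (Set.range a) =
      hyperplaneIdeal a l ⊔ Ideal.span {Fintype.linearCombination A a e} := by
  refine le_antisymm (fun y hy => ?_) (sup_le hyperplaneIdeal_le_span ?_)
  · obtain ⟨w, rfl⟩ := mem_span_range_iff_exists_linearCombination.1 hy
    rw [← sub_add_cancel (Fintype.linearCombination A a w)
      (constForm A l w * Fintype.linearCombination A a e)]
    exact Submodule.add_mem_sup (sub_mul_mem_hyperplaneIdeal he w)
      (Ideal.mul_mem_left _ _ (Ideal.mem_span_singleton_self _))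
  · rw [Ideal.span_singleton_le_iff_mem, mem_span_range_iff_exists_linearCombination]
    exact ⟨e, rfl⟩

theorem linearCombination_mem_mul_hyperplaneIdeal {K : Ideal A} (hl : l ≠ 0) {w : ι → A}
    (hwK : w ∈ K • (⊤ : Submodule A (ι → A))) (hw : constForm A l w = 0) :
    Fintype.linearCombination A a w ∈ K * hyperplaneIdeal a l := by
  obtain ⟨e, he⟩ := exists_constForm_eq_one (A := A) hl
  let proj : (ι → A) →ₗ[A] (ι → A) := LinearMap.id - (constForm A l).smulRight e
  have hproj : LinearMap.range proj ≤ LinearMap.ker (constForm A l) := by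
    rintro _ ⟨v, rfl⟩
    simp [proj, he]
  have hmem := Submodule.mem_map_of_mem (f := proj) hwK
  rw [Submodule.map_smul'', Submodule.map_top, show proj w = w by simp [proj, hw]] at hmem
  have := Submodule.mem_map_of_mem (f := Fintype.linearCombination A a)
    (Submodule.smul_mono le_rfl hproj hmem)
  rwa [Submodule.map_smul''] at this

theorem mul_span_le_mul_hyperplaneIdeal {K : Ideal A}
    (hK : LinearMap.ker (Fintype.linearCombination A a) ≤ K • (⊤ : Submodule A (ι → A)))
    (hl : l ≠ 0) (hsyz : K ≤ syzygyValueIdeal a l) :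
    K * Ideal.span (Set.range a) ≤ K * hyperplaneIdeal a l := by
  rw [← map_linearCombination_smul_top]
  rintro _ ⟨w, hw, rfl⟩
  obtain ⟨z, hz, hzw⟩ := hsyz (map_smul_top_le K _ ⟨w, hw, rfl⟩ : constForm A l w ∈ K)
  have := linearCombination_mem_mul_hyperplaneIdeal (a := a) hl (sub_mem hw (hK hz))
    (by rw [map_sub, hzw, sub_self])
  rwa [map_sub, LinearMap.mem_ker.1 hz, sub_zero] at this

end HyperplaneIdeal

section FiniteDimensional

variable {k ι : Type*} [Field k]

theorem exists_finset_span_eq_map {V M : Type*} [AddCommGroup V] [Module k V] [AddCommGroup M]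
    [Module k M] (W : Submodule k V) [FiniteDimensional k W] (f : V →ₗ[k] M) :
    ∃ s : Finset M, s.card ≤ Module.finrank k W ∧ Submodule.span k (s : Set M) = W.map f := by
  classical
  let b := Module.finBasis k W
  refine ⟨Finset.univ.image fun i => f (b i), Finset.card_image_le.trans (by simp), ?_⟩
  rw [Finset.coe_image, Finset.coe_univ, Set.image_univ, ← LinearMap.range_domRestrict,
    LinearMap.range_eq_map, ← b.span_eq, Submodule.map_span, ← Set.range_comp]
  rfl

theorem exists_forall_mem_iff_dotProduct_eq_zero [Fintype ι] {W : Submodule k (ι → k)}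
    (hW : W ≠ ⊤) (hcard : Fintype.card ι ≤ Module.finrank k W + 1) :
    ∃ l ≠ 0, ∀ c, c ∈ W ↔ l ⬝ᵥ c = 0 := by
  classical
  obtain ⟨f, hf, hle⟩ := Submodule.exists_le_ker_of_lt_top W (lt_top_iff_ne_top.2 hW)
  have hWf : W = LinearMap.ker f := by
    refine Submodule.eq_of_le_of_finrank_le hle ?_
    have := Submodule.finrank_lt (mt LinearMap.ker_eq_top.1 hf)
    rw [Module.finrank_fintype_fun_eq_card] at this
    omega
  obtain ⟨l, rfl⟩ := (dotProductEquiv k ι).surjective f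
  exact ⟨l, fun hl => hf (by rw [hl, map_zero]), fun c => by rw [hWf]; rfl⟩

end FiniteDimensional

section ResidueSpace

variable {k A ι : Type*} [Field k] [CommRing A] [IsLocalRing A] [Algebra k A] [Fintype ι]
  {a : ι → A} {l c : ι → k} {w : ι → A} {J J' : Ideal A}

theorem algebraMap_mem_maximalIdeal_iff {r : k} : algebraMap k A r ∈ maximalIdeal A ↔ r = 0 := by
  refine ⟨fun h => ?_, fun h => by simp [h]⟩
  by_contra! hr
  exact (mem_maximalIdeal _).1 h (hr.isUnit.map (algebraMap k A))

theorem constForm_mem_maximalIdeal_iff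
    (hwc : w - algebraMap k A ∘ c ∈ maximalIdeal A • (⊤ : Submodule A (ι → A))) :
    constForm A l w ∈ maximalIdeal A ↔ l ⬝ᵥ c = 0 := by
  have hsub := map_smul_top_le _ (constForm A l) (Submodule.mem_map_of_mem hwc)
  rw [map_sub, constForm_algebraMap_comp] at hsub
  rw [← algebraMap_mem_maximalIdeal_iff (A := A), ← Submodule.sub_mem_iff_left _ hsub,
    sub_sub_cancel]

theorem exists_sub_algebraMap_comp_mem {k A ι : Type*} [Field k] [CommRing A] [IsLocalRing A]
    [Algebra k A] [Finite ι]
    (hres : ∀ y : A, ∃ r : k, y - algebraMap k A r ∈ maximalIdeal A) (w : ι → A) :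
    ∃ c : ι → k, w - algebraMap k A ∘ c ∈ maximalIdeal A • (⊤ : Submodule A (ι → A)) := by
  choose c hc using fun i => hres (w i)
  exact ⟨c, mem_smul_top_pi_iff.2 hc⟩

variable (k a J) in
/-- The constant vectors `c` for which `∑ i, c i • a i` lies in `J` modulo `𝔪 I`, where `I` is the
ideal generated by the entries of `a`. -/
noncomputable def residueSpace : Submodule k (ι → k) :=
  ((J ⊔ maximalIdeal A * Ideal.span (Set.range a)).restrictScalars k).comap
    (Fintype.linearCombination k a)

theorem mem_residueSpace_iff :
    c ∈ residueSpace k a J ↔ Fintype.linearCombination k a c ∈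
      J ⊔ maximalIdeal A * Ideal.span (Set.range a) :=
  Iff.rfl

theorem sub_mem_maximalIdeal_mul
    (hwc : w - algebraMap k A ∘ c ∈ maximalIdeal A • (⊤ : Submodule A (ι → A))) :
    Fintype.linearCombination A a w - Fintype.linearCombination k a c ∈
      maximalIdeal A * Ideal.span (Set.range a) := by
  rw [← linearCombination_algebraMap_comp (A := A), ← map_sub, ← map_linearCombination_smul_top]
  exact Submodule.mem_map_of_mem hwc

theorem linearCombination_mem_sup_iff
    (hwc : w - algebraMap k A ∘ c ∈ maximalIdeal A • (⊤ : Submodule A (ι → A))) :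
    Fintype.linearCombination A a w ∈ J ⊔ maximalIdeal A * Ideal.span (Set.range a) ↔
      c ∈ residueSpace k a J := by
  rw [mem_residueSpace_iff, ← Submodule.sub_mem_iff_left _
    (Ideal.mem_sup_right (sub_mem_maximalIdeal_mul hwc) :
      _ ∈ J ⊔ maximalIdeal A * Ideal.span (Set.range a)), sub_sub_cancel]

theorem residueSpace_mono (h : J ≤ J') : residueSpace k a J ≤ residueSpace k a J' :=
  fun _ hc => sup_le_sup_right h _ hc

theorem residueSpace_span_range : residueSpace k a (Ideal.span (Set.range a)) = ⊤ :=
  top_le_iff.1 fun c _ => Ideal.mem_sup_left (linearCombination_algebraMap_comp (A := A) c ▸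
    mem_span_range_iff_exists_linearCombination.2 ⟨_, rfl⟩)

theorem le_sup_of_residueSpace_le
    (hres : ∀ y : A, ∃ r : k, y - algebraMap k A r ∈ maximalIdeal A)
    (hJ : J ≤ Ideal.span (Set.range a)) (h : residueSpace k a J ≤ residueSpace k a J') :
    J ≤ J' ⊔ maximalIdeal A * Ideal.span (Set.range a) := by
  intro y hy
  obtain ⟨w, rfl⟩ := mem_span_range_iff_exists_linearCombination.1 (hJ hy)
  obtain ⟨c, hc⟩ := exists_sub_algebraMap_comp_mem hres w
  exact (linearCombination_mem_sup_iff hc).2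
    (h ((linearCombination_mem_sup_iff hc).1 (Ideal.mem_sup_left hy)))

theorem mem_residueSpace_hyperplaneIdeal_iff
    (hker : LinearMap.ker (Fintype.linearCombination A a) ≤
      maximalIdeal A • (⊤ : Submodule A (ι → A))) :
    c ∈ residueSpace k a (hyperplaneIdeal a l) ↔ l ⬝ᵥ c = 0 := by
  rw [mem_residueSpace_iff, ← linearCombination_algebraMap_comp (A := A)]
  refine ⟨fun hc => ?_, fun hc => Ideal.mem_sup_left
    ⟨_, by rw [SetLike.mem_coe, LinearMap.mem_ker, constForm_algebraMap_comp, hc, map_zero], rfl⟩⟩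
  rw [← map_linearCombination_smul_top, hyperplaneIdeal, ← Submodule.map_sup] at hc
  obtain ⟨w, hw, hwc⟩ := hc
  obtain ⟨u, hu, v, hv, rfl⟩ := Submodule.mem_sup.1 hw
  have huc : u - algebraMap k A ∘ c ∈ maximalIdeal A • (⊤ : Submodule A (ι → A)) := by
    rw [← add_sub_cancel_right u v, sub_right_comm]
    exact sub_mem (hker (by rw [LinearMap.mem_ker, map_sub, hwc, sub_self])) hv
  rw [← constForm_mem_maximalIdeal_iff huc, LinearMap.mem_ker.1 hu]
  exact zero_mem _

theorem residueSpace_hyperplaneIdeal_ne_top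
    (hker : LinearMap.ker (Fintype.linearCombination A a) ≤
      maximalIdeal A • (⊤ : Submodule A (ι → A))) (hl : l ≠ 0) :
    residueSpace k a (hyperplaneIdeal a l) ≠ ⊤ := fun htop =>
  hl (dotProduct_eq_zero l fun _ =>
    (mem_residueSpace_hyperplaneIdeal_iff hker).1 (htop ▸ Submodule.mem_top))

theorem lt_finrank_residueSpace {A : Type u} [CommRing A] [IsLocalRing A] [Algebra k A] {a : ι → A}
    {J : Ideal A} {N : ℕ} (hres : ∀ y : A, ∃ r : k, y - algebraMap k A r ∈ maximalIdeal A)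
    (hJ : J ≤ Ideal.span (Set.range a))
    (hgen : ¬ GeneratedAt (maximalIdeal A) J (maximalIdeal A * Ideal.span (Set.range a)) N) :
    N < Module.finrank k (residueSpace k a J) := by
  classical
  by_contra! hN
  obtain ⟨s, hs, hspan⟩ :=
    exists_finset_span_eq_map (residueSpace k a J) (Fintype.linearCombination k a)
  have hsJ : ∀ y ∈ s, ∃ u ∈ J, y - u ∈ maximalIdeal A * Ideal.span (Set.range a) := by
    intro y hy
    obtain ⟨c, hc, rfl⟩ : y ∈ (residueSpace k a J).map _ := hspan ▸ Submodule.subset_span hy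
    obtain ⟨u, hu, v, hv, huv⟩ := Submodule.mem_sup.1 (mem_residueSpace_iff.1 hc)
    exact ⟨u, hu, by rwa [← huv, add_sub_cancel_left]⟩
  choose! u huJ hu using hsJ
  refine hgen ⟨s.image u, Finset.card_image_le.trans (hs.trans hN), ?_,
    fun z hz => le_localContraction ?_⟩
  · rw [Finset.coe_image, Set.image_subset_iff]
    exact huJ
  have hsle : Submodule.span k (s : Set A) ≤
      (maximalIdeal A * Ideal.span (Set.range a) ⊔ Ideal.span ↑(s.image u)).restrictScalars k := by
    refine Submodule.span_le.2 fun y hy => ?_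
    rw [SetLike.mem_coe, Submodule.restrictScalars_mem, ← sub_add_cancel y (u y)]
    exact Submodule.add_mem_sup (hu y hy)
      (Ideal.subset_span (Finset.mem_coe.2 (Finset.mem_image_of_mem u hy)))
  obtain ⟨w, rfl⟩ := mem_span_range_iff_exists_linearCombination.1 (hJ hz)
  obtain ⟨c, hc⟩ := exists_sub_algebraMap_comp_mem hres w
  have hcJ := (linearCombination_mem_sup_iff hc).1 (Ideal.mem_sup_left hz)
  rw [← sub_add_cancel (Fintype.linearCombination A a w) (Fintype.linearCombination k a c)]
  exact add_mem (Ideal.mem_sup_left (sub_mem_maximalIdeal_mul hc))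
    (hsle (hspan ▸ Submodule.mem_map_of_mem hcJ))

end ResidueSpace

section Reduction

theorem sup_pow_succ_le {A : Type*} [CommRing A] (J K : Ideal A) (n : ℕ) :
    (J ⊔ K) ^ (n + 1) ≤ J * (J ⊔ K) ^ n ⊔ K ^ (n + 1) := by
  induction n with
  | zero => simp
  | succ n ih =>
    calc (J ⊔ K) ^ (n + 1 + 1) = J * (J ⊔ K) ^ (n + 1) ⊔ K * (J ⊔ K) ^ (n + 1) := by
          rw [pow_succ' _ (n + 1), Ideal.sup_mul]
      _ ≤ J * (J ⊔ K) ^ (n + 1) ⊔ (J * (K * (J ⊔ K) ^ n) ⊔ K ^ (n + 1 + 1)) := by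
          refine sup_le_sup_left ?_ _
          rw [mul_left_comm, pow_succ' K, ← Ideal.mul_sup]
          exact Ideal.mul_mono_right ih
      _ ≤ J * (J ⊔ K) ^ (n + 1) ⊔ K ^ (n + 1 + 1) := by
          rw [← sup_assoc]
          refine sup_le_sup_right (sup_le le_rfl (Ideal.mul_mono_right ?_)) _
          rw [pow_succ']
          exact Ideal.mul_mono_left le_sup_right

variable {A : Type u} [CommRing A] {I J J' K L : Ideal A}

theorem isReduction_sup_right {r : ℕ} (h : L ^ (r + 1) ≤ J * (J ⊔ L) ^ r) :
    IsReduction J (J ⊔ L) :=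
  ⟨le_sup_left, r, le_antisymm ((sup_pow_succ_le J L r).trans (sup_le le_rfl h))
    (by rw [pow_succ']; exact Ideal.mul_mono_left le_sup_left)⟩

theorem IsIntClosedIdeal.le_of_isReduction (hI : IsIntClosedIdeal I) (hK : K ≤ I)
    (hL : IsReduction K L) : L ≤ I := by
  obtain ⟨-, r, hr⟩ := hL
  have hsup : IsReduction I (I ⊔ L) := by
    refine isReduction_sup_right (r := r) ?_
    rw [hr]
    exact Ideal.mul_mono hK (Ideal.pow_right_mono le_sup_right r)
  rw [← hI _ hsup]
  exact le_sup_right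

variable [IsLocalRing A] [IsNoetherianRing A]

theorem le_of_le_sup_maximalIdeal_mul (h : K ≤ L ⊔ maximalIdeal A * K) : K ≤ L :=
  Submodule.le_of_le_smul_of_le_jacobson_bot (IsNoetherian.noetherian K)
    (IsLocalRing.jacobson_eq_maximalIdeal _ bot_ne_top).ge h

theorem isReduction_of_le_sup_maximalIdeal_mul {r : ℕ} (hJ : J ≤ I)
    (h : I ^ (r + 1) ≤ J * I ^ r ⊔ maximalIdeal A * I ^ (r + 1)) : IsReduction J I :=
  ⟨hJ, r, le_antisymm (le_of_le_sup_maximalIdeal_mul h)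
    (by rw [pow_succ']; exact Ideal.mul_mono_left hJ)⟩

theorem isReduction_sup_right_of_le {r : ℕ}
    (h : L ^ (r + 1) ≤ J * (J ⊔ L) ^ r ⊔ maximalIdeal A * (J ⊔ L) ^ (r + 1)) :
    IsReduction J (J ⊔ L) :=
  isReduction_of_le_sup_maximalIdeal_mul le_sup_left
    ((sup_pow_succ_le J L r).trans (sup_le le_sup_left h))

theorem IsReduction.of_le_sup_maximalIdeal_mul (hJ : IsReduction J I) (hJ' : J' ≤ I)
    (h : J ≤ J' ⊔ maximalIdeal A * I) : IsReduction J' I := by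
  obtain ⟨-, r, hr⟩ := hJ
  refine isReduction_of_le_sup_maximalIdeal_mul (r := r) hJ' ?_
  calc I ^ (r + 1) = J * I ^ r := hr
    _ ≤ (J' ⊔ maximalIdeal A * I) * I ^ r := Ideal.mul_mono_left h
    _ = J' * I ^ r ⊔ maximalIdeal A * I ^ (r + 1) := by rw [Ideal.sup_mul, mul_assoc, pow_succ']

end Reduction

section HomogeneousEvaluation

open MvPolynomial

variable {A ι : Type*} [CommRing A] {F : MvPolynomial ι A} {s : ℕ}

theorem eval_mul_const_of_isHomogeneous (hF : F.IsHomogeneous s) (v : ι → A) (b : A) :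
    eval (fun i => v i * b) F = eval v F * b ^ s := by
  simp only [eval_eq, mul_pow, Finset.prod_mul_distrib, Finset.prod_pow_eq_pow_sum, Finset.sum_mul]
  refine Finset.sum_congr rfl fun e he => ?_
  rw [← hF.degree_eq_sum_deg_support he, mul_assoc]

theorem eval_mem_pow_of_isHomogeneous {I : Ideal A} {u : ι → A} (hu : ∀ i, u i ∈ I)
    (hF : F.IsHomogeneous s) : eval u F ∈ I ^ s :=
  Ideal.pow_right_mono (Ideal.span_le.2 (Set.range_subset_iff.2 hu)) s
    ((Ideal.mem_span_pow_iff_exists_isHomogeneous u _).2 ⟨F, hF, rfl⟩)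

theorem eval_sub_eval_mem_of_isHomogeneous_one {J : Ideal A} {u v : ι → A}
    (huv : ∀ i, u i - v i ∈ J) (hF : F.IsHomogeneous 1) : eval u F - eval v F ∈ J := by
  rw [← mem_homogeneousSubmodule, homogeneousSubmodule_one_eq_span_X] at hF
  induction hF using Submodule.span_induction with
  | mem _ h => obtain ⟨i, rfl⟩ := h; simpa using huv i
  | zero => simp
  | add p q _ _ hp hq => rw [map_add, map_add, add_sub_add_comm]; exact add_mem hp hq
  | smul r p _ hp => rw [smul_eval, smul_eval, ← mul_sub]; exact Ideal.mul_mem_left _ _ hp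

theorem mul_eval_sub_eval_mem {I J : Ideal A} {u v : ι → A} (hu : ∀ i, u i ∈ I)
    (hv : ∀ i, v i ∈ I) (huv : ∀ i, u i - v i ∈ J) (hF : F.IsHomogeneous s) {y : A} (hy : y ∈ I) :
    y * (eval u F - eval v F) ∈ J * I ^ s := by
  rw [← mem_homogeneousSubmodule, ← homogeneousSubmodule_one_pow] at hF
  induction hF using Submodule.pow_induction_on_left' with
  | algebraMap r => simp
  | add p q n _ _ ihp ihq =>
    rw [map_add, map_add, add_sub_add_comm, mul_add]
    exact add_mem ihp ihq
  | mem_mul m hm n p hp ih =>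
    rw [homogeneousSubmodule_one_pow, mem_homogeneousSubmodule] at hp
    have hsplit : y * (eval u (m * p) - eval v (m * p)) =
        eval u m * (y * (eval u p - eval v p)) + (eval u m - eval v m) * (y * eval v p) := by
      rw [map_mul, map_mul]
      ring
    rw [hsplit, pow_succ']
    refine add_mem ?_ (Ideal.mul_mem_mul (eval_sub_eval_mem_of_isHomogeneous_one huv hm)
      (Ideal.mul_mem_mul hy (eval_mem_pow_of_isHomogeneous hv hp)))
    rw [mul_left_comm]
    exact Ideal.mul_mem_mul (pow_one I ▸ eval_mem_pow_of_isHomogeneous hu hm) ih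

end HomogeneousEvaluation

section LinearPresentation

variable {k ι σ κ : Type*} [Field k] {A : Type u} [CommRing A] [IsLocalRing A] [Algebra k A]
  [Fintype ι] [Fintype σ] {a : ι → A} {x : σ → A} {C : κ → ι → σ → k} {l : ι → k} {N : ℕ}

/-- The generators `a` of an ideal of the local ring `A` are linearly presented over the coefficient
field `k`: the maximal ideal is generated by `x`, and the syzygies of `a` are generated by the
columns, indexed by `κ`, of a matrix of linear forms in `x`. The column `j` has the entries
`∑ t, C j i t • x t`, for `i : ι`. -/
structure IsLinearPresentation (a : ι → A) (x : σ → A) (C : κ → ι → σ → k) : Prop where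
  exists_sub_mem (y : A) : ∃ r : k, y - algebraMap k A r ∈ maximalIdeal A
  span_eq_maximalIdeal : Ideal.span (Set.range x) = maximalIdeal A
  ker_eq : LinearMap.ker (Fintype.linearCombination A a) =
    Submodule.span A (Set.range fun j i => Fintype.linearCombination k x (C j i))

/-- The reductions of `I` behave, with respect to `N = dim A - 1`, as for a strongly Cohen-Macaulay
ideal: no prime of height at most `N` contains `J : I` for a reduction `J`, and modulo `𝔪 I` a
proper reduction is not generated by `N` elements. -/
structure HasRigidReductions (I : Ideal A) (N : ℕ) : Prop where
  not_colon_le (J : Ideal A) : IsReduction J I → ∀ q : Ideal A, q.IsPrime → q.height ≤ N →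
    ¬ J.colon (I : Set A) ≤ q
  not_generatedAt (J : Ideal A) : IsReduction J I → J ≠ I →
    ¬ GeneratedAt (maximalIdeal A) J (maximalIdeal A * I) N

variable (C l) in
/-- The space of coefficient vectors of the linear forms in the `k`-span of the entries of `lᵀ φ`,
where `φ` is the matrix of linear forms with coefficients `C`. -/
def coeffSpan : Submodule k (σ → k) :=
  Submodule.span k (Set.range fun j => ∑ i, l i • C j i)

namespace IsLinearPresentation

theorem linearCombination_mem (h : IsLinearPresentation a x C) (c : σ → k) :
    Fintype.linearCombination k x c ∈ maximalIdeal A := by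
  rw [← linearCombination_algebraMap_comp (A := A), ← h.span_eq_maximalIdeal]
  exact mem_span_range_iff_exists_linearCombination.2 ⟨_, rfl⟩

theorem ker_le (h : IsLinearPresentation a x C) :
    LinearMap.ker (Fintype.linearCombination A a) ≤
      maximalIdeal A • (⊤ : Submodule A (ι → A)) := by
  rw [h.ker_eq, Submodule.span_le]
  rintro _ ⟨j, rfl⟩
  exact mem_smul_top_pi_iff.2 fun i => h.linearCombination_mem _

theorem syzygyValueIdeal_eq (h : IsLinearPresentation a x C) (l : ι → k) :
    syzygyValueIdeal a l =
      Ideal.span ((coeffSpan C l).map (Fintype.linearCombination k x) : Set A) := by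
  have hval : ∀ j, constForm A l (fun i => Fintype.linearCombination k x (C j i)) =
      Fintype.linearCombination k x (∑ i, l i • C j i) := fun j => by
    simp only [constForm_apply, map_sum, map_smul]
  rw [syzygyValueIdeal, h.ker_eq, Submodule.map_span, ← Set.range_comp, coeffSpan,
    Submodule.map_span, ← Set.range_comp, Ideal.span, Submodule.span_span_of_tower]
  simp only [Function.comp_def, hval]

theorem maximalIdeal_le_syzygyValueIdeal (h : IsLinearPresentation a x C)
    (hl : coeffSpan C l = ⊤) : maximalIdeal A ≤ syzygyValueIdeal a l := by
  classical
  rw [h.syzygyValueIdeal_eq, hl, ← h.span_eq_maximalIdeal, Ideal.span_le]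
  rintro _ ⟨t, rfl⟩
  exact Ideal.subset_span ⟨Pi.single t 1, trivial, by simp⟩

theorem coeffSpan_eq_top [IsNoetherianRing A] (h : IsLinearPresentation a x C)
    (hN : HasRigidReductions (Ideal.span (Set.range a)) N) (hσ : Fintype.card σ = N + 1)
    (hl : l ≠ 0) (hred : IsReduction (hyperplaneIdeal a l) (Ideal.span (Set.range a))) :
    coeffSpan C l = ⊤ := by
  by_contra! htop
  have hlt := Submodule.finrank_lt htop
  rw [Module.finrank_fintype_fun_eq_card, hσ] at hlt
  obtain ⟨s, hs, hspan⟩ :=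
    exists_finset_span_eq_map (coeffSpan C l) (Fintype.linearCombination k x)
  have hval : syzygyValueIdeal a l = Ideal.span (s : Set A) := by
    rw [h.syzygyValueIdeal_eq, ← hspan, Ideal.span, Submodule.span_span_of_tower]
  have hs𝔪 : Ideal.span (s : Set A) ≤ maximalIdeal A := by
    rw [← hval, h.syzygyValueIdeal_eq, Ideal.span_le]
    rintro _ ⟨c, -, rfl⟩
    exact h.linearCombination_mem c
  obtain ⟨q, hq, -⟩ := Ideal.exists_minimalPrimes_le hs𝔪
  have hheight : q.height ≤ N :=
    (Ideal.height_le_card_of_mem_minimalPrimes_span_finset hq).trans (by norm_cast; omega)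
  exact hN.not_colon_le _ hred q hq.1.1 hheight
    ((colon_hyperplaneIdeal_le hl).trans (hval.le.trans hq.1.2))

variable [IsNoetherianRing A] (h : IsLinearPresentation a x C)
  (hN : HasRigidReductions (Ideal.span (Set.range a)) N)

include h hN

theorem exists_residueSpace_eq (hι : Fintype.card ι = N + 2) {J : Ideal A}
    (hJ : IsReduction J (Ideal.span (Set.range a))) (hne : J ≠ Ideal.span (Set.range a)) :
    ∃ l : ι → k, l ≠ 0 ∧ IsReduction (hyperplaneIdeal a l) (Ideal.span (Set.range a)) ∧
      residueSpace k a J = residueSpace k a (hyperplaneIdeal a l) := by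
  have htop : residueSpace k a J ≠ ⊤ := fun htop =>
    hne (hJ.1.antisymm (le_of_le_sup_maximalIdeal_mul
      (le_sup_of_residueSpace_le h.exists_sub_mem le_rfl (htop ▸ le_top))))
  have hfin := lt_finrank_residueSpace h.exists_sub_mem hJ.1 (hN.not_generatedAt J hJ hne)
  obtain ⟨l, hl, hmem⟩ :=
    exists_forall_mem_iff_dotProduct_eq_zero htop (hι.trans_le (by omega))
  have heq : residueSpace k a J = residueSpace k a (hyperplaneIdeal a l) :=
    Submodule.ext fun c => (hmem c).trans (mem_residueSpace_hyperplaneIdeal_iff h.ker_le).symm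
  exact ⟨l, hl, hJ.of_le_sup_maximalIdeal_mul hyperplaneIdeal_le_span
    (le_sup_of_residueSpace_le h.exists_sub_mem hJ.1 heq.le), heq⟩

variable (hσ : Fintype.card σ = N + 1)

include hσ

theorem maximalIdeal_mul_le_hyperplaneIdeal (hl : l ≠ 0)
    (hred : IsReduction (hyperplaneIdeal a l) (Ideal.span (Set.range a))) :
    maximalIdeal A * Ideal.span (Set.range a) ≤ maximalIdeal A * hyperplaneIdeal a l :=
  mul_span_le_mul_hyperplaneIdeal h.ker_le hl
    (h.maximalIdeal_le_syzygyValueIdeal (h.coeffSpan_eq_top hN hσ hl hred))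

theorem maximalIdeal_mul_le_of_isReduction (hι : Fintype.card ι = N + 2) {J : Ideal A}
    (hJ : IsReduction J (Ideal.span (Set.range a))) :
    maximalIdeal A * Ideal.span (Set.range a) ≤ J := by
  by_cases hne : J = Ideal.span (Set.range a)
  · exact hne ▸ Ideal.mul_le_right
  obtain ⟨l, hl, hred, heq⟩ := h.exists_residueSpace_eq hN hι hJ hne
  have h𝔪 := h.maximalIdeal_mul_le_hyperplaneIdeal hN hσ hl hred
  have hle : hyperplaneIdeal a l ≤ J := le_of_le_sup_maximalIdeal_mul
    ((le_sup_of_residueSpace_le h.exists_sub_mem hyperplaneIdeal_le_span heq.ge).trans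
      (sup_le_sup_left h𝔪 J))
  exact h𝔪.trans (Ideal.mul_le_right.trans hle)

theorem isMinimalReduction_hyperplaneIdeal (hι : Fintype.card ι = N + 2) (hl : l ≠ 0)
    (hred : IsReduction (hyperplaneIdeal a l) (Ideal.span (Set.range a))) :
    IsMinimalReduction (hyperplaneIdeal a l) (Ideal.span (Set.range a)) := by
  refine ⟨hred, fun J hJ hle => hle.antisymm ?_⟩
  have hlt := Submodule.finrank_lt (residueSpace_hyperplaneIdeal_ne_top h.ker_le hl)
  rw [Module.finrank_fintype_fun_eq_card, hι] at hlt
  have hne : J ≠ Ideal.span (Set.range a) := by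
    rintro rfl
    exact residueSpace_hyperplaneIdeal_ne_top h.ker_le hl
      (top_le_iff.1 (residueSpace_span_range.ge.trans (residueSpace_mono hle)))
  have hfin := lt_finrank_residueSpace h.exists_sub_mem hJ.1 (hN.not_generatedAt J hJ hne)
  have heq : residueSpace k a J = residueSpace k a (hyperplaneIdeal a l) :=
    Submodule.eq_of_le_of_finrank_le (residueSpace_mono hle) (by omega)
  calc hyperplaneIdeal a l ≤ J ⊔ maximalIdeal A * Ideal.span (Set.range a) :=
        le_sup_of_residueSpace_le h.exists_sub_mem hyperplaneIdeal_le_span heq.ge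
    _ ≤ J := sup_le le_rfl (h.maximalIdeal_mul_le_of_isReduction hN hσ hι hJ)

end IsLinearPresentation

end LinearPresentation

section Core

open MvPolynomial

variable {k ι σ κ : Type*} [Field k] {A : Type u} [CommRing A] [IsLocalRing A] [Algebra k A]
  [IsNoetherianRing A] [Fintype ι] {a : ι → A} {l : ι → k} {N : ℕ}

/-- If a form `F` vanishes on `a` modulo `𝔪 I ^ s`, then `b := ∑ i, e i * a i` with
`∑ i, l i * e i = 1` is integral over `hyperplaneIdeal a l` as soon as `F(l)` is nonzero, because
`a i ≡ l i * b` and so `F(a) ≡ F(l) * b ^ s`. -/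
theorem isReduction_hyperplaneIdeal_of_eval_ne_zero {F : MvPolynomial ι k} {s : ℕ}
    (hF : F.IsHomogeneous s)
    (hFa : aeval a F ∈ maximalIdeal A * Ideal.span (Set.range a) ^ s) (hl : l ≠ 0)
    (hFl : eval l F ≠ 0) : IsReduction (hyperplaneIdeal a l) (Ideal.span (Set.range a)) := by
  classical
  obtain ⟨e, he⟩ := exists_constForm_eq_one (A := A) hl
  let b := Fintype.linearCombination A a e
  have hI := span_eq_hyperplaneIdeal_sup (a := a) he
  have hb : b ∈ Ideal.span (Set.range a) := mem_span_range_iff_exists_linearCombination.2 ⟨e, rfl⟩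
  have hsub : ∀ i, a i - algebraMap k A (l i) * b ∈ hyperplaneIdeal a l := fun i => by
    simpa [constForm] using sub_mul_mem_hyperplaneIdeal (a := a) he (Pi.single i 1)
  have hval : eval (fun i => algebraMap k A (l i) * b) (F.map (algebraMap k A)) =
      algebraMap k A (eval l F) * b ^ s := by
    rw [eval_mul_const_of_isHomogeneous (hF.map _), eval_map, eval₂_comp]
    rfl
  have hdiff := mul_eval_sub_eval_mem (fun i => Ideal.subset_span (Set.mem_range_self i))
    (fun i => Ideal.mul_mem_left _ _ hb) hsub (hF.map (algebraMap k A)) hb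
  have hba : b * aeval a F ∈ maximalIdeal A * Ideal.span (Set.range a) ^ (s + 1) := by
    rw [pow_succ', mul_left_comm]
    exact Ideal.mul_mem_mul hb hFa
  have hpow : b ^ (s + 1) ∈ hyperplaneIdeal a l * Ideal.span (Set.range a) ^ s ⊔
      maximalIdeal A * Ideal.span (Set.range a) ^ (s + 1) := by
    rw [hval, eval_map, ← aeval_def, mul_sub] at hdiff
    have hmem := sub_mem (Ideal.mem_sup_right hba) (Ideal.mem_sup_left hdiff)
    rw [sub_sub_cancel, mul_left_comm, ← pow_succ'] at hmem
    exact (Ideal.unit_mul_mem_iff_mem _ (hFl.isUnit.map (algebraMap k A))).1 hmem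
  rw [hI] at hpow ⊢
  refine isReduction_sup_right_of_le (r := s) ?_
  rwa [Ideal.span_singleton_pow, Ideal.span_singleton_le_iff_mem]

/-- Since `lᵀ z` is invertible, `I = hyperplaneIdeal a l + L`, while `L ^ (r + 1) ≤ 𝔪 I ^ (r + 1)`
for some `r`; so `hyperplaneIdeal a l` is a reduction by Nakayama's lemma. -/
theorem isReduction_hyperplaneIdeal_of_isReduction {L : Ideal A} {z : ι → A}
    (hL : IsReduction (maximalIdeal A * Ideal.span (Set.range a)) L)
    (hLI : L ≤ Ideal.span (Set.range a)) (hz : Fintype.linearCombination A a z ∈ L)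
    (hlz : IsUnit (constForm A l z)) :
    IsReduction (hyperplaneIdeal a l) (Ideal.span (Set.range a)) := by
  obtain ⟨-, r, hr⟩ := hL
  obtain ⟨v, hv⟩ := hlz.exists_left_inv
  have he : constForm A l (v • z) = 1 := by rw [map_smul, smul_eq_mul, hv]
  have hzL : Fintype.linearCombination A a (v • z) ∈ L := by
    rw [map_smul]
    exact Ideal.mul_mem_left _ _ hz
  have hI : Ideal.span (Set.range a) = hyperplaneIdeal a l ⊔ L := by
    refine le_antisymm ?_ (sup_le hyperplaneIdeal_le_span hLI)
    rw [span_eq_hyperplaneIdeal_sup he]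
    exact sup_le_sup_left ((Ideal.span_singleton_le_iff_mem _).2 hzL) _
  rw [hI] at hr ⊢
  refine isReduction_sup_right_of_le (r := r) (hr.le.trans (le_sup_of_le_right ?_))
  rw [pow_succ', ← mul_assoc]
  exact Ideal.mul_mono_right (Ideal.pow_right_mono le_sup_right r)

theorem exists_eval_ne_zero_and_dotProduct_ne_zero [Infinite k] {F : MvPolynomial ι k}
    (hF : F ≠ 0) {c : ι → k} (hc : c ≠ 0) : ∃ l, eval l F ≠ 0 ∧ l ⬝ᵥ c ≠ 0 := by
  classical
  let G : MvPolynomial ι k := ∑ i, C (c i) * X i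
  have hG : ∀ l, eval l G = l ⬝ᵥ c := fun l => by simp [G, dotProduct, mul_comm]
  have hG0 : G ≠ 0 := fun h => hc (dotProduct_eq_zero c fun l => by
    rw [dotProduct_comm, ← hG, h, map_zero])
  by_contra! hcon
  refine mul_ne_zero hF hG0 (MvPolynomial.funext fun l => ?_)
  rw [map_mul, map_zero, hG, mul_eq_zero]
  exact or_iff_not_imp_left.2 (hcon l)

variable [Fintype σ] {x : σ → A} {C : κ → ι → σ → k}

namespace IsLinearPresentation

variable (h : IsLinearPresentation a x C) (hN : HasRigidReductions (Ideal.span (Set.range a)) N)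
  (hσ : Fintype.card σ = N + 1)

include h hN hσ

theorem core_eq [Infinite k] (hι : Fintype.card ι = N + 2) {F : MvPolynomial ι k} {s : ℕ}
    (hF0 : F ≠ 0) (hF : F.IsHomogeneous s)
    (hFa : aeval a F ∈ maximalIdeal A * Ideal.span (Set.range a) ^ s) :
    core (Ideal.span (Set.range a)) = maximalIdeal A * Ideal.span (Set.range a) := by
  have hmin : ∀ c : ι → k, c ≠ 0 → ∃ l, l ⬝ᵥ c ≠ 0 ∧
      IsMinimalReduction (hyperplaneIdeal a l) (Ideal.span (Set.range a)) := by
    intro c hc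
    obtain ⟨l, hFl, hlc⟩ := exists_eval_ne_zero_and_dotProduct_ne_zero hF0 hc
    have hl : l ≠ 0 := fun hl => hlc (by rw [hl, zero_dotProduct])
    exact ⟨l, hlc, h.isMinimalReduction_hyperplaneIdeal hN hσ hι hl
      (isReduction_hyperplaneIdeal_of_eval_ne_zero hF hFa hl hFl)⟩
  refine le_antisymm (fun y hy => ?_)
    (le_sInf fun J hJ => h.maximalIdeal_mul_le_of_isReduction hN hσ hι hJ.1)
  replace hy : ∀ J, IsMinimalReduction J (Ideal.span (Set.range a)) → y ∈ J :=
    Submodule.mem_sInf.1 hy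
  have : Nonempty ι := Fintype.card_pos_iff.1 (by omega)
  obtain ⟨l₀, -, hl₀⟩ := hmin (fun _ => 1) (fun hc => by simpa using congrFun hc)
  obtain ⟨z, rfl⟩ :=
    mem_span_range_iff_exists_linearCombination.1 (hyperplaneIdeal_le_span (hy _ hl₀))
  obtain ⟨c, hc⟩ := exists_sub_algebraMap_comp_mem h.exists_sub_mem z
  suffices hc0 : c = 0 by simpa [hc0] using sub_mem_maximalIdeal_mul hc
  by_contra! hc0
  obtain ⟨l, hlc, hl⟩ := hmin c hc0
  exact hlc ((mem_residueSpace_hyperplaneIdeal_iff h.ker_le).1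
    ((linearCombination_mem_sup_iff hc).1 (Ideal.mem_sup_left (hy _ hl))))

theorem isIntClosedIdeal_maximalIdeal_mul
    (hC : ∀ c : ι → k, c ≠ 0 → ∃ l, l ⬝ᵥ c ≠ 0 ∧ coeffSpan C l ≠ ⊤)
    (hI : IsIntClosedIdeal (Ideal.span (Set.range a))) :
    IsIntClosedIdeal (maximalIdeal A * Ideal.span (Set.range a)) := by
  intro L hL
  have hLI := hI.le_of_isReduction Ideal.mul_le_right hL
  refine le_antisymm (fun y hy => ?_) hL.1
  obtain ⟨z, rfl⟩ := mem_span_range_iff_exists_linearCombination.1 (hLI hy)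
  obtain ⟨c, hc⟩ := exists_sub_algebraMap_comp_mem h.exists_sub_mem z
  suffices hc0 : c = 0 by simpa [hc0] using sub_mem_maximalIdeal_mul hc
  by_contra! hc0
  obtain ⟨l, hlc, hl⟩ := hC c hc0
  have hl0 : l ≠ 0 := fun hl0 => hlc (by rw [hl0, zero_dotProduct])
  have hunit : IsUnit (constForm A l z) :=
    notMem_maximalIdeal.1 fun hz => hlc ((constForm_mem_maximalIdeal_iff hc).1 hz)
  exact hl (h.coeffSpan_eq_top hN hσ hl0
    (isReduction_hyperplaneIdeal_of_isReduction hL hLI hy hunit))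

end IsLinearPresentation

end Core

section AlgebraicRelation

open MvPolynomial

variable {R S ι : Type*} [CommRing R] [CommRing S]

theorem coeff_aeval_C_mul_X [Algebra R S] (b : ι → S) (G : MvPolynomial ι R) (s : ℕ) :
    (aeval (fun i => Polynomial.C (b i) * Polynomial.X) G).coeff s =
      aeval b (homogeneousComponent s G) := by
  induction G using MvPolynomial.induction_on' with
  | monomial e c =>
    have hprod : (e.prod fun i n => (Polynomial.C (b i) * Polynomial.X) ^ n) =
        Polynomial.C (e.prod fun i n => b i ^ n) * Polynomial.X ^ e.degree := by
      simp only [Finsupp.prod, mul_pow, Finset.prod_mul_distrib, Finset.prod_pow_eq_pow_sum,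
        map_prod, map_pow, Finsupp.degree_apply]
    rw [homogeneousComponent_of_mem (isHomogeneous_monomial c (rfl : e.degree = e.degree)),
      aeval_monomial, hprod, Polynomial.algebraMap_apply, ← mul_assoc, ← Polynomial.C_mul,
      Polynomial.coeff_C_mul_X_pow]
    split_ifs
    · rw [aeval_monomial]
    · rw [map_zero]
  | add p q hp hq => rw [map_add, Polynomial.coeff_add, hp, hq, map_add, map_add]

theorem aeval_C_mul_X_mem_reesAlgebra [Algebra R S] {I : Ideal S} {b : ι → S} (hb : ∀ i, b i ∈ I)
    (G : MvPolynomial ι R) :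
    aeval (fun i => Polynomial.C (b i) * Polynomial.X) G ∈ reesAlgebra I := by
  refine (mem_reesAlgebra_iff _ _).2 fun s => ?_
  rw [coeff_aeval_C_mul_X, aeval_def, ← eval_map]
  exact eval_mem_pow_of_isHomogeneous hb ((homogeneousComponent_isHomogeneous s G).map _)

theorem exists_eval₂_eq_zero_and_coeff_zero_ne_zero [IsDomain S] {f : R →+* S} {y : S} (hy : y ≠ 0)
    {P : Polynomial R} (hP0 : P ≠ 0) (hP : P.eval₂ f y = 0) :
    ∃ Q : Polynomial R, Q.eval₂ f y = 0 ∧ Q.coeff 0 ≠ 0 := by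
  obtain ⟨Q, hQ, hdvd⟩ := Polynomial.exists_eq_pow_rootMultiplicity_mul_and_not_dvd P hP0 0
  rw [map_zero, sub_zero] at hQ hdvd
  rw [hQ, Polynomial.eval₂_mul, Polynomial.eval₂_X_pow] at hP
  exact ⟨Q, (mul_eq_zero.1 hP).resolve_left (pow_ne_zero _ hy), mt Polynomial.X_dvd_iff.2 hdvd⟩

theorem exists_ne_zero_eval₂_eq_zero_of_not_algebraicIndependent [Algebra R S]
    {y : Option ι → S} (hy : ¬ AlgebraicIndependent R y) :
    ∃ P : Polynomial (MvPolynomial ι R), P ≠ 0 ∧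
      P.eval₂ (aeval fun i => y (some i) : MvPolynomial ι R →ₐ[R] S).toRingHom (y none) = 0 := by
  rw [algebraicIndependent_iff] at hy
  push Not at hy
  obtain ⟨F, hF, hF0⟩ := hy
  have hcomp : (Polynomial.eval₂RingHom
      (aeval fun i => y (some i) : MvPolynomial ι R →ₐ[R] S).toRingHom (y none)).comp
      (optionEquivLeft R ι : _ →+* _) = (aeval y : _ →ₐ[R] S).toRingHom := by
    refine ringHom_ext (fun r => by simp) ?_
    rintro (_ | i) <;> simp
  exact ⟨optionEquivLeft R ι F, (map_ne_zero_iff _ (optionEquivLeft R ι).injective).2 hF0,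
    (RingHom.congr_fun hcomp F).trans hF⟩

end AlgebraicRelation

section VanishingForm

open MvPolynomial

variable {k ι σ : Type*} [Field k] [Finite ι] [Finite σ]

theorem not_algebraicIndependent_polynomial (hcard : Nat.card σ < Nat.card ι)
    (y : Option ι → Polynomial (MvPolynomial σ k)) : ¬ AlgebraicIndependent k y := by
  intro hy
  have hle := (hy.map' (f := (optionEquivLeft k σ).symm.toAlgHom)
    (optionEquivLeft k σ).symm.injective).lift_cardinalMk_le_trdeg
  rw [trdeg_of_isDomain, ← Nat.cast_card, ← Nat.cast_card, Finite.card_option,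
    Finite.card_option] at hle
  simp only [Cardinal.lift_natCast, Nat.cast_le] at hle
  omega

/-- The elements `b i * T` and `f` of `k[x][T]` are algebraically dependent. Dividing a relation by
the largest possible power of `f` and comparing coefficients of `T ^ s` yields the form `F`. -/
theorem exists_isHomogeneous_aeval_mem_span_singleton_mul_pow (hcard : Nat.card σ < Nat.card ι)
    (b : ι → MvPolynomial σ k) {f : MvPolynomial σ k} (hf : f ≠ 0) :
    ∃ (F : MvPolynomial ι k) (s : ℕ), F ≠ 0 ∧ F.IsHomogeneous s ∧
      aeval b F ∈ Ideal.span {f} * Ideal.span (Set.range b) ^ s := by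
  let Θ : MvPolynomial ι k →ₐ[k] Polynomial (MvPolynomial σ k) :=
    aeval fun i => Polynomial.C (b i) * Polynomial.X
  obtain ⟨P, hP0, hP⟩ := exists_ne_zero_eval₂_eq_zero_of_not_algebraicIndependent
    (not_algebraicIndependent_polynomial hcard fun o =>
      o.elim (Polynomial.C f) fun i => Polynomial.C (b i) * Polynomial.X)
  obtain ⟨Q, hQ, hQ0⟩ :=
    exists_eval₂_eq_zero_and_coeff_zero_ne_zero (Polynomial.C_ne_zero.2 hf) hP0 hP
  obtain ⟨s, hs⟩ : ∃ s, homogeneousComponent s (Q.coeff 0) ≠ 0 := by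
    by_contra! hzero
    exact hQ0 ((sum_homogeneousComponent (Q.coeff 0)).symm.trans
      (Finset.sum_eq_zero fun i _ => hzero i))
  have hrees : Q.divX.eval₂ Θ.toRingHom (Polynomial.C f) ∈
      reesAlgebra (Ideal.span (Set.range b)) := by
    rw [Polynomial.eval₂_eq_sum_range]
    exact sum_mem fun n _ => mul_mem
      (aeval_C_mul_X_mem_reesAlgebra (fun i => Ideal.subset_span (Set.mem_range_self i)) _)
      (pow_mem (Subalgebra.algebraMap_mem _ f) n)
  have hrel : Q.divX.eval₂ Θ.toRingHom (Polynomial.C f) * Polynomial.C f + Θ (Q.coeff 0) = 0 := by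
    rw [← Polynomial.divX_mul_X_add Q, Polynomial.eval₂_add, Polynomial.eval₂_mul,
      Polynomial.eval₂_X, Polynomial.eval₂_C] at hQ
    exact hQ
  have hcoeff := congrArg (fun q => Polynomial.coeff q s) hrel
  simp only [Polynomial.coeff_add, Polynomial.coeff_mul_C, Polynomial.coeff_zero] at hcoeff
  rw [coeff_aeval_C_mul_X, ← eq_neg_iff_add_eq_zero, eq_comm, neg_eq_iff_eq_neg] at hcoeff
  refine ⟨_, s, hs, homogeneousComponent_isHomogeneous s _, ?_⟩
  rw [hcoeff, ← neg_mul, mul_comm _ f]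
  exact Ideal.mul_mem_mul (Ideal.mem_span_singleton_self f)
    (neg_mem ((mem_reesAlgebra_iff _ _).1 hrees s))

end VanishingForm

section PolynomialPresentation

open MvPolynomial

namespace IsLinearPresentation

variable {k ι σ κ : Type*} [Field k] [Fintype ι] [Fintype σ] {A : Type u} [CommRing A]
  [IsLocalRing A] [Algebra k A] {C : κ → ι → σ → k}

theorem linearIndependent {a : ι → A} {x : σ → A} (h : IsLinearPresentation a x C) :
    LinearIndependent k a := by
  refine Fintype.linearIndependent_iff.2 fun c hc i => ?_
  have hker : algebraMap k A ∘ c ∈ LinearMap.ker (Fintype.linearCombination A a) := by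
    rw [LinearMap.mem_ker, linearCombination_algebraMap_comp, Fintype.linearCombination_apply, hc]
  exact algebraMap_mem_maximalIdeal_iff.1 (mem_smul_top_pi_iff.1 (h.ker_le hker) i)

variable {ψ : MvPolynomial σ k →ₐ[k] A} {b : ι → MvPolynomial σ k}
  (h : IsLinearPresentation (ψ ∘ b) (ψ ∘ X) C) (hψ : Function.Injective ψ)

include h

theorem core_eq_of_polynomial [IsNoetherianRing A] [Infinite k] {N : ℕ}
    (hN : HasRigidReductions (Ideal.span (Set.range (ψ ∘ b))) N) (hσ : Fintype.card σ = N + 1)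
    (hι : Fintype.card ι = N + 2) :
    core (Ideal.span (Set.range (ψ ∘ b))) =
      maximalIdeal A * Ideal.span (Set.range (ψ ∘ b)) := by
  obtain ⟨t⟩ : Nonempty σ := Fintype.card_pos_iff.1 (by omega)
  obtain ⟨F, s, hF0, hF, hFb⟩ := exists_isHomogeneous_aeval_mem_span_singleton_mul_pow
    (by simp only [Nat.card_eq_fintype_card]; omega) b (X_ne_zero (R := k) t)
  refine h.core_eq hN hσ hι hF0 hF ?_
  have hmem := Ideal.mem_map_of_mem ψ hFb
  rw [Ideal.map_mul, Ideal.map_pow, Ideal.map_span, Ideal.map_span, Set.image_singleton,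
    ← Set.range_comp, comp_aeval_apply] at hmem
  refine Ideal.mul_mono_left ?_ hmem
  rw [← h.span_eq_maximalIdeal]
  exact Ideal.span_mono (Set.singleton_subset_iff.2 ⟨t, rfl⟩)

include hψ

/-- The relations between the `b i` make all forms `∑ i, eval x₀ (b i) • C j i` vanish at `x₀`. -/
theorem coeffSpan_eval_ne_top {x₀ : σ → k} (hx₀ : x₀ ≠ 0) :
    coeffSpan C (fun i => eval x₀ (b i)) ≠ ⊤ := by
  intro htop
  have hrel (j : κ) : ∑ i, (Fintype.linearCombination k X (C j i)) * b i = 0 := by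
    have hker : (fun i => Fintype.linearCombination k (ψ ∘ X) (C j i)) ∈
        LinearMap.ker (Fintype.linearCombination A (ψ ∘ b)) :=
      h.ker_eq ▸ Submodule.subset_span ⟨j, rfl⟩
    refine hψ ?_
    simpa [Fintype.linearCombination_apply] using hker
  have hle : (⊤ : Submodule k (σ → k)) ≤ LinearMap.ker (dotProductBilin k k x₀) := by
    rw [← htop, coeffSpan, Submodule.span_le]
    rintro _ ⟨j, rfl⟩
    have heval := congrArg (eval x₀) (hrel j)
    simp only [Fintype.linearCombination_apply, map_sum, map_mul, smul_eval, eval_X,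
      map_zero] at heval
    rw [SetLike.mem_coe, LinearMap.mem_ker, map_sum, ← heval]
    refine Finset.sum_congr rfl fun i _ => ?_
    rw [map_smul, smul_eq_mul, mul_comm, dotProductBilin_apply_apply, dotProduct_comm]
    rfl
  exact hx₀ (dotProduct_eq_zero x₀ fun w => hle (Submodule.mem_top (x := w)))

theorem exists_dotProduct_ne_zero_and_coeffSpan_ne_top [Infinite k] [Nonempty σ] {c : ι → k}
    (hc : c ≠ 0) : ∃ l : ι → k, l ⬝ᵥ c ≠ 0 ∧ coeffSpan C l ≠ ⊤ := by
  have hli : LinearIndependent k b := .of_comp ψ.toLinearMap h.linearIndependent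
  have hsum : ∑ i, c i • b i ≠ 0 := fun hsum =>
    hc (funext (Fintype.linearIndependent_iff.1 hli c hsum))
  obtain ⟨t⟩ := ‹Nonempty σ›
  obtain ⟨x₀, hx₀⟩ : ∃ x₀, eval x₀ (X t * ∑ i, c i • b i) ≠ 0 := by
    by_contra! hzero
    exact mul_ne_zero (X_ne_zero t) hsum (MvPolynomial.funext fun x₀ => by rw [hzero, map_zero])
  rw [map_mul, eval_X] at hx₀
  refine ⟨fun i => eval x₀ (b i), ?_, h.coeffSpan_eval_ne_top hψ fun hzero =>
    left_ne_zero_of_mul hx₀ (congrFun hzero t)⟩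
  simpa [dotProduct, mul_comm] using right_ne_zero_of_mul hx₀

theorem isIntClosedIdeal_core [IsNoetherianRing A] [Infinite k] {N : ℕ}
    (hN : HasRigidReductions (Ideal.span (Set.range (ψ ∘ b))) N) (hσ : Fintype.card σ = N + 1)
    (hι : Fintype.card ι = N + 2) (hI : IsIntClosedIdeal (Ideal.span (Set.range (ψ ∘ b)))) :
    IsIntClosedIdeal (core (Ideal.span (Set.range (ψ ∘ b)))) := by
  have : Nonempty σ := Fintype.card_pos_iff.1 (by omega)
  rw [h.core_eq_of_polynomial hN hσ hι]
  exact h.isIntClosedIdeal_maximalIdeal_mul hN hσ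
    (fun _ hc => h.exists_dotProduct_ne_zero_and_coeffSpan_ne_top hψ hc) hI

end IsLinearPresentation

end PolynomialPresentation

section RigidReductions

variable {A : Type u} [CommRing A] [IsRegularRing A] [IsLocalRing A] [IsDomain A] {I : Ideal A}
  {N g : ℕ}

theorem hasRigidReductions_of_le_qDepth (k : Type v) [Field k] [Infinite k] [Algebra k A]
    (hd : (maximalIdeal A).height = (N + 1 : ℕ)) (hI : I ≠ ⊥) (hht : ht I = g)
    (hG : Gcond I (N + 1)) (hdepth : ∀ j : ℕ, 1 ≤ j → j ≤ N + 1 - g →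
      rDim (A ⧸ I) + 1 ≤ (qDepth A (I ^ j) : WithBot ℕ∞) + (j : WithBot ℕ∞)) :
    HasRigidReductions I N := by
  have hheight := le_height_of_ht_eq hht
  have hg : 1 ≤ g := by
    obtain ⟨p, _, hIp, hpg⟩ := exists_height_eq_of_ht_eq hht
    by_contra! hg0
    rw [Nat.lt_one_iff.1 hg0, Nat.cast_zero, Ideal.height_eq_zero_iff_eq_bot] at hpg
    exact hI (le_bot_iff.1 (hpg ▸ hIp))
  have hpow (j : ℕ) (hj : j ≤ N) : ProjDimLT A ↥(I ^ (j + 1 - g)) (max j 1) :=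
    projDimLT_pow_of_le_qDepth hd hht hdepth (by omega)
  exact ⟨fun _ => not_colon_le_of_height_le k hg hheight hpow hG,
    fun _ => not_generatedAt_maximalIdeal k hg hheight hpow hG⟩

end RigidReductions

section PolynomialRing

open MvPolynomial

variable {k : Type u} [Field k]

theorem height_eq_of_isMaximal_mvPolynomial {d : ℕ} (P : Ideal (MvPolynomial (Fin d) k))
    [P.IsMaximal] : P.height = d := by
  induction d with
  | zero =>
    have hdim : ringKrullDim (MvPolynomial (Fin 0) k) = 0 := by
      rw [ringKrullDim_of_isNoetherianRing]
      simp
    have hle := Ideal.height_le_ringKrullDim_of_ne_top (Ideal.IsMaximal.ne_top ‹P.IsMaximal›)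
    rw [hdim] at hle
    exact le_antisymm (by exact_mod_cast hle) bot_le
  | succ d ih =>
    let e := (finSuccEquiv k d).symm.toRingEquiv
    have hP : (P.comap e).IsMaximal := Ideal.comap_isMaximal_of_equiv e
    let p := (P.comap e).comap Polynomial.C
    have hp : p.IsMaximal := Polynomial.isMaximal_comap_C_of_isJacobsonRing (P.comap e)
    have : (P.comap e).LiesOver p := ⟨rfl⟩
    rw [← e.height_comap, Polynomial.height_eq_height_add_one p, ih, Nat.cast_add, Nat.cast_one]

theorem isMaximal_idealOfVars (σ : Type*) : (idealOfVars σ k).IsMaximal := by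
  have hker : idealOfVars σ k = RingHom.ker constantCoeff := by
    ext p
    rw [← pow_one (idealOfVars σ k), mem_pow_idealOfVars_iff', RingHom.mem_ker, constantCoeff_eq]
    simp [Finsupp.degree_eq_zero_iff]
  rw [hker]
  exact RingHom.ker_isMaximal_of_surjective _ fun r => ⟨C r, constantCoeff_C σ r⟩

theorem exists_sub_C_mem_idealOfVars {σ : Type*} (p : MvPolynomial σ k) :
    ∃ r, p - C r ∈ idealOfVars σ k := by
  refine ⟨constantCoeff p, ?_⟩
  rw [← pow_one (idealOfVars σ k), mem_pow_idealOfVars_iff']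
  simp [Finsupp.degree_eq_zero_iff, constantCoeff_eq]

theorem exists_linearCombination_X_eq_of_isHomogeneous_one {R σ : Type*} [CommRing R] [Fintype σ]
    {p : MvPolynomial σ R} (hp : p.IsHomogeneous 1) :
    ∃ c : σ → R, Fintype.linearCombination R X c = p := by
  rw [← mem_homogeneousSubmodule, homogeneousSubmodule_one_eq_span_X,
    ← Fintype.range_linearCombination] at hp
  exact hp

end PolynomialRing

section Localization

open MvPolynomial

theorem isRegularRing_of_isLocalization {R : Type u} [CommRing R] [IsRegularRing R]
    (M : Submonoid R) (A : Type u) [CommRing A] [Algebra R A] [IsLocalization M A] :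
    IsRegularRing A := by
  have : IsNoetherianRing A := IsLocalization.isNoetherianRing M A inferInstance
  refine ⟨fun p _ => ?_⟩
  have := IsLocalization.isLocalization_isLocalization_atPrime_isLocalization M
    (Localization.AtPrime p) p
  exact .of_ringEquiv (IsLocalization.algEquiv (p.comap (algebraMap R A)).primeCompl
    (Localization.AtPrime (p.comap (algebraMap R A))) (Localization.AtPrime p)).toRingEquiv

theorem exists_linearCombination_algebraMap_eq_smul {R A ι : Type*} [CommRing R] (M : Submonoid R)
    [CommRing A] [Algebra R A] [IsLocalization M A] [Fintype ι] (π : (ι → A) →ₗ[A] A) :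
    ∃ (u : Aˣ) (b : ι → R), Fintype.linearCombination A (algebraMap R A ∘ b) = u • π := by
  classical
  obtain ⟨s, hs⟩ := IsLocalization.exist_integer_multiples_of_finite M
    fun i : ι => π (Pi.single i 1)
  choose b hb using hs
  obtain ⟨u, hu⟩ := IsLocalization.map_units A s
  refine ⟨u, b, LinearMap.pi_ext' fun i => LinearMap.ext_ring ?_⟩
  simp [hb, Units.smul_def, hu, Algebra.smul_def]

theorem exists_sub_algebraMap_mem_maximalIdeal {k R : Type*} [CommRing k] [CommRing R]
    [Algebra k R] (P : Ideal R) [P.IsMaximal] (hP : ∀ p : R, ∃ r : k, p - algebraMap k R r ∈ P)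
    {A : Type*} [CommRing A] [IsLocalRing A] [Algebra k A] [Algebra R A] [IsScalarTower k R A]
    [IsLocalization.AtPrime A P] (y : A) : ∃ r : k, y - algebraMap k A r ∈ maximalIdeal A := by
  let e := IsLocalization.AtPrime.equivQuotMaximalIdeal P A
  obtain ⟨p, hp⟩ := Ideal.Quotient.mk_surjective (e.symm (Ideal.Quotient.mk _ y))
  obtain ⟨r, hr⟩ := hP p
  refine ⟨r, Ideal.Quotient.eq.1 ?_⟩
  rw [← e.apply_symm_apply (Ideal.Quotient.mk _ y), ← hp, Ideal.Quotient.eq.2 hr,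
    IsLocalization.AtPrime.equivQuotMaximalIdeal_apply_mk, ← IsScalarTower.algebraMap_apply]

theorem Presents.exists_isLinearPresentation {k σ A : Type*} [Field k] [Fintype σ] [CommRing A]
    [IsLocalRing A] [Algebra k A] [Algebra (MvPolynomial σ k) A]
    [IsScalarTower k (MvPolynomial σ k) A] [(idealOfVars σ k).IsPrime]
    [IsLocalization.AtPrime A (idealOfVars σ k)] {n m : ℕ} {φ : Matrix (Fin n) (Fin m) A}
    {I : Ideal A} (hφ : Presents φ I) (hlin : ∀ i j, ∃ p : MvPolynomial σ k,
      p.IsHomogeneous 1 ∧ φ i j = algebraMap (MvPolynomial σ k) A p) :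
    ∃ (b : Fin n → MvPolynomial σ k) (C : Fin m → Fin n → σ → k),
      IsLinearPresentation (IsScalarTower.toAlgHom k (MvPolynomial σ k) A ∘ b)
        (IsScalarTower.toAlgHom k (MvPolynomial σ k) A ∘ X) C ∧
      I = Ideal.span (Set.range (IsScalarTower.toAlgHom k (MvPolynomial σ k) A ∘ b)) := by
  have := isMaximal_idealOfVars (k := k) σ
  let ψ := IsScalarTower.toAlgHom k (MvPolynomial σ k) A
  obtain ⟨-, π, hrange, hker⟩ := hφ
  choose p hp hpφ using hlin
  choose C hC using fun i j => exists_linearCombination_X_eq_of_isHomogeneous_one (hp i j)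
  obtain ⟨u, b, hb : Fintype.linearCombination A (ψ ∘ b) = u • π⟩ :=
    exists_linearCombination_algebraMap_eq_smul (idealOfVars σ k).primeCompl π
  have hspan : Ideal.span (Set.range (ψ ∘ X)) = maximalIdeal A := by
    rw [← IsLocalization.AtPrime.map_eq_maximalIdeal (idealOfVars σ k) A, Ideal.map_span,
      ← Set.range_comp]
    rfl
  have hcol (j : Fin m) :
      φ.col j = fun i => Fintype.linearCombination k (ψ ∘ X) (C i j) := funext fun i => by
    rw [Matrix.col_apply, hpφ, ← hC, ← IsScalarTower.toAlgHom_apply k]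
    simp [Fintype.linearCombination_apply, ψ]
  refine ⟨b, fun j i => C i j, ⟨exists_sub_algebraMap_mem_maximalIdeal (idealOfVars σ k)
    exists_sub_C_mem_idealOfVars, hspan, ?_⟩, ?_⟩
  · have hu : LinearMap.ker (u • π) = LinearMap.ker π := by
      ext w
      simp [smul_eq_zero_iff_eq]
    rw [hb, hu, ← hker, Matrix.range_toLin']
    simp only [funext hcol, ψ]
  · have hu : u • π = π ∘ₗ (LinearEquiv.smulOfUnit u).toLinearMap := by
      ext
      simp [LinearEquiv.smulOfUnit]
    rw [← hrange, Ideal.span, ← Fintype.range_linearCombination, hb, hu, LinearEquiv.range_comp]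

end Localization

/-- Example 3.9: for an ideal of the localized polynomial ring presented by a matrix
of linear forms, with `μ(I) = d + 1`, `G_d` and the depth conditions,
`core I = 𝔪·I`, and if `I` is integrally closed then so is `core I`. -/
theorem statement14 {k : Type u} [Field k] [Infinite k] (d : ℕ) (hd : 1 ≤ d)
    (hP : (Ideal.span
      (Set.range (MvPolynomial.X (R := k) (σ := Fin d)))).IsPrime) :
    letI := hP
    ∀ (I : Ideal (Localization.AtPrime
        (Ideal.span (Set.range (MvPolynomial.X (R := k) (σ := Fin d)))))) (g : ℕ),
      ht I = (g : WithBot ℕ∞) →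
      muE I = ((d + 1 : ℕ) : ℕ∞) →
      Gcond I d →
      (∀ j : ℕ, 1 ≤ j → j ≤ d - g →
        rDim ((Localization.AtPrime
            (Ideal.span (Set.range (MvPolynomial.X (R := k) (σ := Fin d))))) ⧸ I) + 1 ≤
          (qDepth (Localization.AtPrime
              (Ideal.span (Set.range (MvPolynomial.X (R := k) (σ := Fin d)))))
            (I ^ j) : WithBot ℕ∞) + (j : WithBot ℕ∞)) →
      (∃ (m : ℕ) (φ : Matrix (Fin (d + 1)) (Fin m) (Localization.AtPrime
          (Ideal.span (Set.range (MvPolynomial.X (R := k) (σ := Fin d)))))),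
        Presents φ I ∧ ∀ i j, ∃ p : MvPolynomial (Fin d) k, p.IsHomogeneous 1 ∧
          φ i j = algebraMap (MvPolynomial (Fin d) k)
            (Localization.AtPrime
              (Ideal.span (Set.range (MvPolynomial.X (R := k) (σ := Fin d))))) p) →
      core I = maximalIdeal (Localization.AtPrime
          (Ideal.span (Set.range (MvPolynomial.X (R := k) (σ := Fin d))))) * I ∧
        (IsIntClosedIdeal I → IsIntClosedIdeal (core I)) := by
  intro I g hht hmu hG hdepth ⟨m, φ, hφ, hlin⟩
  obtain ⟨N, rfl⟩ : ∃ N, d = N + 1 := ⟨d - 1, by omega⟩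
  let P := MvPolynomial.idealOfVars (Fin (N + 1)) k
  let A := Localization.AtPrime P
  have hmax : P.IsMaximal := isMaximal_idealOfVars _
  have : IsDomain A := IsLocalization.isDomain_localization P.primeCompl_le_nonZeroDivisors
  have : IsRegularRing A := isRegularRing_of_isLocalization P.primeCompl A
  have hheight : (maximalIdeal A).height = (N + 1 : ℕ) := by
    rw [← IsLocalization.height_under P.primeCompl, IsLocalization.AtPrime.under_maximalIdeal A P]
    exact height_eq_of_isMaximal_mvPolynomial P
  have hI : I ≠ ⊥ := ne_bot_of_muE_ne_zero (by simp [hmu])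
  obtain ⟨b, C, h, rfl⟩ := hφ.exists_isLinearPresentation hlin
  have hrigid := hasRigidReductions_of_le_qDepth k hheight hI hht hG hdepth
  have hinj : Function.Injective (IsScalarTower.toAlgHom k (MvPolynomial (Fin (N + 1)) k) A) :=
    IsLocalization.injective A P.primeCompl_le_nonZeroDivisors
  exact ⟨h.core_eq_of_polynomial hrigid (Fintype.card_fin _) (Fintype.card_fin _),
    h.isIntClosedIdeal_core hinj hrigid (Fintype.card_fin _) (Fintype.card_fin _)⟩

end CPU
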